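/- arXiv:1910.11225 — 2 statements merged into one kernel-verified Lean document; each statement's English description precedes it below -/
import Mathlib

section
/- Suppose d = d(n) := p(n)·n satisfies (log n)^3 ≪ d ≪ n. Let i = i(n) ∈ ℕ be the largest integer such that d^i ≤ 3·log n·n (equivalently, c := d^i/n ≤ 3·log n with i maximal), and suppose c = c(n) := d^i/n → A for some real constant A > 0. Then asymptotically almost surely, for G ∈ G(n,p): ζ(G) ≤ (1 + o(1))·(log d + 2·log log n)·e^A/(1 − e^{−A}). -/
open Filter SimpleGraph Set
open scoped Topology

noncomputable section

/-- The probability, under the Erdős–Rényi binomial random graph `G(n,p)`, of a set `A`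
of graphs on vertex set `Fin n`: each pair of distinct vertices is an edge
independently with probability `p`. -/
noncomputable def gnpProb (n : ℕ) (p : ℝ) (A : Set (SimpleGraph (Fin n))) : ℝ := by
  classical
  exact ∑ G ∈ Finset.univ.filter (fun G : SimpleGraph (Fin n) => G ∈ A),
      p ^ (Nat.card G.edgeSet) * (1 - p) ^ (n.choose 2 - Nat.card G.edgeSet)

/-- A sequence of graph events `A n ⊆ G(n, p n)` holds asymptotically almost surely. -/
def AAS (p : ℕ → ℝ) (A : (n : ℕ) → Set (SimpleGraph (Fin n))) : Prop :=
  Tendsto (fun n : ℕ => gnpProb n (p n) (A n)) atTop (nhds 1)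

/-- The set of vertices at graph distance exactly `j` from `v`. -/
def gSphere {V : Type*} (G : SimpleGraph V) (v : V) (j : ℕ) : Set V :=
  {u | G.edist v u = j}

/-- The set of vertices at graph distance at most `j` from some vertex of `A`. -/
def gBall {V : Type*} (G : SimpleGraph V) (A : Set V) (j : ℕ) : Set V :=
  {u | ∃ v ∈ A, G.edist v u ≤ j}

/-- The result of probing with sensor set `S` while the robber is at `v`: the cops
learn the sensor set together with the distance from each sensor to the robber. -/
noncomputable def probe {V : Type*} (G : SimpleGraph V) (S : Finset V) (v : V) :
    Finset V × (V → ℕ) := by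
  classical
  exact (S, fun s => if s ∈ S then G.dist s v else 0)

/-- A cop strategy: given the list of past probe results, choose the next sensor set. -/
def CopStrategy (V : Type*) : Type _ := List (Finset V × (V → ℕ)) → Finset V

/-- A robber trajectory: at each step the robber either stays or moves along an edge. -/
def IsRobberWalk {V : Type*} (G : SimpleGraph V) (w : ℕ → V) : Prop :=
  ∀ t, w (t + 1) = w t ∨ G.Adj (w t) (w (t + 1))

/-- The history of probe results produced in the first `t` rounds when the cops play
strategy `σ` against the robber walk `w` (round `t+1` probes position `w t`). -/
noncomputable def gameHistory {V : Type*} (G : SimpleGraph V) (σ : CopStrategy V)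
    (w : ℕ → V) : ℕ → List (Finset V × (V → ℕ))
  | 0 => []
  | t + 1 => gameHistory G σ w t ++ [probe G (σ (gameHistory G σ w t)) (w t)]

/-- The cops win the localization game on `G` with `k` sensors: there is a strategy,
probing exactly `k` vertices each round, such that for every robber walk there is a
round in which every robber walk producing the same probe results is at the same
vertex, i.e. the cops can locate the robber. -/
def CopsWin {V : Type*} (G : SimpleGraph V) (k : ℕ) : Prop :=
  ∃ σ : CopStrategy V, (∀ h, (σ h).card = k) ∧
    ∀ w : ℕ → V, IsRobberWalk G w → ∃ t : ℕ,
      ∀ w' : ℕ → V, IsRobberWalk G w' →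
        gameHistory G σ w' (t + 1) = gameHistory G σ w (t + 1) → w' t = w t

/-- The localization number `ζ(G)`: the least number of sensors with which the cops
can win the localization game on `G`. -/
noncomputable def localizationNumber {V : Type*} (G : SimpleGraph V) : ℕ :=
  sInf {k | CopsWin G k}

end

/-!
Fix the sensors of one round at random. In `G(n, p)` the sphere of radius `i` around a vertex has
about `d ^ i` vertices as long as this is well below `n`, and the balls of radius `i - 1` around two
distinct vertices `u` and `v` are almost disjoint. A vertex has distance `i` from `u` and more than
`i` from `v` if it has a neighbour in the first ball and none in the second, up to the few vertices
of the balls themselves; there are about `(1 - e ^ (-A)) * e ^ (-A) * n` of these. Hence a random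
sensor fails to distinguish `u` from `v` with probability at most `1 - 2 * L`, where `L` tends to
`(1 - e ^ (-A)) * e ^ (-A)`. Between two rounds each candidate position spreads to at most about `d`
others, so that a set of somewhat more than `log d / L` sensors can be chosen which strictly reduces
the number of candidates in every round.
-/

namespace LocalizationGame

section IndependentEvents

open MeasureTheory ProbabilityTheory

variable {Ω ι κ : Type*} {mΩ : MeasurableSpace Ω} {μ : Measure Ω}

theorem iIndepSet_of_disjoint_blocks {m : ι → MeasurableSpace Ω} (hm : ∀ i, m i ≤ mΩ)
    (hind : iIndep m μ) {B : κ → Set ι} (hB : Pairwise (Function.onFun Disjoint B))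
    {E : κ → Set Ω} (hE : ∀ k, MeasurableSet[⨆ i ∈ B k, m i] (E k)) : iIndepSet E μ := by
  classical
  have hle (s : Set ι) : ⨆ i ∈ s, m i ≤ mΩ := iSup₂_le fun i _ ↦ hm i
  have := hind.isProbabilityMeasure
  refine (iIndepSet_iff_meas_biInter fun k ↦ hle _ _ (hE k)).2 fun s ↦ ?_
  induction s using Finset.induction_on with
  | empty => simp
  | insert a s ha ih =>
    have hrest : MeasurableSet[⨆ i ∈ ⋃ k ∈ s, B k, m i] (⋂ k ∈ s, E k) :=
      .biInter s.countable_toSet fun k hk ↦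
        (biSup_mono fun _ hi ↦ mem_biUnion hk hi : _ ≤ ⨆ i ∈ ⋃ k ∈ s, B k, m i) _ (hE k)
    have hdisj : Disjoint (B a) (⋃ k ∈ s, B k) :=
      disjoint_iUnion₂_right.2 fun k hk ↦ hB (ne_of_mem_of_not_mem hk ha).symm
    rw [Finset.set_biInter_insert, Finset.prod_insert ha, ← ih]
    exact (Indep_iff _ _ μ).1 (indep_iSup_of_disjoint hm hind hdisj) _ _ (hE a) hrest

variable {E : κ → Set Ω}

theorem mgf_sum_indicator_le [Fintype κ] (hE : ∀ k, MeasurableSet (E k)) (hind : iIndepSet E μ)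
    (t : ℝ) :
    mgf (fun ω ↦ ∑ k, (E k).indicator 1 ω) μ t ≤
      Real.exp ((Real.exp t - 1) * ∑ k, μ.real (E k)) := by
  have := hind.isProbabilityMeasure
  have hexp (k : κ) (ω : Ω) : Real.exp (t * (E k).indicator 1 ω) =
      1 + (Real.exp t - 1) * (E k).indicator 1 ω := by
    by_cases hω : ω ∈ E k <;> simp [hω]
  have hmgf (k : κ) : mgf ((E k).indicator 1) μ t = 1 + (Real.exp t - 1) * μ.real (E k) := by
    have hint : Integrable ((E k).indicator (1 : Ω → ℝ)) μ :=
      (integrable_const (1 : ℝ)).indicator (hE k)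
    simp only [mgf, hexp]
    rw [integral_add (integrable_const _) (hint.const_mul _), integral_const_mul,
      integral_indicator_one (hE k)]
    simp
  calc mgf (fun ω ↦ ∑ k, (E k).indicator 1 ω) μ t
      = ∏ k, mgf ((E k).indicator 1) μ t := by
        have := (hind.iIndepFun_indicator (β := ℝ)).mgf_sum (t := t)
          (fun k ↦ measurable_one.indicator (hE k)) Finset.univ
        rwa [Finset.sum_fn] at this
    _ ≤ ∏ k, Real.exp ((Real.exp t - 1) * μ.real (E k)) := by
        refine Finset.prod_le_prod (fun k _ ↦ mgf_nonneg) fun k _ ↦ ?_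
        rw [hmgf, add_comm]
        exact Real.add_one_le_exp _
    _ = Real.exp ((Real.exp t - 1) * ∑ k, μ.real (E k)) := by
        rw [← Real.exp_sum, Finset.mul_sum]

theorem integrable_exp_mul_sum_indicator [Fintype κ] [IsFiniteMeasure μ]
    (hE : ∀ k, MeasurableSet (E k)) (t : ℝ) :
    Integrable (fun ω ↦ Real.exp (t * ∑ k, (E k).indicator 1 ω)) μ := by
  have hX : Measurable fun ω ↦ ∑ k, (E k).indicator (1 : Ω → ℝ) ω :=
    Finset.measurable_sum _ fun k _ ↦ measurable_one.indicator (hE k)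
  have hbound (ω : Ω) : ∑ k, (E k).indicator (1 : Ω → ℝ) ω ∈ Icc 0 (Fintype.card κ : ℝ) := by
    refine ⟨Finset.sum_nonneg fun k _ ↦ indicator_nonneg (fun _ _ ↦ zero_le_one) ω, ?_⟩
    simpa using Finset.sum_le_card_nsmul Finset.univ (fun k ↦ (E k).indicator (1 : Ω → ℝ) ω) 1
      fun k _ ↦ indicator_le_self' (fun _ _ ↦ zero_le_one) ω
  exact integrable_exp_mul_of_mem_Icc hX.aemeasurable (.of_forall hbound)

theorem measureReal_sum_indicator_le_le_exp [Fintype κ] (hE : ∀ k, MeasurableSet (E k))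
    (hind : iIndepSet E μ) {η : ℝ} (hη : 0 ≤ η) :
    μ.real {ω | ∑ k, (E k).indicator 1 ω ≤ (1 - η) * ∑ k, μ.real (E k)} ≤
      Real.exp (-(η ^ 2 * (∑ k, μ.real (E k)) / 2)) := by
  have := hind.isProbabilityMeasure
  have hm : 0 ≤ ∑ k, μ.real (E k) := Finset.sum_nonneg fun k _ ↦ measureReal_nonneg
  refine (measure_le_le_exp_mul_mgf _ (neg_nonpos.2 hη)
    (integrable_exp_mul_sum_indicator hE _)).trans ?_
  have hquad : Real.exp (-η) ≤ 1 - η + η ^ 2 / 2 := by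
    rw [Real.exp_neg, inv_le_iff_one_le_mul₀ (Real.exp_pos η)]
    nlinarith [Real.quadratic_le_exp_of_nonneg hη, sq_nonneg (1 - η), sq_nonneg (η ^ 2)]
  refine (mul_le_mul_of_nonneg_left (mgf_sum_indicator_le hE hind _) (Real.exp_nonneg _)).trans ?_
  rw [← Real.exp_add, Real.exp_le_exp]
  nlinarith

theorem measureReal_le_sum_indicator_le_exp [Fintype κ] (hE : ∀ k, MeasurableSet (E k))
    (hind : iIndepSet E μ) {η m : ℝ} (hη : 0 ≤ η) (hη1 : η ≤ 1) (hm : ∑ k, μ.real (E k) ≤ m) :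
    μ.real {ω | (1 + 2 * η) * m ≤ ∑ k, (E k).indicator 1 ω} ≤ Real.exp (-(η ^ 2 * m)) := by
  have := hind.isProbabilityMeasure
  have hm0 : 0 ≤ m := (Finset.sum_nonneg fun k _ ↦ measureReal_nonneg).trans hm
  refine (measure_ge_le_exp_mul_mgf _ hη (integrable_exp_mul_sum_indicator hE _)).trans ?_
  have hquad : Real.exp η - 1 ≤ η + η ^ 2 := by
    have := (abs_le.1 (Real.abs_exp_sub_one_sub_id_le (abs_le.2 ⟨by linarith, hη1⟩))).2
    linarith
  refine (mul_le_mul_of_nonneg_left (mgf_sum_indicator_le hE hind _) (Real.exp_nonneg _)).trans ?_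
  rw [← Real.exp_add, Real.exp_le_exp]
  have hexp : 0 ≤ Real.exp η - 1 := by linarith [Real.add_one_le_exp η]
  nlinarith [mul_le_mul_of_nonneg_left hm hexp, mul_le_mul_of_nonneg_right hquad hm0]

end IndependentEvents

section BinomialRandomGraph

open MeasureTheory Measure ProbabilityTheory unitInterval

variable {V : Type*} {p : I}

theorem map_edgeSet_binomialRandom [Countable V] :
    G(V, p).map edgeSet = setBer(Sym2.diagSetᶜ, p) := by
  rw [binomialRandom, measurableEmbedding_edgeSet.map_comap, restrict_eq_self_of_ae_mem]
  filter_upwards [setBernoulli_ae_subset] with s hs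
  exact ⟨fromEdgeSet s, by simpa [← subset_compl_iff_disjoint_right] using hs⟩

theorem measurable_mem_edgeSet (e : Sym2 V) :
    Measurable fun G : SimpleGraph V ↦ e ∈ G.edgeSet :=
  (measurable_set_mem e).comp measurable_edgeSet

theorem map_mem_edgeSet_binomialRandom [Countable V] :
    G(V, p).map (fun G e ↦ e ∈ G.edgeSet) = infinitePi fun e : Sym2 V ↦
      toNNReal p • dirac (e ∈ Sym2.diagSetᶜ) + toNNReal (σ p) • dirac False := by
  have hmem : Measurable fun (s : Set (Sym2 V)) e ↦ e ∈ s :=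
    measurable_pi_iff.2 measurable_set_mem
  have hset : Measurable fun q : Sym2 V → Prop ↦ {e | q e} :=
    MeasurableEquiv.setOfPred.measurable
  calc G(V, p).map (fun G e ↦ e ∈ G.edgeSet)
      = (G(V, p).map edgeSet).map fun s e ↦ e ∈ s := (map_map hmem measurable_edgeSet).symm
    _ = _ := by
      rw [map_edgeSet_binomialRandom, setBernoulli_eq_map, map_map hmem hset]
      exact map_id

theorem map_mem_edgeSet_binomialRandom_apply [Countable V] (e : Sym2 V) :
    G(V, p).map (fun G ↦ e ∈ G.edgeSet) =
      toNNReal p • dirac (e ∈ Sym2.diagSetᶜ) + toNNReal (σ p) • dirac False := by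
  rw [← infinitePi_map_eval
      (fun e : Sym2 V ↦ toNNReal p • dirac (e ∈ Sym2.diagSetᶜ) + toNNReal (σ p) • dirac False) e,
    ← map_mem_edgeSet_binomialRandom,
    map_map (measurable_pi_apply e) (measurable_pi_iff.2 measurable_mem_edgeSet)]
  rfl

theorem iIndepFun_mem_edgeSet [Countable V] :
    iIndepFun (fun (e : Sym2 V) G ↦ e ∈ G.edgeSet) G(V, p) := by
  rw [iIndepFun_iff_map_fun_eq_infinitePi_map measurable_mem_edgeSet,
    map_mem_edgeSet_binomialRandom]
  simp only [map_mem_edgeSet_binomialRandom_apply]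

theorem measurableSet_adj (v w : V) : MeasurableSet {G : SimpleGraph V | G.Adj v w} :=
  measurableSet_setOfPred.2 (measurable_mem_edgeSet s(v, w))

theorem measureReal_adj [Countable V] {v w : V} (h : v ≠ w) :
    G(V, p).real {G | G.Adj v w} = p := by
  have := congrArg (·.real {True}) (map_mem_edgeSet_binomialRandom_apply (p := p) s(v, w))
  simp only [map_measureReal_apply (measurable_mem_edgeSet _) (.singleton _)] at this
  convert this using 1
  · congr 1; ext; simp
  · simp [measureReal_def, h]

theorem measureReal_forall_not_adj [Countable V] {w : V} {R : Finset V} (hw : w ∉ R) :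
    G(V, p).real {G | ∀ x ∈ R, ¬ G.Adj w x} = (1 - (p : ℝ)) ^ R.card := by
  have hinj : Function.Injective fun x : V ↦ s(w, x) := fun _ _ ↦ Sym2.congr_right.1
  have hind := (iIndepFun_mem_edgeSet (p := p)).precomp hinj
  have hprod := hind.measure_inter_preimage_eq_mul R (sets := fun _ ↦ {False})
    fun _ _ ↦ .singleton _
  have hset : {G : SimpleGraph V | ∀ x ∈ R, ¬ G.Adj w x} =
      ⋂ x ∈ R, (fun G ↦ s(w, x) ∈ G.edgeSet) ⁻¹' {False} := by
    ext; simp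
  have hcompl (x : V) (hx : x ∈ R) :
      (G(V, p) ((fun G ↦ s(w, x) ∈ G.edgeSet) ⁻¹' {False})).toReal = 1 - p := by
    rw [← measureReal_adj (p := p) (ne_of_mem_of_not_mem hx hw).symm,
      ← probReal_compl_eq_one_sub (measurableSet_adj w x), measureReal_def]
    congr 2; ext; simp
  rw [measureReal_def, hset, hprod, ENNReal.toReal_prod, Finset.prod_congr rfl hcompl,
    Finset.prod_const]

/-- The σ-algebra on graphs generated by the presence of the edges in `B`. -/
abbrev edgeAlgebra (B : Set (Sym2 V)) : MeasurableSpace (SimpleGraph V) :=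
  ⨆ e ∈ B, .comap (fun G ↦ e ∈ G.edgeSet) inferInstance

theorem measurableSet_edgeAlgebra_adj {B : Set (Sym2 V)} {v w : V} (h : s(v, w) ∈ B) :
    MeasurableSet[edgeAlgebra B] {G : SimpleGraph V | G.Adj v w} := by
  have hle : MeasurableSpace.comap (fun G ↦ s(v, w) ∈ G.edgeSet) inferInstance ≤ edgeAlgebra B :=
    le_iSup₂_of_le _ h le_rfl
  refine hle _ ⟨{True}, .singleton _, ?_⟩
  ext; simp

theorem iIndepSet_of_edgeAlgebra [Countable V] {κ : Type*} {B : κ → Set (Sym2 V)}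
    (hB : Pairwise (Function.onFun Disjoint B)) {E : κ → Set (SimpleGraph V)}
    (hE : ∀ k, MeasurableSet[edgeAlgebra (B k)] (E k)) : iIndepSet E G(V, p) :=
  iIndepSet_of_disjoint_blocks (fun e ↦ (measurable_mem_edgeSet e).comap_le)
    iIndepFun_mem_edgeSet.iIndep hB hE

instance [Finite V] : MeasurableSingletonClass (SimpleGraph V) where
  measurableSet_singleton G := by
    have : {G} = edgeSet ⁻¹' {G.edgeSet} := by ext; simp
    exact this ▸ measurable_edgeSet (.singleton _)

theorem gnpProb_eq_measureReal (n : ℕ) (p : I) (A : Set (SimpleGraph (Fin n))) :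
    gnpProb n p A = G(Fin n, p).real A := by
  classical
  rw [gnpProb, ← A.coe_toFinset, ← sum_measureReal_singleton]
  simp only [measureReal_def, binomialRandom_singleton]
  refine Finset.sum_congr (by ext; simp) fun G _ ↦ ?_
  simp [← Nat.card_coe_set_eq]

end BinomialRandomGraph

section ExclusiveNeighbors

open MeasureTheory ProbabilityTheory unitInterval
open scoped Classical

variable {V : Type*} [Fintype V] {p : I}

theorem measureReal_degree_ge_le (v : V) {η : ℝ} (hη : 0 ≤ η) (hη1 : η ≤ 1) :
    G(V, p).real {G | (1 + 2 * η) * (p * Fintype.card V) ≤ G.degree v} ≤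
      Real.exp (-(η ^ 2 * (p * Fintype.card V))) := by
  have hB : Pairwise (Function.onFun Disjoint fun w : V ↦ ({s(v, w)} : Set (Sym2 V))) :=
    fun w x hwx ↦ by
      rw [Function.onFun, disjoint_singleton, Ne, Sym2.congr_right]
      exact hwx
  have hind : iIndepSet (fun w ↦ {G : SimpleGraph V | G.Adj v w}) G(V, p) :=
    iIndepSet_of_edgeAlgebra hB fun w ↦ measurableSet_edgeAlgebra_adj rfl
  have hprob (w : V) : G(V, p).real {G | G.Adj v w} ≤ p := by
    rcases eq_or_ne v w with rfl | hvw
    · simpa using p.2.1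
    · exact (measureReal_adj hvw).le
  have hmean : ∑ w, G(V, p).real {G | G.Adj v w} ≤ p * Fintype.card V := by
    simpa [mul_comm] using Finset.sum_le_card_nsmul Finset.univ _ _ fun w _ ↦ hprob w
  refine le_of_eq_of_le ?_ (measureReal_le_sum_indicator_le_exp (measurableSet_adj v) hind
    hη hη1 hmean)
  simp [indicator_apply, degree, neighborFinset_eq_filter]

/-- The vertices outside `S ∪ T` with a neighbour in `S` but none in `T`. With `S` the
difference of two balls and `T` the second ball, they lie in the difference of the two balls of
the next larger radius. -/
noncomputable def exclusiveNeighbors (G : SimpleGraph V) (S T : Finset V) : Finset V :=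
  {w | w ∉ S ∪ T ∧ (∃ x ∈ S, G.Adj w x) ∧ ∀ x ∈ T, ¬ G.Adj w x}

theorem mem_exclusiveNeighbors {G : SimpleGraph V} {S T : Finset V} {w : V} :
    w ∈ exclusiveNeighbors G S T ↔
      w ∉ S ∪ T ∧ (∃ x ∈ S, G.Adj w x) ∧ ∀ x ∈ T, ¬ G.Adj w x := by
  rw [exclusiveNeighbors, Finset.mem_filter_univ]

/-- The mean of the size of `exclusiveNeighbors G S T` in a binomial random graph on `n` vertices,
when `S` and `T` are disjoint of sizes `s` and `t`. -/
def expectedExclusive (n : ℕ) (p : ℝ) (s t : ℕ) : ℝ :=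
  (n - s - t) * ((1 - p) ^ t * (1 - (1 - p) ^ s))

variable {S T : Finset V}

theorem measureReal_mem_exclusiveNeighbors (hST : Disjoint S T) {w : V} (hw : w ∉ S ∪ T) :
    G(V, p).real {G | w ∈ exclusiveNeighbors G S T} =
      (1 - (p : ℝ)) ^ T.card * (1 - (1 - (p : ℝ)) ^ S.card) := by
  have hdiff : {G | w ∈ exclusiveNeighbors G S T} =
      {G | ∀ x ∈ T, ¬ G.Adj w x} \ {G | ∀ x ∈ S ∪ T, ¬ G.Adj w x} := by
    ext G
    simp only [mem_exclusiveNeighbors, mem_ofPred_eq, Set.mem_sdiff, Finset.mem_union]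
    grind
  rw [hdiff, measureReal_sdiff, measureReal_forall_not_adj hw,
    measureReal_forall_not_adj (hw ∘ Finset.mem_union_right S), Finset.card_union_of_disjoint hST]
  · ring
  · exact fun G hG x hx ↦ hG x (Finset.mem_union_right S hx)
  · exact .of_discrete

theorem iIndepSet_mem_exclusiveNeighbors :
    iIndepSet (fun w ↦ {G | w ∈ exclusiveNeighbors G S T}) G(V, p) := by
  let B (w : V) : Set (Sym2 V) := {e | w ∉ S ∪ T ∧ ∃ x ∈ S ∪ T, e = s(w, x)}
  have hB : Pairwise (Function.onFun Disjoint B) := fun w x hwx ↦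
    disjoint_left.2 <| by
      rintro _ ⟨hw, y, _, rfl⟩ ⟨hx, z, hz, h⟩
      rcases Sym2.eq_iff.1 h with ⟨rfl, -⟩ | ⟨rfl, rfl⟩
      exacts [hwx rfl, hw hz]
  refine iIndepSet_of_edgeAlgebra hB fun w ↦ ?_
  by_cases hw : w ∈ S ∪ T
  · simp [mem_exclusiveNeighbors, hw, -Finset.mem_union]
  have hadj (x : V) (hx : x ∈ S ∪ T) : MeasurableSet[edgeAlgebra (B w)] {G | G.Adj w x} :=
    measurableSet_edgeAlgebra_adj ⟨hw, x, hx, rfl⟩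
  have hset : {G | w ∈ exclusiveNeighbors G S T} =
      (⋃ x ∈ S, {G | G.Adj w x}) ∩ ⋂ x ∈ T, {G | G.Adj w x}ᶜ := by
    ext; simp [mem_exclusiveNeighbors, hw, -Finset.mem_union]
  rw [hset]
  exact .inter (.biUnion S.countable_toSet fun x hx ↦ hadj x (Finset.mem_union_left T hx))
    (.biInter T.countable_toSet fun x hx ↦ (hadj x (Finset.mem_union_right S hx)).compl)

theorem sum_measureReal_mem_exclusiveNeighbors (hST : Disjoint S T) :
    ∑ w, G(V, p).real {G | w ∈ exclusiveNeighbors G S T} =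
      expectedExclusive (Fintype.card V) p S.card T.card := by
  have hzero (w : V) (hw : w ∈ S ∪ T) : G(V, p).real {G | w ∈ exclusiveNeighbors G S T} = 0 := by
    simp [mem_exclusiveNeighbors, hw, -Finset.mem_union]
  have hcard : (((S ∪ T)ᶜ.card : ℕ) : ℝ) = Fintype.card V - S.card - T.card := by
    have := (S ∪ T).card_add_card_compl
    rw [Finset.card_union_of_disjoint hST] at this
    push_cast [← this]; ring
  rw [← Finset.sum_compl_add_sum (S ∪ T), Finset.sum_eq_zero hzero, add_zero,
    Finset.sum_congr rfl fun w hw ↦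
      measureReal_mem_exclusiveNeighbors hST (Finset.mem_compl.1 hw),
    Finset.sum_const, nsmul_eq_mul, hcard, expectedExclusive]

theorem measureReal_card_exclusiveNeighbors_le_le (hST : Disjoint S T) {η : ℝ} (hη : 0 ≤ η) :
    G(V, p).real {G | (exclusiveNeighbors G S T).card ≤
        (1 - η) * expectedExclusive (Fintype.card V) p S.card T.card} ≤
      Real.exp (-(η ^ 2 * expectedExclusive (Fintype.card V) p S.card T.card / 2)) := by
  rw [← sum_measureReal_mem_exclusiveNeighbors hST]
  refine le_of_eq_of_le ?_ (measureReal_sum_indicator_le_le_exp (fun w ↦ ?_)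
    iIndepSet_mem_exclusiveNeighbors hη)
  · congr! 3 with G
    simp [indicator_apply]
  · exact .of_discrete

end ExclusiveNeighbors

section RealInequalities

theorem one_sub_pow_le_exp_neg_mul {x : ℝ} (hx : x ≤ 1) (k : ℕ) :
    (1 - x) ^ k ≤ Real.exp (-(x * k)) := by
  rw [← neg_mul, mul_comm, Real.exp_nat_mul]
  exact pow_le_pow_left₀ (sub_nonneg.2 hx) (Real.one_sub_le_exp_neg x) k

theorem exp_neg_div_one_sub_le_one_sub_pow {x : ℝ} (hx : x < 1) (k : ℕ) :
    Real.exp (-(x * k / (1 - x))) ≤ (1 - x) ^ k := by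
  have hx' : 0 < 1 - x := sub_pos.2 hx
  have hbase : Real.exp (-(x / (1 - x))) ≤ 1 - x := by
    rw [Real.exp_neg]
    refine inv_le_of_inv_le₀ hx' (le_of_eq_of_le ?_ (Real.add_one_le_exp _))
    field_simp; ring
  refine le_of_eq_of_le ?_ (pow_le_pow_left₀ (Real.exp_nonneg _) hbase k)
  rw [← Real.exp_nat_mul]; congr 1; ring

theorem one_sub_mul_le_one_sub_pow {x : ℝ} (hx : x ≤ 1) (k : ℕ) : 1 - x * k ≤ (1 - x) ^ k := by
  simpa [sub_eq_add_neg, mul_comm] using one_add_mul_le_pow (a := -x) (by linarith) k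

theorem mul_one_sub_le_one_sub_exp_neg {x : ℝ} (hx : 0 ≤ x) :
    x * (1 - x) ≤ 1 - Real.exp (-x) := by
  have : Real.exp (-x) * (1 + x) ≤ 1 := by
    calc Real.exp (-x) * (1 + x) ≤ Real.exp (-x) * Real.exp x := by
          gcongr; linarith [Real.add_one_le_exp x]
      _ = 1 := by rw [← Real.exp_add]; simp
  nlinarith [Real.exp_pos (-x), mul_nonneg hx (sq_nonneg x)]

theorem div_one_add_le_one_sub_exp_neg {x : ℝ} (hx : 0 ≤ x) :
    x / (1 + x) ≤ 1 - Real.exp (-x) := by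
  have hexp : Real.exp (-x) ≤ (1 + x)⁻¹ := by
    rw [Real.exp_neg]
    exact inv_anti₀ (by positivity) (by linarith [Real.add_one_le_exp x])
  calc x / (1 + x) = 1 - (1 + x)⁻¹ := by field_simp; ring
    _ ≤ _ := by gcongr

theorem one_add_pow_le_two_mul_one_sub_pow {x : ℝ} (hx : 0 ≤ x) (hx1 : x ≤ 1) {k : ℕ}
    (hk : 4 * (x * k) ≤ 1) : (1 + x) ^ k ≤ 2 * (1 - x) ^ k := by
  have hpow : (1 + x) ^ k * (1 - x) ^ k ≤ 1 := by
    rw [← mul_pow]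
    exact pow_le_one₀ (by nlinarith) (by nlinarith)
  have hsub : 3 / 4 ≤ (1 - x) ^ k := by linarith [one_sub_mul_le_one_sub_pow hx1 k]
  refine le_of_mul_le_mul_right (hpow.trans ?_) (by linarith : 0 < (1 - x) ^ k)
  nlinarith

variable {n s t : ℕ} {p : ℝ}

theorem one_sub_six_mul_le_expectedExclusive {y : ℝ} (hp0 : 0 ≤ p) (hp1 : p ≤ 1)
    (ht : t ≤ 2 * s) (hy : p * s ≤ y) (hy1 : 3 * y ≤ 1) (hn : 1 ≤ p * n) :
    (1 - 6 * y) * (p * n * s) ≤ expectedExclusive n p s t := by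
  have ht' : (t : ℝ) ≤ 2 * s := mod_cast ht
  have hps : 0 ≤ p * s := by positivity
  have hsize : n * (1 - 3 * y) ≤ (n : ℝ) - s - t := by nlinarith
  have hT : 1 - 2 * y ≤ (1 - p) ^ t := by
    nlinarith [one_sub_mul_le_one_sub_pow hp1 t]
  have hS : p * s * (1 - y) ≤ 1 - (1 - p) ^ s := by
    nlinarith [mul_one_sub_le_one_sub_exp_neg hps, one_sub_pow_le_exp_neg_mul hp1 s]
  calc (1 - 6 * y) * (p * n * s)
      ≤ ((1 - 3 * y) * ((1 - 2 * y) * (1 - y))) * (p * n * s) := by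
        gcongr; nlinarith [mul_nonneg (hps.trans hy) (sq_nonneg y)]
    _ = n * (1 - 3 * y) * ((1 - 2 * y) * (p * s * (1 - y))) := by ring
    _ ≤ expectedExclusive n p s t := by
        have hy' : 0 ≤ (1 - 2 * y) ∧ 0 ≤ 1 - y := ⟨by linarith, by linarith⟩
        have hsize0 : 0 ≤ n * (1 - 3 * y) := mul_nonneg n.cast_nonneg (by linarith)
        exact mul_le_mul hsize (mul_le_mul hT hS (mul_nonneg hps hy'.2) (hy'.1.trans hT))
          (mul_nonneg hy'.1 (mul_nonneg hps hy'.2)) (hsize0.trans hsize)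

theorem exp_mul_le_expectedExclusive {M : ℝ} (hp0 : 0 < p) (hp1 : p ≤ 1 / 2) (ht : t ≤ 2 * s)
    (hM : p * s ≤ M) (hn : 6 * M ≤ p * n) :
    Real.exp (-(4 * M)) / (2 * (1 + M)) * (p * n * s) ≤ expectedExclusive n p s t := by
  have ht' : (t : ℝ) ≤ 2 * s := mod_cast ht
  have hps : 0 ≤ p * s := by positivity
  have hM0 : 0 ≤ M := hps.trans hM
  have hsize : (n : ℝ) / 2 ≤ n - s - t := by
    have : p * (6 * s) ≤ p * n := by linarith
    linarith [le_of_mul_le_mul_left this hp0]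
  have hT : Real.exp (-(4 * M)) ≤ (1 - p) ^ t := by
    refine le_trans ?_ (exp_neg_div_one_sub_le_one_sub_pow (by linarith) t)
    rw [Real.exp_le_exp, neg_le_neg_iff, div_le_iff₀ (by linarith)]
    nlinarith
  have hS : p * s / (1 + M) ≤ 1 - (1 - p) ^ s := by
    calc p * s / (1 + M) ≤ p * s / (1 + p * s) := by gcongr
      _ ≤ 1 - Real.exp (-(p * s)) := div_one_add_le_one_sub_exp_neg hps
      _ ≤ 1 - (1 - p) ^ s := by gcongr; exact one_sub_pow_le_exp_neg_mul (by linarith) s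
  calc Real.exp (-(4 * M)) / (2 * (1 + M)) * (p * n * s)
      = n / 2 * (Real.exp (-(4 * M)) * (p * s / (1 + M))) := by field_simp
    _ ≤ expectedExclusive n p s t := by
        have hp' : 0 ≤ 1 - p := by linarith
        rw [expectedExclusive]
        gcongr
        linarith

theorem mul_exp_le_expectedExclusive {y a b : ℝ} (hp1 : p < 1) (ha0 : 0 ≤ a) (ha : a ≤ p * s)
    (hb : p * t ≤ b) (hs : (s : ℝ) ≤ n * y) (ht : (t : ℝ) ≤ n * y)
    (hy : 2 * y ≤ 1) :
    (1 - 2 * y) * (1 - Real.exp (-a)) * Real.exp (-(b / (1 - p))) * n ≤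
      expectedExclusive n p s t := by
  have hsize : n * (1 - 2 * y) ≤ (n : ℝ) - s - t := by linarith
  have hT : Real.exp (-(b / (1 - p))) ≤ (1 - p) ^ t := by
    refine le_trans ?_ (exp_neg_div_one_sub_le_one_sub_pow hp1 t)
    have : 0 < 1 - p := by linarith
    gcongr
  have hS : 1 - Real.exp (-a) ≤ 1 - (1 - p) ^ s := by
    gcongr
    exact (one_sub_pow_le_exp_neg_mul hp1.le s).trans (by gcongr)
  have hexp : 0 ≤ 1 - Real.exp (-a) := sub_nonneg.2 (Real.exp_le_one_iff.2 (by linarith))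
  calc (1 - 2 * y) * (1 - Real.exp (-a)) * Real.exp (-(b / (1 - p))) * n
      = n * (1 - 2 * y) * (Real.exp (-(b / (1 - p))) * (1 - Real.exp (-a))) := by ring
    _ ≤ expectedExclusive n p s t := by
        rw [expectedExclusive]
        have : 0 ≤ n * (1 - 2 * y) := mul_nonneg n.cast_nonneg (by linarith)
        gcongr
        exact this.trans hsize

end RealInequalities

section Expander

open MeasureTheory ProbabilityTheory unitInterval
open scoped Classical

variable {V : Type*} [Fintype V]

/-- The pairs of vertex sets to which expansion is applied: `T` is disjoint from `S` and at most
twice as large, and `S` has at most `M / p` vertices. -/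
structure IsAdmissiblePair (p M : ℝ) (S T : Finset V) : Prop where
  disjoint : Disjoint S T
  nonempty : S.Nonempty
  card_le : T.card ≤ 2 * S.card
  mul_card_le : p * S.card ≤ M

/-- The typical behaviour of `G(V, p)`: no degree exceeds its mean by more than a factor `1 + 2η`,
and no admissible pair has fewer than `1 - η` times the expected number of exclusive
neighbours. -/
structure IsExpander (G : SimpleGraph V) (p η M : ℝ) : Prop where
  degree_le (v : V) : G.degree v ≤ (1 + 2 * η) * (p * Fintype.card V)
  le_card_exclusiveNeighbors {S T : Finset V} (h : IsAdmissiblePair p M S T) :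
    (1 - η) * expectedExclusive (Fintype.card V) p S.card T.card ≤ (exclusiveNeighbors G S T).card

theorem exp_neg_le_inv_pow {x a : ℝ} (hx : 0 < x) {k : ℕ} (h : k * Real.log x ≤ a) :
    Real.exp (-a) ≤ x⁻¹ ^ k := by
  calc Real.exp (-a) ≤ Real.exp (-(k * Real.log x)) := by gcongr
    _ = x⁻¹ ^ k := by rw [Real.exp_neg, Real.exp_nat_mul, Real.exp_log hx, inv_pow]

theorem sum_pow_card_mul_pow_card_le (x : ℝ) (hx : 0 ≤ x) (hx1 : x ≤ 1)
    (hV : Fintype.card V * x ≤ 1) :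
    ∑ S : Finset V, ∑ T : Finset V, x ^ (4 + 2 * S.card + 2 * T.card) ≤ Real.exp 2 * x := by
  have hexp : ∑ S : Finset V, (x ^ 2) ^ S.card ≤ Real.exp 1 := by
    calc ∑ S : Finset V, (x ^ 2) ^ S.card = (x ^ 2 + 1) ^ Fintype.card V := by
          simpa using Fintype.sum_pow_mul_eq_add_pow V (x ^ 2) 1
      _ ≤ Real.exp (x ^ 2) ^ Fintype.card V := by
          gcongr; exact Real.add_one_le_exp _
      _ = Real.exp (Fintype.card V * x * x) := by rw [← Real.exp_nat_mul]; ring_nf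
      _ ≤ Real.exp 1 := by gcongr; exact mul_le_one₀ hV hx hx1
  calc ∑ S : Finset V, ∑ T : Finset V, x ^ (4 + 2 * S.card + 2 * T.card)
      = x ^ 4 * ((∑ S : Finset V, (x ^ 2) ^ S.card) * ∑ T : Finset V, (x ^ 2) ^ T.card) := by
        rw [Finset.sum_mul_sum, Finset.mul_sum]
        simp only [Finset.mul_sum, ← pow_mul, ← pow_add, add_assoc]
    _ ≤ x * (Real.exp 1 * Real.exp 1) := by
        gcongr
        exact pow_le_of_le_one hx hx1 (by norm_num)
    _ = Real.exp 2 * x := by rw [← Real.exp_add, one_add_one_eq_two, mul_comm]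

variable [Nonempty V] {p : I} {η M : ℝ}

theorem measureReal_card_exclusiveNeighbors_lt_le (hp0 : 0 < (p : ℝ)) (hp1 : (p : ℝ) ≤ 1 / 2)
    (hη : 0 ≤ η) (hM : 6 * M ≤ p * Fintype.card V)
    (hlog : 24 * Real.log (Fintype.card V) ≤
      η ^ 2 * (Real.exp (-(4 * M)) / (2 * (1 + M)) * (p * Fintype.card V)))
    {S T : Finset V} (hST : IsAdmissiblePair p M S T) :
    G(V, p).real {G | (exclusiveNeighbors G S T).card <
        (1 - η) * expectedExclusive (Fintype.card V) p S.card T.card} ≤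
      (Fintype.card V : ℝ)⁻¹ ^ (4 + 2 * S.card + 2 * T.card) := by
  have hn : 0 < (Fintype.card V : ℝ) := mod_cast Fintype.card_pos
  have : 0 ≤ Real.log (Fintype.card V) := Real.log_natCast_nonneg _
  refine (measureReal_mono (ofPred_subset_ofPred.2 fun _ ↦ le_of_lt)).trans
    ((measureReal_card_exclusiveNeighbors_le_le hST.disjoint hη).trans (exp_neg_le_inv_pow hn ?_))
  have hexpect := exp_mul_le_expectedExclusive hp0 hp1 hST.card_le hST.mul_card_le hM
  have hcard : ((4 + 2 * S.card + 2 * T.card : ℕ) : ℝ) ≤ 12 * S.card := by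
    have := hST.nonempty.card_pos
    have := hST.card_le
    exact_mod_cast (by omega : 4 + 2 * S.card + 2 * T.card ≤ 12 * S.card)
  calc ((4 + 2 * S.card + 2 * T.card : ℕ) : ℝ) * Real.log (Fintype.card V)
      ≤ 12 * S.card * Real.log (Fintype.card V) := by gcongr
    _ = 24 * Real.log (Fintype.card V) * S.card / 2 := by ring
    _ ≤ η ^ 2 * (Real.exp (-(4 * M)) / (2 * (1 + M)) * (p * Fintype.card V)) * S.card / 2 := by
        gcongr
    _ = η ^ 2 * (Real.exp (-(4 * M)) / (2 * (1 + M)) * (p * Fintype.card V * S.card)) / 2 := by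
        ring
    _ ≤ _ := by gcongr

theorem measureReal_exists_degree_gt_le (hη : 0 ≤ η) (hη1 : η ≤ 1)
    (hlog : 2 * Real.log (Fintype.card V) ≤ η ^ 2 * (p * Fintype.card V)) :
    G(V, p).real {G | ∃ v, (1 + 2 * η) * (p * Fintype.card V) < G.degree v} ≤
      1 / Fintype.card V := by
  have hn : 0 < (Fintype.card V : ℝ) := mod_cast Fintype.card_pos
  have hset : {G : SimpleGraph V | ∃ v, (1 + 2 * η) * (p * Fintype.card V) < G.degree v} ⊆
      ⋃ v, {G | (1 + 2 * η) * (p * Fintype.card V) ≤ G.degree v} :=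
    fun G ⟨v, hv⟩ ↦ mem_iUnion.2 ⟨v, hv.le⟩
  have hdegree (v : V) : G(V, p).real {G | (1 + 2 * η) * (p * Fintype.card V) ≤ G.degree v} ≤
      (Fintype.card V : ℝ)⁻¹ ^ 2 :=
    (measureReal_degree_ge_le v hη hη1).trans (exp_neg_le_inv_pow hn (mod_cast hlog))
  calc _ ≤ ∑ v, G(V, p).real {G | (1 + 2 * η) * (p * Fintype.card V) ≤ G.degree v} :=
        (measureReal_mono hset).trans (measureReal_iUnion_fintype_le _)
    _ ≤ ∑ _v : V, (Fintype.card V : ℝ)⁻¹ ^ 2 := Finset.sum_le_sum fun v _ ↦ hdegree v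
    _ = 1 / Fintype.card V := by
        rw [Finset.sum_const, nsmul_eq_mul, Finset.card_univ]; field_simp

theorem measureReal_exists_card_exclusiveNeighbors_lt_le (hp0 : 0 < (p : ℝ))
    (hp1 : (p : ℝ) ≤ 1 / 2) (hη : 0 ≤ η) (hM : 6 * M ≤ p * Fintype.card V)
    (hlog : 24 * Real.log (Fintype.card V) ≤
      η ^ 2 * (Real.exp (-(4 * M)) / (2 * (1 + M)) * (p * Fintype.card V))) :
    G(V, p).real {G | ∃ S T, IsAdmissiblePair p M S T ∧ (exclusiveNeighbors G S T).card <
        (1 - η) * expectedExclusive (Fintype.card V) p S.card T.card} ≤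
      Real.exp 2 / Fintype.card V := by
  have hn : (1 : ℝ) ≤ Fintype.card V := mod_cast Fintype.card_pos
  have hbad (S T : Finset V) : G(V, p).real {G | IsAdmissiblePair p M S T ∧
        (exclusiveNeighbors G S T).card <
          (1 - η) * expectedExclusive (Fintype.card V) p S.card T.card} ≤
      (Fintype.card V : ℝ)⁻¹ ^ (4 + 2 * S.card + 2 * T.card) := by
    by_cases hST : IsAdmissiblePair p M S T
    · simpa only [hST, true_and] using
        measureReal_card_exclusiveNeighbors_lt_le hp0 hp1 hη hM hlog hST
    · simp only [hST, false_and, ofPred_false, measureReal_empty]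
      positivity
  simp only [ofPred_exists]
  calc _ ≤ ∑ S : Finset V, ∑ T : Finset V,
        (Fintype.card V : ℝ)⁻¹ ^ (4 + 2 * S.card + 2 * T.card) := by
        refine (measureReal_iUnion_fintype_le _).trans (Finset.sum_le_sum fun S _ ↦ ?_)
        exact (measureReal_iUnion_fintype_le _).trans (Finset.sum_le_sum fun T _ ↦ hbad S T)
    _ ≤ Real.exp 2 * (Fintype.card V : ℝ)⁻¹ :=
        sum_pow_card_mul_pow_card_le _ (by positivity) (inv_le_one_of_one_le₀ hn) mul_inv_le_one
    _ = Real.exp 2 / Fintype.card V := rfl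

theorem measureReal_not_isExpander_le (hp0 : 0 < (p : ℝ)) (hp1 : (p : ℝ) ≤ 1 / 2) (hη : 0 ≤ η)
    (hη1 : η ≤ 1) (hM0 : 0 ≤ M) (hM : 6 * M ≤ p * Fintype.card V)
    (hlog : 24 * Real.log (Fintype.card V) ≤
      η ^ 2 * (Real.exp (-(4 * M)) / (2 * (1 + M)) * (p * Fintype.card V))) :
    G(V, p).real {G | ¬ IsExpander G p η M} ≤ (1 + Real.exp 2) / Fintype.card V := by
  have hκ : Real.exp (-(4 * M)) / (2 * (1 + M)) ≤ 1 := by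
    rw [div_le_one (by positivity)]
    linarith [Real.exp_le_one_iff.2 (by linarith : -(4 * M) ≤ 0)]
  have hlog' : 2 * Real.log (Fintype.card V) ≤ η ^ 2 * (p * Fintype.card V) := by
    calc 2 * Real.log (Fintype.card V) ≤ 24 * Real.log (Fintype.card V) := by
          gcongr; norm_num
      _ ≤ _ := hlog
      _ ≤ η ^ 2 * (p * Fintype.card V) :=
          mul_le_mul_of_nonneg_left (mul_le_of_le_one_left (by positivity) hκ) (by positivity)
  have hset : {G : SimpleGraph V | ¬ IsExpander G p η M} ⊆
      {G | ∃ v, (1 + 2 * η) * (p * Fintype.card V) < G.degree v} ∪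
        {G | ∃ S T, IsAdmissiblePair p M S T ∧ (exclusiveNeighbors G S T).card <
          (1 - η) * expectedExclusive (Fintype.card V) p S.card T.card} := by
    intro G hG
    by_contra! h
    simp only [mem_union, mem_ofPred_eq, not_or, not_exists, not_lt, not_and] at h
    exact hG ⟨h.1, h.2 _ _⟩
  calc G(V, p).real {G | ¬ IsExpander G p η M}
      ≤ 1 / Fintype.card V + Real.exp 2 / Fintype.card V :=
        (measureReal_mono hset).trans <| (measureReal_union_le _ _).trans <|
          add_le_add (measureReal_exists_degree_gt_le hη hη1 hlog')
            (measureReal_exists_card_exclusiveNeighbors_lt_le hp0 hp1 hη hM hlog)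
    _ = (1 + Real.exp 2) / Fintype.card V := (add_div _ _ _).symm

end Expander

section Game

open scoped Classical

variable {V : Type*} [Fintype V] {G : SimpleGraph V}

/-- The sensor positions that cannot tell `u` from `v`. -/
noncomputable def indistinguishing (G : SimpleGraph V) (u v : V) : Finset V :=
  {w | G.dist w u = G.dist w v}

/-- The ordered pairs of distinct vertices of `Y` that no sensor in `S` tells apart. -/
noncomputable def unresolvedPairs (G : SimpleGraph V) (Y S : Finset V) : Finset (V × V) :=
  {x ∈ Y.offDiag | ∀ s ∈ S, G.dist s x.1 = G.dist s x.2}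

/-- The vertices where a robber who was in `X` may be after one move. -/
noncomputable def closedNeighbors (G : SimpleGraph V) (X : Finset V) : Finset V :=
  {w | w ∈ gBall G X 1}

/-- The vertices of `Y` at which a robber would have caused the probe result `r`. -/
noncomputable def consistent (G : SimpleGraph V) (Y : Finset V) (r : Finset V × (V → ℕ)) :
    Finset V :=
  {v ∈ Y | probe G r.1 v = r}

/-- The possible positions of the robber at the time of the last probe of the history `h`. -/
noncomputable def survivors (G : SimpleGraph V) (h : List (Finset V × (V → ℕ))) : Finset V :=
  h.foldl (fun X r ↦ consistent G (closedNeighbors G X) r) Finset.univ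

theorem mem_closedNeighbors {X : Finset V} {w : V} :
    w ∈ closedNeighbors G X ↔ w ∈ X ∨ ∃ x ∈ X, G.Adj x w := by
  simp only [closedNeighbors, gBall, Finset.mem_filter_univ, mem_ofPred_eq, Nat.cast_one,
    edist_le_one_iff_adj_or_eq, Finset.mem_coe]
  grind

theorem card_closedNeighbors_le {D : ℝ} (hD : ∀ v, (G.degree v : ℝ) + 1 ≤ D) (X : Finset V) :
    (closedNeighbors G X).card ≤ D * X.card := by
  have hcover : closedNeighbors G X ⊆ X.biUnion fun x ↦ insert x (G.neighborFinset x) := by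
    intro w hw
    simp only [Finset.mem_biUnion, Finset.mem_insert, mem_neighborFinset]
    rcases mem_closedNeighbors.1 hw with h | ⟨x, hx, hadj⟩
    · exact ⟨w, h, .inl rfl⟩
    · exact ⟨x, hx, .inr hadj⟩
  calc ((closedNeighbors G X).card : ℝ)
      ≤ ∑ x ∈ X, ((insert x (G.neighborFinset x)).card : ℝ) :=
        mod_cast (Finset.card_le_card hcover).trans Finset.card_biUnion_le
    _ ≤ ∑ _x ∈ X, D := Finset.sum_le_sum fun x _ ↦
        le_trans (mod_cast Finset.card_insert_le x (G.neighborFinset x)) (hD x)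
    _ = D * X.card := by rw [Finset.sum_const, nsmul_eq_mul, mul_comm]

theorem sum_card_pairs_le {θ : ℝ} (hθ : θ ≤ 1)
    (hsep : ∀ u v, u ≠ v → (indistinguishing G u v).card ≤ (1 - θ) * Fintype.card V)
    (Y : Finset V) (k : ℕ) :
    ∑ s : Fin k → V,
        ((Y.offDiag.filter fun x ↦ ∀ j, G.dist (s j) x.1 = G.dist (s j) x.2).card : ℝ) ≤
      ∑ _s : Fin k → V, (Y.card : ℝ) ^ 2 * (1 - θ) ^ k := by
  have hpair (x : V × V) (hx : x ∈ Y.offDiag) :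
      ∑ s : Fin k → V, (if ∀ j, G.dist (s j) x.1 = G.dist (s j) x.2 then (1 : ℝ) else 0) ≤
        ((1 - θ) * Fintype.card V) ^ k := by
    have hpi : ({s | ∀ j, G.dist (s j) x.1 = G.dist (s j) x.2} : Finset (Fin k → V)) =
        Fintype.piFinset fun _ ↦ indistinguishing G x.1 x.2 := by
      ext s; simp [indistinguishing]
    rw [Finset.sum_boole, hpi, Fintype.card_piFinset_const, Nat.cast_pow]
    gcongr
    exact hsep _ _ (Finset.mem_offDiag.1 hx).2.2
  have hoff : (Y.offDiag.card : ℝ) ≤ (Y.card : ℝ) ^ 2 := by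
    rw [Finset.offDiag_card, sq]
    exact_mod_cast Nat.sub_le _ _
  calc _ = ∑ x ∈ Y.offDiag, ∑ s : Fin k → V,
        (if ∀ j, G.dist (s j) x.1 = G.dist (s j) x.2 then (1 : ℝ) else 0) := by
        rw [Finset.sum_comm]; simp only [Finset.sum_boole]
    _ ≤ ∑ _x ∈ Y.offDiag, ((1 - θ) * Fintype.card V) ^ k := Finset.sum_le_sum hpair
    _ ≤ (Y.card : ℝ) ^ 2 * ((1 - θ) * Fintype.card V) ^ k := by
        rw [Finset.sum_const, nsmul_eq_mul]
        have : 0 ≤ 1 - θ := by linarith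
        gcongr
    _ = _ := by
        rw [Finset.sum_const, Finset.card_univ, Fintype.card_fun, Fintype.card_fin, nsmul_eq_mul,
          Nat.cast_pow, mul_pow]
        ring

theorem exists_card_unresolvedPairs_le [Nonempty V] {θ : ℝ} (hθ : θ ≤ 1)
    (hsep : ∀ u v, u ≠ v → (indistinguishing G u v).card ≤ (1 - θ) * Fintype.card V) (k : ℕ)
    (Y : Finset V) :
    ∃ S : Finset V, S.card = min k (Fintype.card V) ∧
      (unresolvedPairs G Y S).card ≤ (Y.card : ℝ) ^ 2 * (1 - θ) ^ k := by
  obtain ⟨s, -, hs⟩ :=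
    Finset.exists_le_of_sum_le Finset.univ_nonempty (sum_card_pairs_le hθ hsep Y k)
  have hcard : (Finset.univ.image s).card ≤ min k (Fintype.card V) :=
    le_min (Finset.card_image_le.trans_eq (by simp)) (Finset.card_le_univ _)
  obtain ⟨S, hsS, hS⟩ := Finset.exists_superset_card_eq hcard (min_le_right _ _)
  refine ⟨S, hS, le_trans (mod_cast Finset.card_le_card ?_) hs⟩
  exact Finset.monotone_filter_right _ fun x _ hx j ↦
    hx _ (hsS (Finset.mem_image_of_mem s (Finset.mem_univ j)))

theorem offDiag_consistent_subset (Y S : Finset V) (v : V) :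
    (consistent G Y (probe G S v)).offDiag ⊆ unresolvedPairs G Y S := by
  intro x hx
  simp only [Finset.mem_offDiag, consistent, Finset.mem_filter] at hx
  obtain ⟨⟨h1, hprobe1⟩, ⟨h2, hprobe2⟩, hne⟩ := hx
  refine Finset.mem_filter.2 ⟨Finset.mem_offDiag.2 ⟨h1, h2, hne⟩, fun s hs ↦ ?_⟩
  simpa [probe, hs] using congrFun (congrArg Prod.snd (hprobe1.trans hprobe2.symm)) s

theorem card_consistent_lt {X S : Finset V} {D ρ : ℝ} (hX : 2 ≤ X.card) (hρ : 0 ≤ ρ)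
    (hD : (closedNeighbors G X).card ≤ D * X.card)
    (hS : (unresolvedPairs G (closedNeighbors G X) S).card ≤
      ((closedNeighbors G X).card : ℝ) ^ 2 * ρ)
    (hDρ : D ^ 2 * ρ < 1 / 2) (v : V) :
    (consistent G (closedNeighbors G X) (probe G S v)).card < X.card := by
  set Z := consistent G (closedNeighbors G X) (probe G S v)
  have hX' : (2 : ℝ) ≤ X.card := mod_cast hX
  have hpairs : (Z.card : ℝ) * Z.card - Z.card < X.card * X.card - X.card := by
    calc (Z.card : ℝ) * Z.card - Z.card = Z.offDiag.card := by
          rw [Finset.offDiag_card, Nat.cast_sub (Nat.le_mul_self _), Nat.cast_mul]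
      _ ≤ ((closedNeighbors G X).card : ℝ) ^ 2 * ρ :=
          le_trans (mod_cast Finset.card_le_card (offDiag_consistent_subset _ S v)) hS
      _ ≤ (D * X.card) ^ 2 * ρ := by gcongr
      _ = D ^ 2 * ρ * X.card ^ 2 := by ring
      _ < 1 / 2 * X.card ^ 2 := by gcongr
      _ ≤ X.card * X.card - X.card := by nlinarith
  by_contra! hle
  have hle' : (X.card : ℝ) ≤ Z.card := mod_cast hle
  nlinarith

theorem survivors_append_singleton (h : List (Finset V × (V → ℕ))) (r : Finset V × (V → ℕ)) :
    survivors G (h ++ [r]) = consistent G (closedNeighbors G (survivors G h)) r := by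
  simp only [survivors, List.foldl_append, List.foldl_cons, List.foldl_nil]

theorem mem_survivors_gameHistory (σ : CopStrategy V) {w : ℕ → V} (hw : IsRobberWalk G w) (t : ℕ) :
    w t ∈ survivors G (gameHistory G σ w (t + 1)) := by
  have hmove : w t ∈ closedNeighbors G (survivors G (gameHistory G σ w t)) := by
    refine mem_closedNeighbors.2 ?_
    induction t with
    | zero => exact .inl (Finset.mem_univ _)
    | succ t ih =>
      have hmem : w t ∈ survivors G (gameHistory G σ w (t + 1)) := by
        rw [gameHistory, survivors_append_singleton]
        exact Finset.mem_filter.2 ⟨mem_closedNeighbors.2 ih, rfl⟩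
      rcases hw t with hstay | hadj
      · exact .inl (hstay ▸ hmem)
      · exact .inr ⟨w t, hmem, hadj⟩
  rw [gameHistory, survivors_append_singleton]
  exact Finset.mem_filter.2 ⟨hmove, rfl⟩

theorem copsWin_of_card_survivors_le_one {k : ℕ} (σ : CopStrategy V) (hσ : ∀ h, (σ h).card = k)
    (hwin : ∀ w, IsRobberWalk G w → ∃ t, (survivors G (gameHistory G σ w (t + 1))).card ≤ 1) :
    CopsWin G k := by
  refine ⟨σ, hσ, fun w hw ↦ ?_⟩
  obtain ⟨t, ht⟩ := hwin w hw
  refine ⟨t, fun w' hw' hhistory ↦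
    Finset.card_le_one.1 ht _ ?_ _ (mem_survivors_gameHistory σ hw t)⟩
  exact hhistory ▸ mem_survivors_gameHistory σ hw' t

theorem copsWin_of_card_indistinguishing_le [Nonempty V] {θ D : ℝ} {k : ℕ} (hθ : θ ≤ 1)
    (hsep : ∀ u v, u ≠ v → (indistinguishing G u v).card ≤ (1 - θ) * Fintype.card V)
    (hD : ∀ v, (G.degree v : ℝ) + 1 ≤ D) (hDθ : D ^ 2 * (1 - θ) ^ k < 1 / 2) :
    CopsWin G (min k (Fintype.card V)) := by
  choose sensors hcard hunresolved using exists_card_unresolvedPairs_le hθ hsep k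
  let σ : CopStrategy V := fun h ↦ sensors (closedNeighbors G (survivors G h))
  refine copsWin_of_card_survivors_le_one σ (fun h ↦ hcard _) fun w _ ↦ ?_
  let size (t : ℕ) : ℕ := (survivors G (gameHistory G σ w (t + 1))).card
  have hshrink (t : ℕ) (ht : 2 ≤ size t) : size (t + 1) < size t := by
    change (survivors G (gameHistory G σ w (t + 1) ++ [_])).card < size t
    rw [survivors_append_singleton]
    exact card_consistent_lt ht (pow_nonneg (by linarith) k) (card_closedNeighbors_le hD _)
      (hunresolved _) hDθ _
  by_contra! hlarge
  exact not_strictAnti_of_wellFoundedLT size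
    (strictAnti_nat_of_succ_lt fun t ↦ hshrink t (hlarge t))

/-- A move multiplies the number of pairs of candidate positions by at most `D ^ 2`, and
`(2 log D + 1) / θ` random sensors leave less than a fraction `1 / (2 D ^ 2)` of them unresolved. -/
theorem localizationNumber_le [Nonempty V] {θ D : ℝ} (hθ0 : 0 < θ) (hθ : θ ≤ 1)
    (hsep : ∀ u v, u ≠ v → (indistinguishing G u v).card ≤ (1 - θ) * Fintype.card V)
    (hD1 : 1 ≤ D) (hD : ∀ v, (G.degree v : ℝ) + 1 ≤ D) :
    localizationNumber G ≤ (2 * Real.log D + 1) / θ + 1 := by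
  have hlog : 0 ≤ Real.log D := Real.log_nonneg hD1
  set k := ⌈(2 * Real.log D + 1) / θ⌉₊
  have hk : 2 * Real.log D + 1 ≤ θ * k := by
    rw [mul_comm θ, ← div_le_iff₀ hθ0]; exact Nat.le_ceil _
  have hDθ : D ^ 2 * (1 - θ) ^ k < 1 / 2 := by
    calc D ^ 2 * (1 - θ) ^ k ≤ D ^ 2 * Real.exp (-(θ * k)) := by
          gcongr; exact one_sub_pow_le_exp_neg_mul hθ k
      _ ≤ D ^ 2 * Real.exp (-(2 * Real.log D + 1)) := by gcongr
      _ = Real.exp (-1) := by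
          rw [neg_add, Real.exp_add, Real.exp_neg, two_mul, Real.exp_add,
            Real.exp_log (by linarith), ← sq, mul_inv_cancel_left₀ (by positivity)]
      _ < 1 / 2 := by linarith [Real.exp_neg_one_lt_d9]
  calc (localizationNumber G : ℝ) ≤ k :=
        mod_cast (Nat.sInf_le (copsWin_of_card_indistinguishing_le hθ hsep hD hDθ)).trans
          (min_le_left _ _)
    _ ≤ (2 * Real.log D + 1) / θ + 1 := (Nat.ceil_lt_add_one (by positivity)).le

end Game

section Separation

open scoped Classical

variable {V : Type*} [Fintype V] {G : SimpleGraph V} {u v w : V} {j r : ℕ}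

/-- The vertices at distance at most `j` from `v`, as a finset. -/
noncomputable def closedBall (G : SimpleGraph V) (v : V) (j : ℕ) : Finset V :=
  {w | w ∈ gBall G {v} j}

theorem mem_closedBall : w ∈ closedBall G v j ↔ G.edist v w ≤ j := by
  simp only [closedBall, gBall, mem_singleton_iff, exists_eq_left, mem_ofPred_eq,
    Finset.mem_filter_univ]

theorem closedBall_zero : closedBall G v 0 = {v} := by
  ext w
  simp only [mem_closedBall, Nat.cast_zero, nonpos_iff_eq_zero, edist_eq_zero_iff,
    Finset.mem_singleton, eq_comm (a := w)]

theorem closedBall_succ : closedBall G v (j + 1) = closedNeighbors G (closedBall G v j) := by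
  ext w
  simp only [mem_closedNeighbors, mem_closedBall, Nat.cast_succ]
  constructor
  · intro hw
    by_cases hj : G.edist v w ≤ j
    · exact .inl hj
    obtain ⟨q, hq⟩ := exists_walk_of_edist_eq_coe (k := j + 1)
      (le_antisymm (mod_cast hw) (mod_cast Order.add_one_le_of_lt (not_le.1 hj)))
    have hnil : ¬ q.Nil := fun h ↦ by simp [Walk.length_eq_zero_iff.2 h] at hq
    refine .inr ⟨q.penultimate, (edist_le q.dropLast).trans ?_, q.adj_penultimate hnil⟩
    simp [hq]
  · rintro (hw | ⟨x, hx, hadj⟩)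
    · exact hw.trans le_self_add
    · exact G.edist_triangle.trans (add_le_add hx (edist_eq_one_iff_adj.2 hadj).le)

theorem card_closedBall_le_pow {D : ℝ} (hD : ∀ v, (G.degree v : ℝ) + 1 ≤ D) (v : V) (j : ℕ) :
    (closedBall G v j).card ≤ D ^ j := by
  have hD0 : 0 ≤ D := le_trans (by positivity) (hD v)
  induction j with
  | zero => simp [closedBall_zero]
  | succ j ih =>
    rw [closedBall_succ, pow_succ']
    exact (card_closedNeighbors_le hD _).trans (by gcongr)

theorem card_closedBall_sdiff_le_pow {D : ℝ} (hD : ∀ v, (G.degree v : ℝ) + 1 ≤ D) (u v : V)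
    (j : ℕ) : (closedBall G u j \ closedBall G v j).card ≤ D ^ j :=
  le_trans (mod_cast Finset.card_le_card Finset.sdiff_subset) (card_closedBall_le_pow hD u j)

theorem dist_ne_dist_of_mem_closedBall_sdiff (hw : w ∈ closedBall G u j \ closedBall G v j)
    (hwu : w ≠ u) : G.dist w u ≠ G.dist w v := by
  rw [Finset.mem_sdiff, mem_closedBall, mem_closedBall] at hw
  have hu : G.Reachable u w := reachable_of_edist_ne_top (ne_top_of_le_ne_top (by simp) hw.1)
  rw [dist_comm, G.dist_comm (u := w)]
  intro heq
  have hv : G.Reachable v w :=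
    .of_dist_ne_zero (heq ▸ (hu.pos_dist_of_ne hwu.symm).ne')
  rw [← hu.coe_dist_eq_edist, ← hv.coe_dist_eq_edist, heq] at hw
  exact hw.2 hw.1

theorem exclusiveNeighbors_subset :
    exclusiveNeighbors G (closedBall G u j \ closedBall G v j) (closedBall G v j) ⊆
      (closedBall G u (j + 1) \ closedBall G v (j + 1)).erase u := by
  intro w hw
  rw [mem_exclusiveNeighbors, Finset.sdiff_union_self_eq_union, Finset.notMem_union] at hw
  obtain ⟨⟨hwu, hwv⟩, ⟨x, hx, hadj⟩, hnadj⟩ := hw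
  simp only [Finset.mem_erase, Finset.mem_sdiff, closedBall_succ, mem_closedNeighbors, not_or,
    not_exists, not_and]
  refine ⟨?_, .inr ⟨x, (Finset.mem_sdiff.1 hx).1, hadj.symm⟩, hwv, fun x hx h ↦ hnadj x hx h.symm⟩
  rintro rfl
  exact hwu (mem_closedBall.2 (by simp))

theorem card_indistinguishing_add_card_add_card_le (u v : V) (j : ℕ) :
    (indistinguishing G u v).card +
      ((exclusiveNeighbors G (closedBall G u j \ closedBall G v j) (closedBall G v j)).card +
        (exclusiveNeighbors G (closedBall G v j \ closedBall G u j) (closedBall G u j)).card) ≤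
      Fintype.card V := by
  set N₁ := exclusiveNeighbors G (closedBall G u j \ closedBall G v j) (closedBall G v j)
  set N₂ := exclusiveNeighbors G (closedBall G v j \ closedBall G u j) (closedBall G u j)
  have hN₁ (w) (hw : w ∈ N₁) := Finset.mem_erase.1 (exclusiveNeighbors_subset hw)
  have hN₂ (w) (hw : w ∈ N₂) := Finset.mem_erase.1 (exclusiveNeighbors_subset hw)
  have hdisj : Disjoint N₁ N₂ := Finset.disjoint_left.2 fun w h₁ h₂ ↦
    (Finset.mem_sdiff.1 (hN₂ w h₂).2).2 (Finset.mem_sdiff.1 (hN₁ w h₁).2).1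
  have hdisj' : Disjoint (indistinguishing G u v) (N₁ ∪ N₂) := by
    refine Finset.disjoint_left.2 fun w hw hN ↦ ?_
    have hdist : G.dist w u = G.dist w v := (Finset.mem_filter.1 hw).2
    rcases Finset.mem_union.1 hN with h | h
    · exact dist_ne_dist_of_mem_closedBall_sdiff (hN₁ w h).2 (hN₁ w h).1 hdist
    · exact dist_ne_dist_of_mem_closedBall_sdiff (hN₂ w h).2 (hN₂ w h).1 hdist.symm
  rw [← Finset.card_union_of_disjoint hdisj, ← Finset.card_union_of_disjoint hdisj']
  exact Finset.card_le_univ _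

variable {p η M d : ℝ}

theorem IsExpander.degree_add_one_le (hG : IsExpander G p η M) (hd : d = p * Fintype.card V)
    (hηd : 1 ≤ η * d) (v : V) : (G.degree v : ℝ) + 1 ≤ (1 + 3 * η) * d := by
  have := hG.degree_le v
  rw [← hd] at this
  linarith

theorem IsExpander.mul_card_le_card_exclusiveNeighbors (hG : IsExpander G p η M)
    (hd : d = p * Fintype.card V) (hp0 : 0 ≤ p) (hp1 : p ≤ 1) (hd1 : 1 ≤ d) (hη1 : η ≤ 1)
    {S T : Finset V} (hST : IsAdmissiblePair p M S T) (hS : 3 * (p * S.card) ≤ η) :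
    (1 - 3 * η) * d * S.card ≤ (exclusiveNeighbors G S T).card := by
  have : 0 ≤ η := le_trans (by positivity) hS
  have hexpect := one_sub_six_mul_le_expectedExclusive (n := Fintype.card V) hp0 hp1 hST.card_le
    (by linarith : p * S.card ≤ η / 3) (by linarith) (hd ▸ hd1)
  rw [← hd] at hexpect
  calc (1 - 3 * η) * d * S.card ≤ (1 - η) * ((1 - 6 * (η / 3)) * (d * S.card)) := by
        nlinarith [mul_nonneg (sq_nonneg η) (by positivity : 0 ≤ d * S.card)]
    _ ≤ (1 - η) * expectedExclusive (Fintype.card V) p S.card T.card := by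
        have : 0 ≤ 1 - η := by linarith
        gcongr
    _ ≤ _ := hG.le_card_exclusiveNeighbors hST

theorem isAdmissiblePair_closedBall_sdiff (hD : ∀ v, (G.degree v : ℝ) + 1 ≤ (1 + 3 * η) * d)
    (hp0 : 0 ≤ p) (hd0 : 0 < d) (hη : 0 ≤ η) (hηj : 12 * (η * j) ≤ 1) (hη1 : 12 * η ≤ 1)
    (hM : p * ((1 + 3 * η) * d) ^ j ≤ M)
    (hgrowth : ((1 - 3 * η) * d) ^ j ≤ (closedBall G u j \ closedBall G v j).card) :
    IsAdmissiblePair p M (closedBall G u j \ closedBall G v j) (closedBall G v j) where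
  disjoint := Finset.sdiff_disjoint
  nonempty := by
    rw [← Finset.card_pos, ← Nat.cast_pos (α := ℝ)]
    exact (pow_pos (mul_pos (by linarith) hd0) j).trans_le hgrowth
  card_le := by
    suffices ((closedBall G v j).card : ℝ) ≤ 2 * (closedBall G u j \ closedBall G v j).card by
      exact_mod_cast this
    calc ((closedBall G v j).card : ℝ) ≤ (1 + 3 * η) ^ j * d ^ j := by
          rw [← mul_pow]; exact card_closedBall_le_pow hD v j
      _ ≤ 2 * (1 - 3 * η) ^ j * d ^ j := by
          gcongr
          exact one_add_pow_le_two_mul_one_sub_pow (by positivity) (by linarith) (by linarith)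
      _ ≤ _ := by rw [mul_assoc, ← mul_pow]; gcongr
  mul_card_le := by
    refine le_trans ?_ hM
    gcongr
    exact card_closedBall_sdiff_le_pow hD u v j

/-- The parameters for which balls of radius at most `r` in an expander grow by a factor
`(1 ± 3η) d` per layer: `d` is the expected degree, the errors of the `r` layers do not accumulate
beyond a constant factor, and a ball of radius `r` has at most `M / p` vertices. -/
structure IsGrowthRegime (p d η M : ℝ) (r : ℕ) : Prop where
  pos : 0 < p
  lt_one : p < 1
  one_le_degree : 1 ≤ d
  one_le_mul_degree : 1 ≤ η * d
  mul_radius_le : 12 * (η * (r + 1)) ≤ 1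
  mul_pow_le : p * ((1 + 3 * η) * d) ^ r ≤ M
  three_mul_le : 3 * M ≤ η * d

namespace IsGrowthRegime

theorem degree_pos (h : IsGrowthRegime p d η M r) : 0 < d :=
  zero_lt_one.trans_le h.one_le_degree

theorem nonneg (h : IsGrowthRegime p d η M r) : 0 ≤ η :=
  (pos_of_mul_pos_left (zero_lt_one.trans_le h.one_le_mul_degree) h.degree_pos.le).le

theorem twelve_mul_le_one (h : IsGrowthRegime p d η M r) : 12 * η ≤ 1 := by
  nlinarith [h.mul_radius_le, mul_nonneg h.nonneg r.cast_nonneg]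

theorem mul_le_one (h : IsGrowthRegime p d η M r) (hj : j ≤ r) : 12 * (η * j) ≤ 1 := by
  have := h.nonneg
  have hjr : (j : ℝ) ≤ r + 1 := by exact_mod_cast (by omega : j ≤ r + 1)
  exact le_trans (by gcongr) h.mul_radius_le

theorem mul_pow_mul_degree_le (h : IsGrowthRegime p d η M r) (hj : j < r) :
    p * ((1 + 3 * η) * d) ^ j * d ≤ M := by
  have hη := h.nonneg
  have hd := h.degree_pos
  have hp := h.pos
  have hΔ : 1 ≤ (1 + 3 * η) * d :=
    one_le_mul_of_one_le_of_one_le (by linarith) h.one_le_degree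
  calc p * ((1 + 3 * η) * d) ^ j * d
      ≤ p * ((1 + 3 * η) * d) ^ j * ((1 + 3 * η) * d) := by gcongr; nlinarith
    _ = p * ((1 + 3 * η) * d) ^ (j + 1) := by ring
    _ ≤ p * ((1 + 3 * η) * d) ^ r := by gcongr; exact hj
    _ ≤ M := h.mul_pow_le

end IsGrowthRegime

theorem IsExpander.pow_le_card_closedBall_sdiff (hG : IsExpander G p η M)
    (hd : d = p * Fintype.card V) (h : IsGrowthRegime p d η M r) (huv : u ≠ v) (hj : j ≤ r) :
    ((1 - 3 * η) * d) ^ j ≤ (closedBall G u j \ closedBall G v j).card := by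
  have hd0 := h.degree_pos
  have hη1 := h.twelve_mul_le_one
  have hD := hG.degree_add_one_le hd h.one_le_mul_degree
  have hp := h.pos
  induction j with
  | zero =>
    have : (closedBall G u 0 \ closedBall G v 0) = {u} := by
      rw [closedBall_zero, closedBall_zero, Finset.sdiff_singleton_eq_erase,
        Finset.erase_eq_of_notMem (by simpa using huv.symm)]
    simp [this]
  | succ j ih =>
    have hgrowth := ih (by omega)
    have hlayer := h.mul_pow_mul_degree_le hj
    have hη := h.nonneg
    have hST := isAdmissiblePair_closedBall_sdiff hD hp.le hd0 hη (h.mul_le_one (by omega)) hη1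
      (le_trans (le_mul_of_one_le_right (by positivity) h.one_le_degree) hlayer) hgrowth
    have hS : 3 * (p * (closedBall G u j \ closedBall G v j).card) ≤ η := by
      refine le_of_mul_le_mul_right ?_ hd0
      calc 3 * (p * (closedBall G u j \ closedBall G v j).card) * d
          ≤ 3 * (p * ((1 + 3 * η) * d) ^ j) * d := by
            gcongr; exact card_closedBall_sdiff_le_pow hD u v j
        _ ≤ η * d := by linarith [h.three_mul_le]
    calc ((1 - 3 * η) * d) ^ (j + 1) = (1 - 3 * η) * d * ((1 - 3 * η) * d) ^ j := pow_succ' _ _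
      _ ≤ (1 - 3 * η) * d * (closedBall G u j \ closedBall G v j).card :=
          mul_le_mul_of_nonneg_left hgrowth (mul_nonneg (by linarith) hd0.le)
      _ ≤ _ := hG.mul_card_le_card_exclusiveNeighbors hd hp.le h.lt_one.le h.one_le_degree
          (by linarith) hST hS
      _ ≤ _ := mod_cast Finset.card_le_card
          (exclusiveNeighbors_subset.trans (Finset.erase_subset _ _))

/-- A lower bound for the fraction of the vertices that are closer to `u` than to `v`, for any
`u ≠ v`, in an expander of degree `d` whose balls of radius `r` have about `c / p` vertices. -/
noncomputable def separationFraction (p d η c : ℝ) (r : ℕ) : ℝ :=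
  (1 - η) * ((1 - 2 * ((1 + 3 * η) ^ r * c / d)) * (1 - Real.exp (-((1 - 3 * η) ^ r * c))) *
    Real.exp (-((1 + 3 * η) ^ r * c / (1 - p))))

variable {c : ℝ}

theorem IsExpander.mul_card_le_card_exclusiveNeighbors_closedBall (hG : IsExpander G p η M)
    (hd : d = p * Fintype.card V) (h : IsGrowthRegime p d η M r) (hc : c = p * d ^ r)
    (huv : u ≠ v) :
    separationFraction p d η c r * Fintype.card V ≤
      (exclusiveNeighbors G (closedBall G u r \ closedBall G v r) (closedBall G v r)).card := by
  set S := closedBall G u r \ closedBall G v r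
  set T := closedBall G v r
  have hp := h.pos
  have hd0 := h.degree_pos
  have hη1 := h.twelve_mul_le_one
  have hD := hG.degree_add_one_le hd h.one_le_mul_degree
  have : (Fintype.card V : ℝ) ≠ 0 := (pos_of_mul_pos_right (hd ▸ hd0) hp.le).ne'
  have hpow (x : ℝ) : p * (x * d) ^ r = x ^ r * c := by rw [hc, mul_pow]; ring
  have hgrowth : ((1 - 3 * η) * d) ^ r ≤ S.card := hG.pow_le_card_closedBall_sdiff hd h huv le_rfl
  have hST : IsAdmissiblePair p M S T := isAdmissiblePair_closedBall_sdiff hD hp.le hd0 h.nonneg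
    (h.mul_le_one le_rfl) hη1 h.mul_pow_le hgrowth
  have hvol : ((1 + 3 * η) * d) ^ r = Fintype.card V * ((1 + 3 * η) ^ r * c / d) := by
    rw [← hpow, mul_div_assoc', ← mul_assoc, mul_comm _ p, ← hd, mul_div_cancel_left₀ _ hd0.ne']
  have hexpect := mul_exp_le_expectedExclusive (n := Fintype.card V) (s := S.card) (t := T.card)
    (a := (1 - 3 * η) ^ r * c) (b := (1 + 3 * η) ^ r * c) (y := (1 + 3 * η) ^ r * c / d) h.lt_one
    (by rw [← hpow]; have : 0 ≤ 1 - 3 * η := by linarith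
        positivity)
    (by rw [← hpow]; gcongr)
    (by rw [← hpow]; gcongr; exact card_closedBall_le_pow hD v r)
    (hvol ▸ card_closedBall_sdiff_le_pow hD u v r) (hvol ▸ card_closedBall_le_pow hD v r)
    (by rw [← hpow, ← mul_div_assoc, div_le_one hd0]; nlinarith [h.mul_pow_le, h.three_mul_le])
  calc _ ≤ (1 - η) * expectedExclusive (Fintype.card V) p S.card T.card := by
        rw [separationFraction, mul_assoc]
        exact mul_le_mul_of_nonneg_left hexpect (by linarith)
    _ ≤ _ := hG.le_card_exclusiveNeighbors hST

theorem IsExpander.card_indistinguishing_le (hG : IsExpander G p η M)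
    (hd : d = p * Fintype.card V) (h : IsGrowthRegime p d η M r) (hc : c = p * d ^ r)
    (huv : u ≠ v) :
    (indistinguishing G u v).card ≤
      (1 - 2 * separationFraction p d η c r) * Fintype.card V := by
  have hcard : ((indistinguishing G u v).card : ℝ) +
      ((exclusiveNeighbors G (closedBall G u r \ closedBall G v r) (closedBall G v r)).card +
        (exclusiveNeighbors G (closedBall G v r \ closedBall G u r) (closedBall G u r)).card) ≤
      Fintype.card V := mod_cast card_indistinguishing_add_card_add_card_le u v r
  linarith [hG.mul_card_le_card_exclusiveNeighbors_closedBall hd h hc huv,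
    hG.mul_card_le_card_exclusiveNeighbors_closedBall hd h hc huv.symm]

theorem IsExpander.localizationNumber_le [Nonempty V] (hG : IsExpander G p η M)
    (hd : d = p * Fintype.card V) (h : IsGrowthRegime p d η M r) (hc : c = p * d ^ r)
    (hL : 0 < separationFraction p d η c r) (hL1 : 2 * separationFraction p d η c r ≤ 1) :
    localizationNumber G ≤
      (2 * Real.log (2 * d) + 1) / (2 * separationFraction p d η c r) + 1 := by
  have hd1 := h.one_le_degree
  refine LocalizationGame.localizationNumber_le (by positivity) hL1 (fun u v huv ↦
    hG.card_indistinguishing_le hd h hc huv) (by linarith) fun v ↦ ?_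
  exact (hG.degree_add_one_le hd h.one_le_mul_degree v).trans
    (by gcongr; linarith [h.twelve_mul_le_one])

end Separation

section AsymptoticallyAlmostSurely

open MeasureTheory ProbabilityTheory unitInterval

variable {p : ℕ → ℝ} {A B : (n : ℕ) → Set (SimpleGraph (Fin n))}

theorem aas_mono (hp : ∀ᶠ n in atTop, p n ∈ I) (hA : AAS p A) (hAB : ∀ᶠ n in atTop, A n ⊆ B n) :
    AAS p B := by
  refine tendsto_of_tendsto_of_tendsto_of_le_of_le' hA tendsto_const_nhds ?_ ?_
  · filter_upwards [hp, hAB] with n hpn hsub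
    rw [gnpProb_eq_measureReal n ⟨p n, hpn⟩, gnpProb_eq_measureReal n ⟨p n, hpn⟩]
    exact measureReal_mono hsub
  · filter_upwards [hp] with n hpn
    rw [gnpProb_eq_measureReal n ⟨p n, hpn⟩]
    exact measureReal_le_one

theorem aas_isExpander {d η : ℕ → ℝ} {M : ℝ} (hd : ∀ n, d n = p n * n)
    (hp0 : ∀ᶠ n in atTop, 0 < p n) (hp : Tendsto p atTop (𝓝 0)) (hdT : Tendsto d atTop atTop)
    (hη0 : ∀ n, 0 ≤ η n) (hη : Tendsto η atTop (𝓝 0)) (hM : 0 ≤ M)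
    (hlog : ∀ᶠ n : ℕ in atTop,
      24 * Real.log n ≤ η n ^ 2 * (Real.exp (-(4 * M)) / (2 * (1 + M)) * d n)) :
    AAS p fun n ↦ {G | IsExpander G (p n) (η n) M} := by
  have hlower : Tendsto (fun n : ℕ ↦ 1 - (1 + Real.exp 2) / (n : ℝ)) atTop (𝓝 1) := by
    simpa using (tendsto_natCast_atTop_atTop.const_div_atTop (1 + Real.exp 2)).const_sub (1 : ℝ)
  have hbound : ∀ᶠ n : ℕ in atTop, 1 - (1 + Real.exp 2) / (n : ℝ) ≤
      gnpProb n (p n) {G | IsExpander G (p n) (η n) M} ∧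
      gnpProb n (p n) {G | IsExpander G (p n) (η n) M} ≤ 1 := by
    filter_upwards [hp0, hp.eventually_le_const one_half_pos, hdT.eventually_ge_atTop (6 * M),
      hη.eventually_le_const one_pos, hlog, eventually_ge_atTop 1] with n hp0 hp1 hdn hη1 hlog hn
    have : NeZero n := ⟨by omega⟩
    let q : I := ⟨p n, hp0.le, hp1.trans one_half_lt_one.le⟩
    have hbad := measureReal_not_isExpander_le (V := Fin n) (p := q) hp0 hp1 (hη0 n) hη1 hM
      (by rwa [Fintype.card_fin, ← hd]) (by rwa [Fintype.card_fin, ← hd])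
    rw [Fintype.card_fin, ← compl_ofPred, probReal_compl_eq_one_sub (Set.toFinite _).measurableSet]
      at hbad
    rw [gnpProb_eq_measureReal n q]
    exact ⟨by linarith, measureReal_le_one⟩
  exact tendsto_of_tendsto_of_tendsto_of_le_of_le' hlower tendsto_const_nhds
    (hbound.mono fun _ h ↦ h.1) (hbound.mono fun _ h ↦ h.2)

end AsymptoticallyAlmostSurely

section Asymptotics

variable {p d c η : ℕ → ℝ} {i r : ℕ → ℕ} {A M : ℝ}

theorem tendsto_one_add_pow {x : ℕ → ℝ} (hx : Tendsto x atTop (𝓝 0))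
    (hxr : Tendsto (fun n ↦ r n * x n) atTop (𝓝 0)) :
    Tendsto (fun n ↦ (1 + x n) ^ r n) atTop (𝓝 1) := by
  have hx1 : ∀ᶠ n in atTop, -1 ≤ x n := hx.eventually_const_le (by norm_num)
  have hlower : Tendsto (fun n ↦ 1 + r n * x n) atTop (𝓝 1) := by simpa using hxr.const_add 1
  have hupper : Tendsto (fun n ↦ Real.exp (r n * x n)) atTop (𝓝 1) := by
    simpa [Function.comp_def] using (Real.continuous_exp.tendsto 0).comp hxr
  refine tendsto_of_tendsto_of_tendsto_of_le_of_le' hlower hupper ?_ ?_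
  · filter_upwards [hx1] with n hn
    exact one_add_mul_le_pow (by linarith) (r n)
  · filter_upwards [hx1] with n hn
    rw [Real.exp_nat_mul, add_comm]
    exact pow_le_pow_left₀ (by linarith) (Real.add_one_le_exp _) _

theorem tendsto_one_add_three_mul_pow (hη : Tendsto η atTop (𝓝 0))
    (hηr : Tendsto (fun n ↦ η n * r n) atTop (𝓝 0)) :
    Tendsto (fun n ↦ (1 + 3 * η n) ^ r n) atTop (𝓝 1) :=
  tendsto_one_add_pow (by simpa using hη.const_mul 3)
    (by simpa [mul_comm, mul_assoc, mul_left_comm] using hηr.const_mul 3)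

theorem tendsto_separationFraction (hp : Tendsto p atTop (𝓝 0)) (hdT : Tendsto d atTop atTop)
    (hη : Tendsto η atTop (𝓝 0)) (hηr : Tendsto (fun n ↦ η n * r n) atTop (𝓝 0))
    (hcA : Tendsto c atTop (𝓝 A)) :
    Tendsto (fun n ↦ separationFraction (p n) (d n) (η n) (c n) (r n)) atTop
      (𝓝 ((1 - Real.exp (-A)) * Real.exp (-A))) := by
  have hβ := (tendsto_one_add_three_mul_pow hη hηr).mul hcA
  have hα : Tendsto (fun n ↦ (1 - 3 * η n) ^ r n * c n) atTop (𝓝 (1 * A)) := by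
    simpa [sub_eq_add_neg] using (tendsto_one_add_three_mul_pow (η := fun n ↦ -η n)
      (by simpa using hη.neg) (by simpa using hηr.neg)).mul hcA
  have hsize := ((hβ.div_atTop hdT).const_mul 2).const_sub 1
  have hreach := (Real.continuous_exp.tendsto _).comp hα.neg |>.const_sub 1
  have havoid := (Real.continuous_exp.tendsto _).comp
    (hβ.div (hp.const_sub 1) (by norm_num)).neg
  simpa [separationFraction] using (hη.const_sub 1).mul ((hsize.mul hreach).mul havoid)

theorem eventually_isGrowthRegime (hp0 : ∀ᶠ n in atTop, 0 < p n) (hp : Tendsto p atTop (𝓝 0))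
    (hdT : Tendsto d atTop atTop) (hη : Tendsto η atTop (𝓝 0))
    (hηr : Tendsto (fun n ↦ η n * r n) atTop (𝓝 0))
    (hηd : Tendsto (fun n ↦ η n * d n) atTop atTop)
    (hc : ∀ᶠ n in atTop, c n = p n * d n ^ r n) (hcA : Tendsto c atTop (𝓝 A)) (hAM : A < M) :
    ∀ᶠ n in atTop, IsGrowthRegime (p n) (d n) (η n) M (r n) := by
  have hradius : Tendsto (fun n ↦ 12 * (η n * (r n + 1))) atTop (𝓝 0) := by
    simpa [mul_add] using (hηr.add hη).const_mul 12
  have hβ : Tendsto (fun n ↦ (1 + 3 * η n) ^ r n * c n) atTop (𝓝 A) := by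
    simpa using (tendsto_one_add_three_mul_pow hη hηr).mul hcA
  filter_upwards [hp0, hp.eventually_lt_const one_pos, hdT.eventually_ge_atTop 1,
    hηd.eventually_ge_atTop 1, hradius.eventually_le_const one_pos, hβ.eventually_le_const hAM,
    hηd.eventually_ge_atTop (3 * M), hc] with n h1 h2 h3 h4 h5 h6 h7 h8
  refine ⟨h1, h2, h3, h4, h5, ?_, h7⟩
  rwa [mul_pow, mul_left_comm, ← h8]

theorem tendsto_sensors_div_log {L : ℕ → ℝ} {q : ℝ} (hdT : Tendsto d atTop atTop)
    (hL : Tendsto L atTop (𝓝 q)) (hq : q ≠ 0) :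
    Tendsto (fun n ↦ ((2 * Real.log (2 * d n) + 1) / (2 * L n) + 1) / Real.log (d n)) atTop
      (𝓝 q⁻¹) := by
  have hlogd : Tendsto (fun n ↦ Real.log (d n)) atTop atTop := Real.tendsto_log_atTop.comp hdT
  have hlimit : Tendsto (fun n ↦ (2 + (2 * Real.log 2 + 1) / Real.log (d n)) / (2 * L n) +
      1 / Real.log (d n)) atTop (𝓝 ((2 + 0) / (2 * q) + 0)) :=
    (((hlogd.const_div_atTop _).const_add 2).div (hL.const_mul 2) (by simpa)).add
      (hlogd.const_div_atTop 1)
  have hq' : (2 + 0) / (2 * q) + 0 = q⁻¹ := by field_simp; ring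
  rw [hq'] at hlimit
  refine hlimit.congr' ?_
  filter_upwards [hdT.eventually_gt_atTop 0, hlogd.eventually_gt_atTop 0] with n hd0 hlog0
  rw [Real.log_mul two_ne_zero hd0.ne']
  field_simp
  ring

theorem exists_accuracy {κ : ℝ} (hκ : 0 < κ) (hdT : Tendsto d atTop atTop)
    (hlog : Tendsto (fun n : ℕ ↦ (i n : ℝ) ^ 2 * Real.log n / d n) atTop (𝓝 0)) :
    ∃ η : ℕ → ℝ, (∀ n, 0 ≤ η n) ∧ Tendsto (fun n ↦ η n * i n) atTop (𝓝 0) ∧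
      Tendsto (fun n ↦ η n * d n) atTop atTop ∧
      ∀ᶠ n : ℕ in atTop, 24 * Real.log n ≤ η n ^ 2 * (κ * d n) := by
  have hlogT : Tendsto (fun n : ℕ ↦ Real.log n) atTop atTop :=
    Real.tendsto_log_atTop.comp tendsto_natCast_atTop_atTop
  refine ⟨fun n ↦ √(24 * Real.log n / (κ * d n)), fun n ↦ Real.sqrt_nonneg _, ?_, ?_, ?_⟩
  · have hsqrt : Tendsto (fun n : ℕ ↦ √(24 / κ * ((i n : ℝ) ^ 2 * Real.log n / d n))) atTop
        (𝓝 0) := by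
      simpa [Function.comp_def] using
        (Real.continuous_sqrt.tendsto _).comp (hlog.const_mul (24 / κ))
    refine hsqrt.congr fun n ↦ ?_
    rw [← Real.sqrt_sq (i n).cast_nonneg, ← Real.sqrt_mul' _ (sq_nonneg _),
      Real.sqrt_sq (i n).cast_nonneg]
    congr 1
    ring
  · have hsqrt : Tendsto (fun n : ℕ ↦ √(24 / κ * (Real.log n * d n))) atTop atTop :=
      Real.tendsto_sqrt_atTop.comp ((hlogT.atTop_mul_atTop₀ hdT).const_mul_atTop (by positivity))
    refine hsqrt.congr' ?_
    filter_upwards [hdT.eventually_gt_atTop 0] with n hd0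
    nth_rw 3 [← Real.sqrt_sq hd0.le]
    rw [← Real.sqrt_mul' _ (sq_nonneg _)]
    congr 1
    field_simp
  · filter_upwards [hdT.eventually_gt_atTop 0] with n hd0
    have := Real.log_natCast_nonneg n
    rw [Real.sq_sqrt (by positivity), div_mul_cancel₀ _ (by positivity)]

theorem eventually_exponent_ne_zero (hc : ∀ n, c n = d n ^ i n / n) (hA : 0 < A)
    (hcA : Tendsto c atTop (𝓝 A)) : ∀ᶠ n in atTop, i n ≠ 0 := by
  have hinv : Tendsto (fun n : ℕ ↦ 1 / (n : ℝ)) atTop (𝓝 0) := tendsto_one_div_atTop_nhds_zero_nat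
  filter_upwards [hinv.eventually_lt_const (half_pos hA),
    hcA.eventually_const_lt (half_lt_self hA)] with n hinv hcn hi
  rw [hc, hi, pow_zero] at hcn
  exact hinv.not_gt hcn

theorem eventually_degree_pos (hd : ∀ n, d n = p n * n) (hc : ∀ n, c n = d n ^ i n / n)
    (hp : ∀ᶠ n in atTop, 0 ≤ p n) (hA : 0 < A) (hcA : Tendsto c atTop (𝓝 A)) :
    ∀ᶠ n in atTop, 0 < d n := by
  filter_upwards [hp, hcA.eventually_const_lt hA, eventually_exponent_ne_zero hc hA hcA]
    with n hp hcn hi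
  refine (hd n ▸ mul_nonneg hp n.cast_nonneg).lt_of_ne fun h ↦ ?_
  rw [hc, ← h, zero_pow hi, zero_div] at hcn
  exact lt_irrefl _ hcn

theorem tendsto_degree_atTop (hd0 : ∀ᶠ n in atTop, 0 < d n) (hi : ∀ᶠ n in atTop, i n ≠ 0)
    (hlog : Tendsto (fun n : ℕ ↦ (i n : ℝ) ^ 2 * Real.log n / d n) atTop (𝓝 0)) :
    Tendsto d atTop atTop := by
  refine tendsto_atTop_mono' _ ?_ (Real.tendsto_log_atTop.comp tendsto_natCast_atTop_atTop)
  filter_upwards [hd0, hi, hlog.eventually_le_const one_pos] with n hd0 hi hle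
  have hi' : (1 : ℝ) ≤ (i n : ℝ) ^ 2 := mod_cast Nat.one_le_pow _ _ (Nat.pos_of_ne_zero hi)
  calc Real.log n ≤ (i n : ℝ) ^ 2 * Real.log n :=
        le_mul_of_one_le_left (Real.log_natCast_nonneg n) hi'
    _ ≤ d n := (div_le_one hd0).1 hle

end Asymptotics

section SensorCount

open unitInterval

variable {p d c η : ℕ → ℝ} {i : ℕ → ℕ} {A : ℝ}

theorem eventually_eq_mul_pow_sub_one (hd : ∀ n, d n = p n * n) (hc : ∀ n, c n = d n ^ i n / n)
    (hi : ∀ᶠ n in atTop, i n ≠ 0) : ∀ᶠ n in atTop, c n = p n * d n ^ (i n - 1) := by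
  filter_upwards [hi, eventually_ne_atTop 0] with n hi hn
  rw [hc, ← mul_pow_sub_one hi, div_eq_iff (Nat.cast_ne_zero.2 hn)]
  nth_rw 1 [hd]
  ring

theorem tendsto_probability_zero (hd : ∀ n, d n = p n * n)
    (hdn : Tendsto (fun n : ℕ ↦ d n / n) atTop (𝓝 0)) : Tendsto p atTop (𝓝 0) := by
  refine hdn.congr' ?_
  filter_upwards [eventually_ne_atTop 0] with n hn
  rw [hd, mul_div_cancel_right₀ _ (Nat.cast_ne_zero.2 hn)]

theorem eventually_mem_unitInterval (hd : ∀ n, d n = p n * n) (hp : ∀ᶠ n in atTop, 0 ≤ p n)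
    (hdn : Tendsto (fun n : ℕ ↦ d n / n) atTop (𝓝 0)) : ∀ᶠ n in atTop, p n ∈ I :=
  hp.and ((tendsto_probability_zero hd hdn).eventually_le_const one_pos)

theorem tendsto_mul_sub_one (hη0 : ∀ n, 0 ≤ η n)
    (hηi : Tendsto (fun n ↦ η n * i n) atTop (𝓝 0)) :
    Tendsto (fun n ↦ η n * (i n - 1 : ℕ)) atTop (𝓝 0) :=
  squeeze_zero (fun n ↦ mul_nonneg (hη0 n) (Nat.cast_nonneg _))
    (fun n ↦ mul_le_mul_of_nonneg_left (Nat.cast_le.2 (Nat.sub_le _ _)) (hη0 n)) hηi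

theorem tendsto_zero_of_tendsto_mul_natCast (hη0 : ∀ n, 0 ≤ η n) (hi : ∀ᶠ n in atTop, i n ≠ 0)
    (hηi : Tendsto (fun n ↦ η n * i n) atTop (𝓝 0)) : Tendsto η atTop (𝓝 0) := by
  refine squeeze_zero' (.of_forall hη0) (hi.mono fun n hn ↦ ?_) hηi
  exact le_mul_of_one_le_right (hη0 n) (Nat.one_le_cast.2 (Nat.one_le_iff_ne_zero.2 hn))

theorem one_sub_exp_neg_mul_exp_neg_pos (hA : 0 < A) :
    0 < (1 - Real.exp (-A)) * Real.exp (-A) :=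
  mul_pos (sub_pos.2 (Real.exp_lt_one_iff.2 (neg_lt_zero.2 hA))) (Real.exp_pos _)

theorem inv_one_sub_exp_neg_mul_exp_neg (A : ℝ) :
    ((1 - Real.exp (-A)) * Real.exp (-A))⁻¹ = Real.exp A / (1 - Real.exp (-A)) := by
  rw [mul_inv, ← Real.exp_neg, neg_neg, mul_comm, div_eq_mul_inv]

theorem exists_sensor_bound (hd : ∀ n, d n = p n * n) (hc : ∀ n, c n = d n ^ i n / n)
    (hp : ∀ᶠ n in atTop, 0 ≤ p n)
    (hlog : Tendsto (fun n : ℕ ↦ (i n : ℝ) ^ 2 * Real.log n / d n) atTop (𝓝 0))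
    (hdn : Tendsto (fun n : ℕ ↦ d n / n) atTop (𝓝 0)) (hA : 0 < A) (hcA : Tendsto c atTop (𝓝 A)) :
    ∃ L : ℕ → ℝ, Tendsto L atTop (𝓝 ((1 - Real.exp (-A)) * Real.exp (-A))) ∧
      AAS p fun n ↦ {G | (localizationNumber G : ℝ) ≤
        (2 * Real.log (2 * d n) + 1) / (2 * L n) + 1} := by
  have hi := eventually_exponent_ne_zero hc hA hcA
  have hd0 := eventually_degree_pos hd hc hp hA hcA
  have hdT := tendsto_degree_atTop hd0 hi hlog
  have hpT := tendsto_probability_zero hd hdn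
  have hp0 : ∀ᶠ n in atTop, 0 < p n :=
    hd0.mono fun n h ↦ pos_of_mul_pos_left (hd n ▸ h) n.cast_nonneg
  have hc' := eventually_eq_mul_pow_sub_one hd hc hi
  obtain ⟨η, hη0, hηi, hηd, hlogη⟩ := exists_accuracy
    (κ := Real.exp (-(4 * (A + 1))) / (2 * (1 + (A + 1)))) (by positivity) hdT hlog
  have hη := tendsto_zero_of_tendsto_mul_natCast hη0 hi hηi
  have hηr := tendsto_mul_sub_one hη0 hηi
  have hL := tendsto_separationFraction hpT hdT hη hηr hcA
  refine ⟨_, hL, aas_mono (eventually_mem_unitInterval hd hp hdn)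
    (aas_isExpander hd hp0 hpT hdT hη0 hη (add_pos hA one_pos).le hlogη) ?_⟩
  filter_upwards [eventually_isGrowthRegime hp0 hpT hdT hη hηr hηd hc' hcA (lt_add_one A), hc',
    hL.eventually_const_lt (one_sub_exp_neg_mul_exp_neg_pos hA),
    hL.eventually_le_const (u := 1 / 2) (by nlinarith [sq_nonneg (Real.exp (-A) - 1 / 2)]),
    eventually_ne_atTop 0] with n hgrowth hcn hL0 hL1 hn G hG
  have : NeZero n := ⟨hn⟩
  exact hG.localizationNumber_le (by rw [Fintype.card_fin, hd]) hgrowth hcn hL0 (by linarith)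

theorem exists_eq_one_add_mul {f g : ℕ → ℝ} {q : ℝ} (hq : q ≠ 0)
    (hfg : Tendsto (fun n ↦ f n / g n) atTop (𝓝 q)) (hg : ∀ᶠ n in atTop, g n ≠ 0) :
    ∃ ε : ℕ → ℝ, Tendsto ε atTop (𝓝 0) ∧ ∀ᶠ n in atTop, f n = (1 + ε n) * g n * q := by
  refine ⟨fun n ↦ f n / g n / q - 1, by simpa [hq] using (hfg.div_const q).sub_const 1, ?_⟩
  filter_upwards [hg] with n hg
  field_simp
  ring

theorem eventually_degree_pos_of_pow_succ_div_pos (hc : ∀ n, c n = d n ^ i n / n) (hA : 0 < A)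
    (hcA : Tendsto c atTop (𝓝 A)) (hpow : ∀ᶠ n : ℕ in atTop, 0 < d n ^ (i n + 1) / n) :
    ∀ᶠ n in atTop, 0 < d n := by
  filter_upwards [hcA.eventually_const_lt hA, hpow] with n hcn hpow
  rw [pow_succ, mul_div_right_comm, ← hc] at hpow
  exact pos_of_mul_pos_right hpow hcn.le

theorem tendsto_atTop_of_log_pow_div (hd0 : ∀ᶠ n in atTop, 0 < d n) {k : ℕ} (hk : k ≠ 0)
    (hlog : Tendsto (fun n : ℕ ↦ Real.log n ^ k / d n) atTop (𝓝 0)) : Tendsto d atTop atTop := by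
  refine tendsto_atTop_mono' _ ?_ ((tendsto_pow_atTop hk).comp
    (Real.tendsto_log_atTop.comp tendsto_natCast_atTop_atTop))
  filter_upwards [hd0, hlog.eventually_le_const one_pos] with n hd0 hle
  exact (div_le_one hd0).1 hle

theorem eventually_exponent_le_log (hdT : Tendsto d atTop atTop)
    (hc : ∀ n, c n = d n ^ i n / n) (hcA : Tendsto c atTop (𝓝 A)) :
    ∀ᶠ n : ℕ in atTop, (i n : ℝ) ≤ Real.log n := by
  filter_upwards [hdT.eventually_ge_atTop (Real.exp 2), hcA.eventually_le_const (lt_add_one A),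
    tendsto_natCast_atTop_atTop.eventually_ge_atTop (A + 1), eventually_gt_atTop 0]
    with n hd2 hcA hAn hn
  have hn' : (0 : ℝ) < n := Nat.cast_pos.2 hn
  rw [hc] at hcA
  have hpow : Real.exp (i n * 2) ≤ (n : ℝ) ^ 2 := by
    calc Real.exp (i n * 2) = Real.exp 2 ^ i n := Real.exp_nat_mul 2 (i n)
      _ ≤ d n ^ i n := by gcongr
      _ ≤ (n : ℝ) * n := (div_le_iff₀ hn').1 (hcA.trans hAn)
      _ = (n : ℝ) ^ 2 := (sq _).symm
  have hlog := (Real.le_log_iff_exp_le (by positivity)).2 hpow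
  rw [Real.log_pow, Nat.cast_ofNat] at hlog
  linarith

theorem tendsto_exponent_sq_mul_log_div (hd0 : ∀ᶠ n in atTop, 0 < d n)
    (hc : ∀ n, c n = d n ^ i n / n) (hcA : Tendsto c atTop (𝓝 A))
    (hlog : Tendsto (fun n : ℕ ↦ Real.log n ^ 3 / d n) atTop (𝓝 0)) :
    Tendsto (fun n : ℕ ↦ (i n : ℝ) ^ 2 * Real.log n / d n) atTop (𝓝 0) := by
  have hi := eventually_exponent_le_log (tendsto_atTop_of_log_pow_div hd0 three_ne_zero hlog) hc hcA
  refine squeeze_zero' ?_ ?_ hlog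
  · filter_upwards [hd0] with n hd0
    have := Real.log_natCast_nonneg n
    positivity
  · filter_upwards [hd0, hi] with n hd0 hi
    have := Real.log_natCast_nonneg n
    rw [pow_succ (Real.log n) 2]
    gcongr

theorem aas_le_mul_log_add_of_aas_le_mul_log {ε : ℕ → ℝ} {Q : ℝ} {X : ∀ n, SimpleGraph (Fin n) → ℝ}
    (hp : ∀ᶠ n in atTop, p n ∈ I) (hε : Tendsto ε atTop (𝓝 0)) (hQ : 0 ≤ Q)
    (h : AAS p fun n ↦ {G | X n G ≤ (1 + ε n) * Real.log (d n) * Q}) :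
    AAS p fun n ↦ {G | X n G ≤
      (1 + ε n) * (Real.log (d n) + 2 * Real.log (Real.log n)) * Q} := by
  have hloglog : ∀ᶠ n : ℕ in atTop, 0 ≤ Real.log (Real.log n) :=
    (Real.tendsto_log_atTop.comp (Real.tendsto_log_atTop.comp
      tendsto_natCast_atTop_atTop)).eventually_ge_atTop 0
  refine aas_mono hp h ?_
  filter_upwards [hε.eventually_const_le neg_one_lt_zero, hloglog]
    with n hε hloglog G hG
  have hε' : 0 ≤ 1 + ε n := by linarith
  refine hG.out.trans ?_
  gcongr
  linarith

end SensorCount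

end LocalizationGame

open LocalizationGame

theorem stmt13_localization_upper_bound_constant_c_general
    {p d : ℕ → ℝ} {i : ℕ → ℕ} {c : ℕ → ℝ} (hp : ∀ᶠ n in atTop, 0 ≤ p n)
    (hd : ∀ n, d n = p n * n) (hc : ∀ n, c n = d n ^ i n / n)
    (hlog : Tendsto (fun n : ℕ ↦ (i n : ℝ) ^ 2 * Real.log n / d n) atTop (𝓝 0))
    (hdn : Tendsto (fun n : ℕ ↦ d n / n) atTop (𝓝 0))
    {A : ℝ} (hA : 0 < A) (hcA : Tendsto c atTop (𝓝 A)) :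
    ∃ ε : ℕ → ℝ, Tendsto ε atTop (𝓝 0) ∧ AAS p fun n ↦ {G | (localizationNumber G : ℝ) ≤
      (1 + ε n) * Real.log (d n) * (Real.exp A / (1 - Real.exp (-A)))} := by
  have hq0 := one_sub_exp_neg_mul_exp_neg_pos hA
  have hdT := tendsto_degree_atTop (eventually_degree_pos hd hc hp hA hcA)
    (eventually_exponent_ne_zero hc hA hcA) hlog
  obtain ⟨L, hL, hζ⟩ := exists_sensor_bound hd hc hp hlog hdn hA hcA
  obtain ⟨ε, hε, hsensors⟩ := exists_eq_one_add_mul (inv_ne_zero hq0.ne')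
    (tendsto_sensors_div_log hdT hL hq0.ne')
    ((Real.tendsto_log_atTop.comp hdT).eventually_ne_atTop 0)
  refine ⟨ε, hε, aas_mono (eventually_mem_unitInterval hd hp hdn) hζ ?_⟩
  rw [← inv_one_sub_exp_neg_mul_exp_neg]
  exact hsensors.mono fun n hn G hG ↦ hG.out.trans_eq hn

theorem stmt13_localization_upper_bound_constant_c
    (p d : ℕ → ℝ) (i : ℕ → ℕ) (c : ℕ → ℝ)
    (hd : ∀ n, d n = p n * n)
    (hc : ∀ n, c n = d n ^ i n / n)
    (hlog3 : Filter.Tendsto (fun n : ℕ => (Real.log n) ^ 3 / d n) Filter.atTop (nhds 0))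
    (hdn : Filter.Tendsto (fun n : ℕ => d n / n) Filter.atTop (nhds 0))
    (himax : ∀ᶠ n : ℕ in Filter.atTop,
      c n ≤ 3 * Real.log n ∧ 3 * Real.log n < d n ^ (i n + 1) / n)
    (A : ℝ) (hA : 0 < A)
    (hcA : Filter.Tendsto c Filter.atTop (nhds A)) :
    ∃ ε : ℕ → ℝ, Filter.Tendsto ε Filter.atTop (nhds 0) ∧
      AAS p (fun n : ℕ =>
        {G : SimpleGraph (Fin n) |
          (localizationNumber G : ℝ)
            ≤ (1 + ε n) * (Real.log (d n) + 2 * Real.log (Real.log n))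
                * (Real.exp A / (1 - Real.exp (-A)))}) := by
  have hd0 := eventually_degree_pos_of_pow_succ_div_pos hc hA hcA
    (himax.mono fun n h ↦ h.2.trans_le' (by have := Real.log_natCast_nonneg n; positivity))
  have hp : ∀ᶠ n in atTop, 0 ≤ p n :=
    hd0.mono fun n h ↦ (pos_of_mul_pos_left (hd n ▸ h) n.cast_nonneg).le
  obtain ⟨ε, hε, hζ⟩ := stmt13_localization_upper_bound_constant_c_general hp hd hc
    (tendsto_exponent_sq_mul_log_div hd0 hc hcA hlog3) hdn hA hcA
  exact ⟨ε, hε, aas_le_mul_log_add_of_aas_le_mul_log (eventually_mem_unitInterval hd hp hdn) hε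
    (div_nonneg (Real.exp_nonneg A) (by simpa using hA.le)) hζ⟩
end

section
/- Suppose d = d(n) := p(n)·n satisfies (log n)^3 ≪ d ≪ n. Let i = i(n) ∈ ℕ be the largest integer such that c = c(n) := d^i/n ≤ 3·log n, and suppose c → ∞ and c − (log d − log log d) → −∞ as n → ∞. Then asymptotically almost surely, for G ∈ G(n,p): ζ(G) ≤ (1 + o(1))·(log d + 2·log log n)·e^c. -/
open Filter SimpleGraph Set
open scoped Topology

/-!
The cops keep track of the set of vertices where the robber can be. If every two vertices are
distinguished by their distances to at least a proportion `q` of all vertices, then `k` random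
sensors fail to resolve a given pair with probability at most `exp (-q k)`. Hence some choice of
sensors splits the candidate set `W` into classes `C` with `|C|² ≤ 2 |W|² exp (-q k)`, and the
robber's next move leads to at most `D |C|` candidates, where `D` bounds the size of closed
neighbourhoods. This is less than `|W|` if `2 D² exp (-q k) < 1`.

In `G(n, p)` closed neighbourhoods have size at most `(1 + o(1)) d`, and balls grow by factors
`(1 + o(1)) d` up to radius `i - 1`. Given the ball of radius `i - 1` around a vertex, the remaining
vertices are independently at distance more than `i`, with probability about `exp (-p d ^ (i - 1))`,
which is `exp (-c)`. So `(1 + o(1)) n exp (-c)` vertices are at distance more than `i` from a given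
vertex, but only about `n exp (-2 c) = o(n exp (-c))` are at distance more than `i` from both of two
vertices. A vertex at distance more than `i` from exactly one of `u` and `v` distinguishes them,
whence `q = (2 + o(1)) exp (-c)`.
-/

open MeasureTheory ProbabilityTheory
open scoped Finset unitInterval

section Neighborhoods

variable {V : Type*} [Fintype V] (G : SimpleGraph V)

open scoped Classical in
/-- The closed neighbourhood `N[A]`: the vertices the robber can occupy one move after being
in `A`. -/
noncomputable def closedNbhd (A : Finset V) : Finset V := {v | v ∈ A ∨ ∃ a ∈ A, G.Adj a v}

open scoped Classical in
/-- The ball of radius `j` around a finite set of vertices: `gBall` as a finite set. -/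
noncomputable def ballFinset (A : Finset V) (j : ℕ) : Finset V := {v | v ∈ gBall G A j}

variable {G} {A B : Finset V} {u v w : V} {j : ℕ}

lemma mem_closedNbhd : v ∈ closedNbhd G A ↔ v ∈ A ∨ ∃ a ∈ A, G.Adj a v := by
  simp [closedNbhd]

lemma mem_ballFinset : v ∈ ballFinset G A j ↔ ∃ a ∈ A, G.edist a v ≤ j := by
  simp [ballFinset, gBall]

lemma subset_closedNbhd : A ⊆ closedNbhd G A := fun _ hv => mem_closedNbhd.2 (.inl hv)

lemma ballFinset_zero : ballFinset G A 0 = A := by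
  ext v
  simp [mem_ballFinset]

omit [Fintype V] in
lemma edist_le_succ_iff :
    G.edist u v ≤ (j + 1 : ℕ) ↔ G.edist u v ≤ j ∨ ∃ w, G.edist u w ≤ j ∧ G.Adj w v := by
  constructor
  · intro h
    obtain ⟨walk, hwalk⟩ := exists_walk_of_edist_ne_top (ne_top_of_le_ne_top (by simp) h)
    rw [← hwalk, Nat.cast_le] at h
    induction walk using Walk.concatRec with
    | Hnil => simp
    | @Hconcat u' w v' walk hadj _ =>
      rw [Walk.length_concat] at h
      exact .inr ⟨w, (edist_le walk).trans (by exact_mod_cast Nat.le_of_succ_le_succ h), hadj⟩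
  · rintro (h | ⟨w, hw, hadj⟩)
    · exact h.trans (by exact_mod_cast j.le_succ)
    · calc G.edist u v ≤ G.edist u w + G.edist w v := G.edist_triangle
        _ ≤ j + 1 := add_le_add hw (edist_le_one_iff_adj_or_eq.2 (.inl hadj))
        _ = (j + 1 : ℕ) := by push_cast; rfl

lemma ballFinset_succ : ballFinset G A (j + 1) = closedNbhd G (ballFinset G A j) := by
  ext v
  simp only [mem_closedNbhd, mem_ballFinset, edist_le_succ_iff]
  grind

lemma ballFinset_mono : Monotone (ballFinset G A) :=
  monotone_nat_of_le_succ fun j => by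
    rw [ballFinset_succ]
    exact subset_closedNbhd

lemma ballFinset_union [DecidableEq V] :
    ballFinset G (A ∪ B) j = ballFinset G A j ∪ ballFinset G B j := by
  ext v
  simp only [mem_ballFinset, Finset.mem_union]
  grind

lemma card_closedNbhd_le {D : ℝ} (hD : ∀ v, (#(closedNbhd G {v}) : ℝ) ≤ D) (A : Finset V) :
    (#(closedNbhd G A) : ℝ) ≤ D * #A := by
  classical
  have hcover : closedNbhd G A = A.biUnion fun a => closedNbhd G {a} := by
    ext v
    simp only [mem_closedNbhd, Finset.mem_biUnion, Finset.mem_singleton, exists_eq_left]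
    grind
  calc (#(closedNbhd G A) : ℝ) ≤ ∑ a ∈ A, (#(closedNbhd G {a}) : ℝ) := by
        rw [hcover]
        exact_mod_cast Finset.card_biUnion_le
    _ ≤ ∑ _a ∈ A, D := Finset.sum_le_sum fun a _ => hD a
    _ = D * #A := by rw [Finset.sum_const, nsmul_eq_mul, mul_comm]

lemma card_ballFinset_le {D : ℝ} (hD0 : 0 ≤ D) (hD : ∀ v, (#(closedNbhd G {v}) : ℝ) ≤ D)
    (A : Finset V) (j : ℕ) : (#(ballFinset G A j) : ℝ) ≤ D ^ j * #A := by
  induction j with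
  | zero => simp [ballFinset_zero]
  | succ j ih =>
    calc (#(ballFinset G A (j + 1)) : ℝ) ≤ D * #(ballFinset G A j) := by
          rw [ballFinset_succ]
          exact card_closedNbhd_le hD _
      _ ≤ D * (D ^ j * #A) := by gcongr
      _ = D ^ (j + 1) * #A := by ring

lemma pow_mul_card_le_card_ballFinset {K : ℝ} (hK : 0 ≤ K) (A : Finset V) (j : ℕ)
    (hexp : ∀ i < j, K * #(ballFinset G A i) ≤ #(ballFinset G A (i + 1))) :
    K ^ j * #A ≤ #(ballFinset G A j) := by
  induction j with
  | zero => simp [ballFinset_zero]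
  | succ j ih =>
    calc K ^ (j + 1) * #A = K * (K ^ j * #A) := by ring
      _ ≤ K * #(ballFinset G A j) := by gcongr; exact ih fun i hi => hexp i (by omega)
      _ ≤ #(ballFinset G A (j + 1)) := hexp j j.lt_succ_self

lemma pow_succ_mul_card_le_card_sdiff_ballFinset [DecidableEq V] {D K s : ℝ} {m : ℕ}
    (hD1 : 1 ≤ D) (hD : ∀ v, (#(closedNbhd G {v}) : ℝ) ≤ D) (hK : 0 ≤ K)
    (hexp : ∀ A : Finset V, #A ≤ s → (1 + K) * #A ≤ #(closedNbhd G A)) (hs : D ^ m * #A ≤ s) :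
    K ^ (m + 1) * #A ≤ #(ballFinset G A (m + 1) \ ballFinset G A m) := by
  have hgrow : ∀ i ≤ m, (1 + K) * #(ballFinset G A i) ≤ #(ballFinset G A (i + 1)) := by
    intro i hi
    rw [ballFinset_succ]
    refine hexp _ ((card_ballFinset_le (zero_le_one.trans hD1) hD A i).trans (le_trans ?_ hs))
    gcongr
  have hball : K ^ m * #A ≤ #(ballFinset G A m) :=
    pow_mul_card_le_card_ballFinset hK A m fun i hi => (hgrow i hi.le).trans' (by gcongr; simp)
  calc K ^ (m + 1) * #A = K * (K ^ m * #A) := by ring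
    _ ≤ K * #(ballFinset G A m) := by gcongr
    _ ≤ #(ballFinset G A (m + 1) \ ballFinset G A m) := by
        rw [Finset.cast_card_sdiff (ballFinset_mono m.le_succ)]
        linarith [hgrow m le_rfl]

end Neighborhoods

section Game

lemma exists_card_eq_card_filter_le {V ι : Type*} [Fintype V] [DecidableEq V] (Q : Finset ι)
    (r : ι → V → Prop) [∀ x, DecidablePred (r x)] {q : ℝ}
    (hr : ∀ x ∈ Q, (#{s | r x s} : ℝ) ≤ (1 - q) * Fintype.card V) {k : ℕ}
    (hk : k ≤ Fintype.card V) :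
    ∃ S : Finset V, #S = k ∧ (#{x ∈ Q | ∀ s ∈ S, r x s} : ℝ) ≤ #Q * Real.exp (-(q * k)) := by
  have htuples : Fintype.card (Fin k → V) = Fintype.card V ^ k := by simp
  have havg : ∑ f : Fin k → V, (#{x ∈ Q | ∀ i, r x (f i)} : ℝ) ≤
      ∑ _f : Fin k → V, #Q * Real.exp (-(q * k)) := by
    have hfix (x : ι) : #{f : Fin k → V | ∀ i, r x (f i)} = #{s | r x s} ^ k := by
      rw [← Fintype.card_piFinset_const]
      congr 1
      ext f
      simp
    calc ∑ f : Fin k → V, (#{x ∈ Q | ∀ i, r x (f i)} : ℝ)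
        = ∑ x ∈ Q, (#{s | r x s} : ℝ) ^ k := by
          simp_rw [← Nat.cast_pow, ← hfix]
          exact_mod_cast Finset.sum_card_bipartiteAbove_eq_sum_card_bipartiteBelow
            fun (f : Fin k → V) x => ∀ i, r x (f i)
      _ ≤ ∑ _x ∈ Q, (Real.exp (-q) * Fintype.card V) ^ k := by
          gcongr with x hx
          exact (hr x hx).trans (by gcongr; exact Real.one_sub_le_exp_neg q)
      _ = ∑ _f : Fin k → V, #Q * Real.exp (-(q * k)) := by
          rw [Finset.sum_const, Finset.sum_const, Finset.card_univ, htuples, nsmul_eq_mul,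
            nsmul_eq_mul, mul_pow, ← Real.exp_nat_mul]
          push_cast
          ring_nf
  have : Nonempty (Fin k → V) := by
    rw [← Fintype.card_pos_iff, htuples]
    rcases k.eq_zero_or_pos with rfl | hk0
    · simp
    · exact pow_pos (hk0.trans_le hk) k
  obtain ⟨f, -, hf⟩ := Finset.exists_le_of_sum_le Finset.univ_nonempty havg
  obtain ⟨S, himage, hS⟩ := Finset.exists_superset_card_eq
    (s := Finset.univ.image f) (n := k)
    (by simpa using Finset.card_image_le (s := Finset.univ) (f := f)) hk
  refine ⟨S, hS, le_trans ?_ hf⟩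
  gcongr with x
  exact fun h i => h _ (himage (Finset.mem_image_of_mem f (Finset.mem_univ i)))

variable {V : Type*} [Fintype V] [DecidableEq V] {G : SimpleGraph V}

variable (G) in
/-- The positions in `W` that a probe of `S` does not distinguish from `v`. -/
noncomputable def probeClass (S W : Finset V) (v : V) : Finset V :=
  {u ∈ W | probe G S u = probe G S v}

lemma mem_probeClass {S W : Finset V} {u v : V} :
    u ∈ probeClass G S W v ↔ u ∈ W ∧ probe G S u = probe G S v := by
  simp [probeClass]

omit [Fintype V] [DecidableEq V] in
lemma probe_eq_probe_iff {S : Finset V} {u v : V} :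
    probe G S u = probe G S v ↔ ∀ s ∈ S, G.dist s u = G.dist s v := by
  simp only [probe, Prod.mk.injEq, true_and, funext_iff]
  grind

/-- The positions still possible after a history of probes, when the cops choose `sensors W`
whenever `W` is the set of possible positions. -/
noncomputable def candidates (G : SimpleGraph V) (sensors : Finset V → Finset V)
    (history : List (Finset V × (V → ℕ))) : Finset V :=
  history.foldl (fun W x => closedNbhd G {u ∈ W | probe G (sensors W) u = x}) Finset.univ

/-- The strategy that probes `sensors W` whenever `W` is the set of possible positions. -/
noncomputable def candidateStrategy (G : SimpleGraph V) (sensors : Finset V → Finset V) :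
    CopStrategy V :=
  fun history => sensors (candidates G sensors history)

variable {sensors : Finset V → Finset V} {w w' : ℕ → V} {t : ℕ}

variable (G sensors w t) in
lemma candidates_gameHistory_succ :
    candidates G sensors (gameHistory G (candidateStrategy G sensors) w (t + 1)) =
      let W := candidates G sensors (gameHistory G (candidateStrategy G sensors) w t)
      closedNbhd G (probeClass G (sensors W) W (w t)) := by
  simp only [candidates, gameHistory, List.foldl_append, List.foldl_cons, List.foldl_nil]
  rfl

lemma mem_candidates_gameHistory (hw : IsRobberWalk G w) (t : ℕ) :
    w t ∈ candidates G sensors (gameHistory G (candidateStrategy G sensors) w t) := by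
  induction t with
  | zero => simp [candidates, gameHistory]
  | succ t ih =>
    rw [candidates_gameHistory_succ, mem_closedNbhd]
    simp only [mem_probeClass]
    rcases hw t with hstay | hadj
    · exact .inl ⟨hstay ▸ ih, hstay ▸ rfl⟩
    · exact .inr ⟨w t, ⟨ih, rfl⟩, hadj⟩

lemma mem_probeClass_of_gameHistory_eq (hw' : IsRobberWalk G w')
    (hhist : gameHistory G (candidateStrategy G sensors) w' (t + 1) =
      gameHistory G (candidateStrategy G sensors) w (t + 1)) :
    let W := candidates G sensors (gameHistory G (candidateStrategy G sensors) w t)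
    w' t ∈ probeClass G (sensors W) W (w t) := by
  obtain ⟨hprefix, hlast⟩ := List.append_inj' hhist rfl
  have hmem := mem_candidates_gameHistory (sensors := sensors) hw' t
  rw [hprefix] at hmem hlast
  exact mem_probeClass.2 ⟨hmem, List.singleton_injective hlast⟩

lemma copsWin_of_forall_exists_sensors {k : ℕ}
    (h : ∀ W : Finset V, ∃ S : Finset V, #S = k ∧
      ∀ v, 1 < #(probeClass G S W v) → #(closedNbhd G (probeClass G S W v)) < #W) :
    CopsWin G k := by
  choose sensors hcard hshrink using h
  refine ⟨candidateStrategy G sensors, fun history => hcard _, fun w hw => ?_⟩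
  by_contra! hescape
  have hdec (t : ℕ) : #(candidates G sensors
      (gameHistory G (candidateStrategy G sensors) w (t + 1))) <
      #(candidates G sensors (gameHistory G (candidateStrategy G sensors) w t)) := by
    obtain ⟨w', hw', hhist, hne⟩ := hescape t
    rw [candidates_gameHistory_succ]
    exact hshrink _ _ (Finset.one_lt_card.2 ⟨w' t, mem_probeClass_of_gameHistory_eq hw' hhist,
      w t, mem_probeClass_of_gameHistory_eq hw rfl, hne⟩)
  exact not_strictAnti_of_wellFoundedLT
    (fun t => #(candidates G sensors (gameHistory G (candidateStrategy G sensors) w t)))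
    (strictAnti_nat_of_succ_lt hdec)

end Game

section Resolving

variable {V : Type*} [Fintype V] [DecidableEq V] {G : SimpleGraph V} {u v s : V} {j k : ℕ}

omit [DecidableEq V] in
lemma dist_ne_dist_of_mem_ballFinset (hv : s ∈ ballFinset G {v} j) (hu : s ∉ ballFinset G {u} j)
    (hs : s ≠ v) : G.dist s u ≠ G.dist s v := by
  simp only [mem_ballFinset, Finset.mem_singleton, exists_eq_left, edist_comm (v := s)] at hu hv
  have hreach : G.Reachable s v := reachable_of_edist_ne_top (ne_top_of_le_ne_top (by simp) hv)
  intro heq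
  have hreach' : G.Reachable s u :=
    Reachable.of_dist_ne_zero (heq ▸ (hreach.pos_dist_of_ne hs).ne')
  rw [← hreach'.coe_dist_eq_edist, heq, hreach.coe_dist_eq_edist] at hu
  exact hu hv

variable (G u v j) in
lemma card_compl_ballFinset_add_le :
    #(ballFinset G {u} j)ᶜ + #(ballFinset G {v} j)ᶜ ≤
      #{s | G.dist s u ≠ G.dist s v} + 2 * #(ballFinset G {u, v} j)ᶜ + 2 := by
  set R : Finset V := {s | G.dist s u ≠ G.dist s v}
  set Fu := (ballFinset G {u} j)ᶜ
  set Fv := (ballFinset G {v} j)ᶜ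
  have hinter : (ballFinset G {u, v} j)ᶜ = Fu ∩ Fv := by
    rw [Finset.insert_eq, ballFinset_union, Finset.compl_union]
  have hsub : Fu ∪ Fv ⊆ R ∪ {u, v} ∪ (Fu ∩ Fv) := by
    intro s hs
    have hu := dist_ne_dist_of_mem_ballFinset (G := G) (s := s) (v := u) (u := v) (j := j)
    have hv := dist_ne_dist_of_mem_ballFinset (G := G) (s := s) (v := v) (u := u) (j := j)
    simp only [R, Fu, Fv, Finset.mem_union, Finset.mem_inter, Finset.mem_compl, Finset.mem_filter,
      Finset.mem_univ, Finset.mem_insert, Finset.mem_singleton] at hs ⊢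
    grind
  have hcard : #(Fu ∪ Fv) ≤ #R + 2 + #(Fu ∩ Fv) :=
    calc #(Fu ∪ Fv) ≤ _ := Finset.card_le_card hsub
      _ ≤ #(R ∪ {u, v}) + #(Fu ∩ Fv) := Finset.card_union_le _ _
      _ ≤ _ := by
        gcongr
        exact (Finset.card_union_le _ _).trans (by gcongr; exact Finset.card_le_two)
  rw [hinter]
  have hincl := Finset.card_union_add_card_inter Fu Fv
  omega

omit [DecidableEq V] in
lemma copsWin_of_card_resolving {D q : ℝ} (hD : ∀ v, (#(closedNbhd G {v}) : ℝ) ≤ D)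
    (hq : ∀ u v, u ≠ v → q * Fintype.card V ≤ #{s | G.dist s u ≠ G.dist s v})
    (hk : k ≤ Fintype.card V) (hDq : 2 * D ^ 2 * Real.exp (-(q * k)) < 1) : CopsWin G k := by
  classical
  refine copsWin_of_forall_exists_sensors fun W => ?_
  have hunresolved (x : V × V) (hx : x ∈ W.offDiag) :
      (#{s | G.dist s x.1 = G.dist s x.2} : ℝ) ≤ (1 - q) * Fintype.card V := by
    have hsplit : (#{s | G.dist s x.1 = G.dist s x.2} : ℝ) + #{s | G.dist s x.1 ≠ G.dist s x.2} =
        Fintype.card V := by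
      exact_mod_cast Finset.card_filter_add_card_filter_not (s := Finset.univ)
        fun s => G.dist s x.1 = G.dist s x.2
    linarith [hq _ _ (Finset.mem_offDiag.1 hx).2.2]
  obtain ⟨S, hS, hpairs⟩ := exists_card_eq_card_filter_le W.offDiag
    (fun x s => G.dist s x.1 = G.dist s x.2) hunresolved hk
  refine ⟨S, hS, fun v hC => ?_⟩
  set C := probeClass G S W v
  have hCW : C.offDiag ⊆ {x ∈ W.offDiag | ∀ s ∈ S, G.dist s x.1 = G.dist s x.2} := by
    intro x hx
    simp only [C, Finset.mem_offDiag, mem_probeClass] at hx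
    simp only [Finset.mem_filter, Finset.mem_offDiag]
    exact ⟨⟨hx.1.1, hx.2.1.1, hx.2.2⟩, probe_eq_probe_iff.1 (hx.1.2.trans hx.2.1.2.symm)⟩
  have hC2 : (2 : ℝ) ≤ #C := by exact_mod_cast hC
  have hpairsC : (#C : ℝ) ^ 2 ≤ 2 * (#W ^ 2 * Real.exp (-(q * k))) :=
    calc (#C : ℝ) ^ 2 ≤ 2 * #C.offDiag := by
          rw [Finset.offDiag_card, Nat.cast_sub (Nat.le_mul_self _)]
          push_cast
          nlinarith
      _ ≤ 2 * (#W.offDiag * Real.exp (-(q * k))) := by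
          gcongr
          exact (Nat.cast_le.2 (Finset.card_le_card hCW)).trans hpairs
      _ ≤ 2 * (#W ^ 2 * Real.exp (-(q * k))) := by
          gcongr
          rw [Finset.offDiag_card, sq]
          exact_mod_cast Nat.sub_le _ _
  have hW : (0 : ℝ) < #W := by
    refine (by linarith : (0 : ℝ) < #C).trans_le ?_
    exact_mod_cast Finset.card_le_card (Finset.filter_subset _ W)
  refine Nat.cast_lt.1 (lt_of_pow_lt_pow_left₀ 2 hW.le ?_)
  calc (#(closedNbhd G C) : ℝ) ^ 2 ≤ (D * #C) ^ 2 := by gcongr; exact card_closedNbhd_le hD C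
    _ ≤ D ^ 2 * (2 * (#W ^ 2 * Real.exp (-(q * k)))) := by rw [mul_pow]; gcongr
    _ = (2 * D ^ 2 * Real.exp (-(q * k))) * #W ^ 2 := by ring
    _ < #W ^ 2 := mul_lt_of_lt_one_left (by positivity) hDq

end Resolving

section LastLayer

variable {V : Type*} [Fintype V] {G H : SimpleGraph V} {A T : Finset V} {j m : ℕ}

lemma closedNbhd_congr (h : ∀ a ∈ A, ∀ v, G.Adj a v ↔ H.Adj a v) :
    closedNbhd G A = closedNbhd H A := by
  ext v
  simp only [mem_closedNbhd]
  grind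

lemma ballFinset_congr (h : ∀ a ∈ ballFinset G A m, ∀ v, G.Adj a v ↔ H.Adj a v)
    (hj : j ≤ m + 1) : ballFinset G A j = ballFinset H A j := by
  induction j with
  | zero => rw [ballFinset_zero, ballFinset_zero]
  | succ j ih =>
    rw [ballFinset_succ, ballFinset_succ, ← ih (by omega)]
    exact closedNbhd_congr fun a ha => h a (ballFinset_mono (by omega) ha)

variable (G A T) in
open scoped Classical in
/-- The vertices of `T` without a neighbour in `A`. -/
noncomputable def nonNeighbors : Finset V := {t ∈ T | ∀ a ∈ A, ¬ G.Adj a t}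

lemma mem_nonNeighbors {t : V} : t ∈ nonNeighbors G A T ↔ t ∈ T ∧ ∀ a ∈ A, ¬ G.Adj a t := by
  simp [nonNeighbors]

variable [DecidableEq V]

lemma compl_ballFinset_add_two :
    (ballFinset G A (m + 2))ᶜ =
      nonNeighbors G (ballFinset G A (m + 1) \ ballFinset G A m) (ballFinset G A (m + 1))ᶜ := by
  ext t
  simp only [mem_nonNeighbors, ballFinset_succ, mem_closedNbhd, Finset.mem_compl,
    Finset.mem_sdiff]
  grind

end LastLayer

section Concentration

variable {Ω ι : Type*} {mΩ : MeasurableSpace Ω} {μ : Measure Ω} {A : ι → Set Ω} {T : Finset ι}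
  {q ε x m M : ℝ}

lemma exp_sub_one_le_add_sq (hx : |x| ≤ 1) : Real.exp x - 1 ≤ x + x ^ 2 := by
  linarith [(abs_le.1 (Real.abs_exp_sub_one_sub_id_le hx)).2]

lemma iIndepSet_compl (hA : iIndepSet A μ) : iIndepSet (fun i => (A i)ᶜ) μ := by
  rw [iIndepSet_iff_iIndep] at hA ⊢
  refine iIndep_of_iIndep_of_le hA fun i => MeasurableSpace.generateFrom_le ?_
  rintro _ rfl
  exact (MeasurableSpace.measurableSet_generateFrom (mem_singleton (A i))).compl

lemma mgf_indicator_one_le [IsProbabilityMeasure μ] {B : Set Ω} (hB : MeasurableSet B) (l : ℝ) :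
    mgf (B.indicator fun _ => (1 : ℝ)) μ l ≤ Real.exp (μ.real B * (Real.exp l - 1)) := by
  have hexp (ω : Ω) : Real.exp (l * B.indicator (fun _ => (1 : ℝ)) ω) =
      1 + B.indicator (fun _ => Real.exp l - 1) ω := by
    by_cases hω : ω ∈ B <;> simp [hω]
  calc mgf (B.indicator fun _ => (1 : ℝ)) μ l = 1 + μ.real B * (Real.exp l - 1) := by
        simp only [mgf, hexp]
        rw [integral_add (integrable_const _) ((integrable_const _).indicator hB),
          integral_indicator_const _ hB]
        simp
    _ ≤ Real.exp (μ.real B * (Real.exp l - 1)) := by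
        rw [add_comm]
        exact Real.add_one_le_exp _

lemma card_mul_nonneg_of_measureReal_eq (hq : ∀ i ∈ T, μ.real (A i) = q) : 0 ≤ #T * q := by
  rw [← nsmul_eq_mul, ← Finset.sum_const]
  exact Finset.sum_nonneg fun i hi => hq i hi ▸ measureReal_nonneg

variable [∀ ω, DecidablePred fun i => ω ∈ A i]

variable (A T) in
lemma card_filter_mem_eq_sum_indicator :
    (fun ω => (#{i ∈ T | ω ∈ A i} : ℝ)) = ∑ i : T, (A i).indicator fun _ => (1 : ℝ) := by
  ext ω
  rw [Finset.sum_apply, Finset.sum_coe_sort T fun i => (A i).indicator (fun _ => (1 : ℝ)) ω]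
  simp [Set.indicator_apply]

lemma mgf_card_filter_mem_le (hmeas : ∀ i, MeasurableSet (A i))
    (hA : iIndepSet (fun i : T => A i) μ) (hq : ∀ i ∈ T, μ.real (A i) = q) (l : ℝ) :
    mgf (fun ω => (#{i ∈ T | ω ∈ A i} : ℝ)) μ l ≤ Real.exp (#T * q * (Real.exp l - 1)) := by
  have := hA.isProbabilityMeasure
  calc mgf (fun ω => (#{i ∈ T | ω ∈ A i} : ℝ)) μ l
      = ∏ i : T, mgf ((A i).indicator fun _ => (1 : ℝ)) μ l := by
        rw [card_filter_mem_eq_sum_indicator]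
        exact (hA.iIndepFun_indicator (β := ℝ)).mgf_sum
          (fun i => measurable_const.indicator (hmeas i)) Finset.univ
    _ ≤ ∏ _i : T, Real.exp (q * (Real.exp l - 1)) := by
        refine Finset.prod_le_prod (fun i _ => mgf_nonneg) fun i _ => ?_
        exact hq i i.2 ▸ mgf_indicator_one_le (hmeas i) l
    _ = Real.exp (#T * q * (Real.exp l - 1)) := by
        rw [Finset.prod_const, Finset.card_univ, Fintype.card_coe, ← Real.exp_nat_mul, mul_assoc]

lemma measureReal_mul_le_mul_card_le (hmeas : ∀ i, MeasurableSet (A i))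
    (hA : iIndepSet (fun i : T => A i) μ) (hq : ∀ i ∈ T, μ.real (A i) = q) (l m : ℝ) :
    μ.real {ω | l * m ≤ l * #{i ∈ T | ω ∈ A i}} ≤
      Real.exp (#T * q * (Real.exp l - 1) - l * m) := by
  have := hA.isProbabilityMeasure
  have hN : Measurable fun ω => (#{i ∈ T | ω ∈ A i} : ℝ) := by
    rw [card_filter_mem_eq_sum_indicator, Finset.sum_fn]
    exact Finset.measurable_sum _ fun i _ => measurable_const.indicator (hmeas i)
  have hint : Integrable (fun ω => Real.exp (1 * (l * #{i ∈ T | ω ∈ A i}))) μ := by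
    refine integrable_exp_mul_of_le 1 (|l| * #T) zero_le_one (hN.const_mul l).aemeasurable
      (ae_of_all _ fun ω => ?_)
    gcongr
    · exact le_abs_self l
    · exact Finset.filter_subset _ T
  calc μ.real {ω | l * m ≤ l * #{i ∈ T | ω ∈ A i}}
      ≤ Real.exp (-1 * (l * m)) * mgf (fun ω => l * (#{i ∈ T | ω ∈ A i} : ℝ)) μ 1 :=
        measure_ge_le_exp_mul_mgf _ zero_le_one hint
    _ ≤ Real.exp (-1 * (l * m)) * Real.exp (#T * q * (Real.exp l - 1)) := by
        rw [mgf_const_mul, mul_one]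
        gcongr
        exact mgf_card_filter_mem_le hmeas hA hq l
    _ = Real.exp (#T * q * (Real.exp l - 1) - l * m) := by
        rw [← Real.exp_add]
        ring_nf

lemma measureReal_card_ge_le_exp (hmeas : ∀ i, MeasurableSet (A i))
    (hA : iIndepSet (fun i : T => A i) μ) (hq : ∀ i ∈ T, μ.real (A i) = q) (hM : #T * q ≤ M)
    (hε0 : 0 ≤ ε) (hε2 : ε ≤ 2) :
    μ.real {ω | (1 + ε) * M ≤ (#{i ∈ T | ω ∈ A i} : ℝ)} ≤ Real.exp (-(ε ^ 2 * M / 4)) := by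
  have := hA.isProbabilityMeasure
  calc μ.real {ω | (1 + ε) * M ≤ (#{i ∈ T | ω ∈ A i} : ℝ)}
      ≤ μ.real {ω | ε / 2 * ((1 + ε) * M) ≤ ε / 2 * #{i ∈ T | ω ∈ A i}} :=
        measureReal_mono fun ω (hω : (_ : ℝ) ≤ _) =>
          mul_le_mul_of_nonneg_left hω (by positivity)
    _ ≤ Real.exp (#T * q * (Real.exp (ε / 2) - 1) - ε / 2 * ((1 + ε) * M)) :=
        measureReal_mul_le_mul_card_le hmeas hA hq _ _
    _ ≤ Real.exp (M * (ε / 2 + (ε / 2) ^ 2) - ε / 2 * ((1 + ε) * M)) := by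
        have hexp : 0 ≤ Real.exp (ε / 2) - 1 := by
          linarith [Real.add_one_le_exp (ε / 2)]
        have hM0 : 0 ≤ M := (card_mul_nonneg_of_measureReal_eq hq).trans hM
        gcongr
        exact exp_sub_one_le_add_sq (by rw [abs_of_nonneg] <;> linarith)
    _ = Real.exp (-(ε ^ 2 * M / 4)) := by ring_nf

lemma measureReal_card_lt_le_exp (hmeas : ∀ i, MeasurableSet (A i))
    (hA : iIndepSet (fun i : T => A i) μ) (hq : ∀ i ∈ T, μ.real (A i) = q) (hM : M ≤ #T * q)
    (hM0 : 0 ≤ M) (hε0 : 0 ≤ ε) (hε2 : ε ≤ 2) :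
    μ.real {ω | (#{i ∈ T | ω ∈ A i} : ℝ) < (1 - ε) * M} ≤ Real.exp (-(ε ^ 2 * M / 4)) := by
  have := hA.isProbabilityMeasure
  calc μ.real {ω | (#{i ∈ T | ω ∈ A i} : ℝ) < (1 - ε) * M}
      ≤ μ.real {ω | -(ε / 2) * ((1 - ε) * M) ≤ -(ε / 2) * #{i ∈ T | ω ∈ A i}} :=
        measureReal_mono fun ω (hω : (_ : ℝ) < _) =>
          mul_le_mul_of_nonpos_left hω.le (by linarith)
    _ ≤ Real.exp (#T * q * (Real.exp (-(ε / 2)) - 1) - -(ε / 2) * ((1 - ε) * M)) :=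
        measureReal_mul_le_mul_card_le hmeas hA hq _ _
    _ ≤ Real.exp (#T * q * (-(ε / 2) + (-(ε / 2)) ^ 2) - -(ε / 2) * ((1 - ε) * M)) := by
        have hTq : 0 ≤ #T * q := hM0.trans hM
        gcongr
        exact exp_sub_one_le_add_sq (by rw [abs_neg, abs_of_nonneg] <;> linarith)
    _ ≤ Real.exp (M * (-(ε / 2) + (-(ε / 2)) ^ 2) - -(ε / 2) * ((1 - ε) * M)) := by
        refine Real.exp_le_exp.2 (sub_le_sub_right (mul_le_mul_of_nonpos_right hM ?_) _)
        nlinarith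
    _ = Real.exp (-(ε ^ 2 * M / 4)) := by ring_nf

lemma measureReal_card_ge_le_exp_two_mul_sub (hmeas : ∀ i, MeasurableSet (A i))
    (hA : iIndepSet (fun i : T => A i) μ) (hq : ∀ i ∈ T, μ.real (A i) = q)
    (hM : #T * q ≤ M) (m : ℝ) :
    μ.real {ω | m ≤ #{i ∈ T | ω ∈ A i}} ≤ Real.exp (2 * M - m) := by
  have hTq := card_mul_nonneg_of_measureReal_eq hq
  have hbound := measureReal_mul_le_mul_card_le hmeas hA hq 1 m
  simp only [one_mul] at hbound
  refine hbound.trans (Real.exp_le_exp.2 ?_)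
  nlinarith [Real.exp_one_lt_d9, Real.add_one_le_exp 1]

lemma measureReal_mem_preimage_le {α : Type*} [Finite α] [MeasurableSpace α]
    [MeasurableSingletonClass α] [IsProbabilityMeasure μ] {X : Ω → α} (hX : Measurable X)
    {s : Set α} {B : α → Set Ω} {β : ℝ} (hβ : 0 ≤ β)
    (hindep : ∀ x ∈ s, IndepSet (X ⁻¹' {x}) (B x) μ) (hB : ∀ x ∈ s, μ.real (B x) ≤ β) :
    μ.real {ω | X ω ∈ s ∧ ω ∈ B (X ω)} ≤ β := by
  classical
  have := Fintype.ofFinite α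
  have hsub : {ω | X ω ∈ s ∧ ω ∈ B (X ω)} ⊆ ⋃ x ∈ ({x | x ∈ s} : Finset α), X ⁻¹' {x} ∩ B x := by
    rintro ω ⟨hs, hω⟩
    simp [hs, hω]
  calc μ.real {ω | X ω ∈ s ∧ ω ∈ B (X ω)}
      ≤ ∑ x ∈ ({x | x ∈ s} : Finset α), μ.real (X ⁻¹' {x} ∩ B x) :=
        (measureReal_mono hsub (measure_ne_top μ _)).trans (measureReal_biUnion_finset_le _ _)
    _ ≤ ∑ x ∈ ({x | x ∈ s} : Finset α), μ.real (X ⁻¹' {x}) * β := by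
        refine Finset.sum_le_sum fun x hx => ?_
        have hxs : x ∈ s := by simpa using hx
        rw [measureReal_def, (hindep x hxs).measure_inter_eq_mul, ENNReal.toReal_mul]
        exact mul_le_mul_of_nonneg_left (hB x hxs) measureReal_nonneg
    _ ≤ 1 * β := by
        rw [← Finset.sum_mul, sum_measureReal_preimage_singleton]
        · gcongr
          exact measureReal_le_one
        · exact fun x _ => hX (measurableSet_singleton x)
    _ = β := one_mul β

end Concentration

section RandomGraph

open unitInterval

variable {V : Type*} {p : I}

instance instMeasurableSingletonClassSimpleGraph [Countable V] :
    MeasurableSingletonClass (SimpleGraph V) where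
  measurableSet_singleton G := by
    have hpre : {G} = Adj ⁻¹' {G.Adj} := by
      ext H
      exact adj_inj.symm
    rw [hpre]
    exact measurable_adj (measurableSet_singleton _)

lemma gnpProb_eq_binomialRandom_real (n : ℕ) (p : I) (A : Set (SimpleGraph (Fin n))) :
    gnpProb n p A = G(Fin n, p).real A := by
  classical
  calc gnpProb n p A = ∑ G with G ∈ A, G(Fin n, p).real {G} := by
        refine Finset.sum_congr rfl fun G _ => ?_
        rw [Nat.card_coe_set_eq, measureReal_def, binomialRandom_singleton, Nat.card_fin]
        simp
    _ = G(Fin n, p).real A := by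
        rw [sum_measureReal_singleton]
        simp

section Countable

variable [Countable V]

variable (V p) in
lemma binomialRandom_eq_map_infinitePi :
    G(V, p) = (Measure.infinitePi fun e : Sym2 V =>
        toNNReal p • Measure.dirac (¬ e.IsDiag) + toNNReal (σ p) • Measure.dirac False).map
      fun ω => fromEdgeSet {e | ω e} := by
  rw [binomialRandom_eq_map, setBernoulli_eq_map, Measure.map_map (by fun_prop) (by fun_prop)]
  rfl

variable (V p) in
lemma iIndepFun_mem_edgeSet :
    iIndepFun (fun (e : Sym2 V) (G : SimpleGraph V) => e ∈ G.edgeSet) G(V, p) := by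
  have hmeas : Measurable fun ω : Sym2 V → Prop => fromEdgeSet {e | ω e} := by fun_prop
  have hedge (e : Sym2 V) : Measurable fun G : SimpleGraph V => e ∈ G.edgeSet := by fun_prop
  have hindep := iIndepFun_infinitePi
    (P := fun e : Sym2 V =>
      toNNReal p • Measure.dirac (¬ e.IsDiag) + toNNReal (σ p) • Measure.dirac False)
    (X := fun e x => x ∧ ¬ e.IsDiag) fun _ => measurable_of_finite _
  rw [iIndepFun_iff_map_fun_eq_infinitePi_map fun e => by fun_prop] at hindep
  rw [iIndepFun_iff_map_fun_eq_infinitePi_map hedge, binomialRandom_eq_map_infinitePi,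
    Measure.map_map (measurable_pi_iff.2 hedge) hmeas]
  simp_rw [Measure.map_map (hedge _) hmeas]
  convert hindep using 2
  · ext ω e
    simp
  · ext e : 1
    congr 1
    ext ω
    simp

lemma binomialRandom_real_forall_notMem_edgeSet {E : Finset (Sym2 V)}
    (hE : ∀ e ∈ E, ¬ e.IsDiag) :
    G(V, p).real {G | ∀ e ∈ E, e ∉ G.edgeSet} = (1 - p) ^ #E := by
  have hmeas : Measurable fun ω : Sym2 V → Prop => fromEdgeSet {e | ω e} := by fun_prop
  have hpre : (fun ω : Sym2 V → Prop => fromEdgeSet {e | ω e}) ⁻¹'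
      {G | ∀ e ∈ E, e ∉ G.edgeSet} = Set.pi E fun _ => {False} := by
    ext ω
    simp +contextual [Set.mem_pi, hE]
  have hfalse : ∀ e ∈ E, (toNNReal p • Measure.dirac (¬ e.IsDiag) +
      toNNReal (σ p) • Measure.dirac False : Measure Prop) {False} = toNNReal (σ p) := by
    intro e he
    simp [hE e he]
  rw [binomialRandom_eq_map_infinitePi, map_measureReal_apply hmeas (by measurability), hpre,
    measureReal_def, Measure.infinitePi_pi _ fun _ _ => .of_discrete, Finset.prod_congr rfl hfalse]
  simp

lemma binomialRandom_real_forall_not_adj {S T : Finset V} (hST : Disjoint S T) :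
    G(V, p).real {G | ∀ a ∈ S, ∀ t ∈ T, ¬ G.Adj a t} = (1 - p) ^ (#S * #T) := by
  classical
  have hinj : InjOn (fun x : V × V => s(x.1, x.2)) ↑(S ×ˢ T) := by
    rintro ⟨a, t⟩ ha ⟨b, s⟩ hb hab
    simp only [Finset.coe_product, mem_prod, Finset.mem_coe] at ha hb
    rcases Sym2.eq_iff.1 hab with ⟨rfl, rfl⟩ | ⟨rfl, rfl⟩
    · rfl
    · exact absurd hb.2 (Finset.disjoint_left.1 hST ha.1)
  rw [← Finset.card_product, ← Finset.card_image_of_injOn hinj,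
    ← binomialRandom_real_forall_notMem_edgeSet]
  · congr 1
    ext G
    simp only [Finset.forall_mem_image, Finset.mem_product, Prod.forall, mem_edgeSet,
      mem_ofPred_eq]
    grind
  · simp only [Finset.mem_image, Finset.mem_product, Prod.exists]
    rintro _ ⟨a, t, ⟨ha, ht⟩, rfl⟩ (rfl : a = t)
    exact Finset.disjoint_left.1 hST ha ht

lemma binomialRandom_real_forall_not_adj_right {S T : Finset V} (hST : Disjoint S T) :
    ∀ t ∈ T, G(V, p).real {G | ∀ a ∈ S, ¬ G.Adj a t} = (1 - p) ^ #S := by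
  intro t ht
  have h := binomialRandom_real_forall_not_adj (p := p) (S := S) (T := {t})
    (hST.mono_right (by simpa using ht))
  simpa using h

variable (p) in
lemma iIndepSet_forall_not_adj [Finite V] {S T : Finset V} (hST : Disjoint S T) :
    iIndepSet (fun t : T => {G : SimpleGraph V | ∀ a ∈ S, ¬ G.Adj a t}) G(V, p) := by
  rw [iIndepSet_iff_meas_biInter fun _ => .of_discrete]
  intro U
  have hinter : ⋂ t ∈ U, {G : SimpleGraph V | ∀ a ∈ S, ¬ G.Adj a t} =
      {G | ∀ a ∈ S, ∀ t ∈ U.map (Function.Embedding.subtype _), ¬ G.Adj a t} := by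
    ext G
    simp only [Finset.mem_map, mem_iInter, mem_ofPred_eq, Function.Embedding.subtype_apply]
    grind
  have hU : Disjoint S (U.map (Function.Embedding.subtype _)) :=
    hST.mono_right (Finset.map_subtype_subset U)
  rw [← ENNReal.toReal_eq_toReal_iff' (measure_ne_top _ _)
    (ENNReal.prod_ne_top fun _ _ => measure_ne_top _ _), ENNReal.toReal_prod, hinter]
  simp only [← measureReal_def]
  rw [binomialRandom_real_forall_not_adj hU, Finset.card_map, Finset.prod_congr rfl fun (t : T) _ =>
    binomialRandom_real_forall_not_adj_right hST t t.2, Finset.prod_const, pow_mul]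

end Countable

section Neighbors

variable [Fintype V] {G : SimpleGraph V} {A S T : Finset V} {ε m M : ℝ}

open scoped Classical in
lemma nonNeighbors_eq_filter (G : SimpleGraph V) (S T : Finset V) :
    nonNeighbors G S T = {t ∈ T | G ∈ {G : SimpleGraph V | ∀ a ∈ S, ¬ G.Adj a t}} := rfl

lemma measureReal_card_nonNeighbors_ge_le_exp (hST : Disjoint S T) (hM : #T * (1 - p : ℝ) ^ #S ≤ M)
    (m : ℝ) : G(V, p).real {G | m ≤ #(nonNeighbors G S T)} ≤ Real.exp (2 * M - m) := by
  classical
  simp only [nonNeighbors_eq_filter]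
  exact measureReal_card_ge_le_exp_two_mul_sub (fun _ => .of_discrete)
    (iIndepSet_forall_not_adj p hST) (binomialRandom_real_forall_not_adj_right hST) hM m

lemma measureReal_card_nonNeighbors_lt_le_exp (hST : Disjoint S T)
    (hM : M ≤ #T * (1 - p : ℝ) ^ #S) (hM0 : 0 ≤ M) (hε0 : 0 ≤ ε) (hε2 : ε ≤ 2) :
    G(V, p).real {G | (#(nonNeighbors G S T) : ℝ) < (1 - ε) * M} ≤
      Real.exp (-(ε ^ 2 * M / 4)) := by
  classical
  simp only [nonNeighbors_eq_filter]
  exact measureReal_card_lt_le_exp (fun _ => .of_discrete)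
    (iIndepSet_forall_not_adj p hST) (binomialRandom_real_forall_not_adj_right hST) hM hM0 hε0 hε2

lemma card_closedNbhd_eq_card_add_card_filter [DecidableEq V] (G : SimpleGraph V) (A : Finset V)
    [DecidablePred fun t => G ∈ {G : SimpleGraph V | ∀ a ∈ A, ¬ G.Adj a t}ᶜ] :
    #(closedNbhd G A) =
      #A + #{t ∈ Aᶜ | G ∈ {G : SimpleGraph V | ∀ a ∈ A, ¬ G.Adj a t}ᶜ} := by
  rw [← Finset.card_union_of_disjoint]
  · congr 1
    ext t
    simp only [mem_closedNbhd, Finset.mem_union, Finset.mem_filter, Finset.mem_compl]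
    grind
  · exact Finset.disjoint_left.2 fun t ht ht' => by simp_all

lemma binomialRandom_real_compl_forall_not_adj_right [DecidableEq V] :
    ∀ t ∈ Aᶜ, G(V, p).real {G | ∀ a ∈ A, ¬ G.Adj a t}ᶜ = 1 - (1 - p) ^ #A := by
  intro t ht
  rw [probReal_compl_eq_one_sub .of_discrete,
    binomialRandom_real_forall_not_adj_right disjoint_compl_right t ht]

lemma measureReal_card_closedNbhd_ge_le_exp
    (hM : (Fintype.card V - #A) * (1 - (1 - p : ℝ) ^ #A) ≤ M) (hε0 : 0 ≤ ε) (hε2 : ε ≤ 2) :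
    G(V, p).real {G | #A + (1 + ε) * M ≤ #(closedNbhd G A)} ≤ Real.exp (-(ε ^ 2 * M / 4)) := by
  classical
  simp only [card_closedNbhd_eq_card_add_card_filter, Nat.cast_add, add_le_add_iff_left]
  refine measureReal_card_ge_le_exp (fun _ => .of_discrete)
    (iIndepSet_compl (iIndepSet_forall_not_adj p disjoint_compl_right))
    binomialRandom_real_compl_forall_not_adj_right ?_ hε0 hε2
  rwa [Finset.card_compl, Nat.cast_sub (Finset.card_le_univ A)]

lemma measureReal_card_closedNbhd_lt_le_exp
    (hM : M ≤ (Fintype.card V - #A) * (1 - (1 - p : ℝ) ^ #A)) (hM0 : 0 ≤ M) (hε0 : 0 ≤ ε)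
    (hε2 : ε ≤ 2) :
    G(V, p).real {G | #(closedNbhd G A) < #A + (1 - ε) * M} ≤ Real.exp (-(ε ^ 2 * M / 4)) := by
  classical
  simp only [card_closedNbhd_eq_card_add_card_filter, Nat.cast_add, add_lt_add_iff_left]
  refine measureReal_card_lt_le_exp (fun _ => .of_discrete)
    (iIndepSet_compl (iIndepSet_forall_not_adj p disjoint_compl_right))
    binomialRandom_real_compl_forall_not_adj_right ?_ hM0 hε0 hε2
  rwa [Finset.card_compl, Nat.cast_sub (Finset.card_le_univ A)]

end Neighbors

end RandomGraph

section Exposure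

variable {V : Type*} {p : I} {E F : Set (Sym2 V)} {𝒜 ℬ : Set (SimpleGraph V)}

/-- The event `𝒜` depends only on which of the pairs in `E` are edges. -/
def DeterminedBy (E : Set (Sym2 V)) (𝒜 : Set (SimpleGraph V)) : Prop :=
  ∀ ⦃G H : SimpleGraph V⦄, (∀ e ∈ E, e ∈ G.edgeSet ↔ e ∈ H.edgeSet) → (G ∈ 𝒜 → H ∈ 𝒜)

lemma DeterminedBy.preimage_image_eq (h : DeterminedBy E 𝒜) :
    (fun (G : SimpleGraph V) (e : E) => (e : Sym2 V) ∈ G.edgeSet) ⁻¹'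
      ((fun (G : SimpleGraph V) (e : E) => (e : Sym2 V) ∈ G.edgeSet) '' 𝒜) = 𝒜 := by
  refine (subset_preimage_image _ 𝒜).antisymm' ?_
  rintro H ⟨G, hG, hGH⟩
  exact h (fun e he => iff_of_eq (congrFun hGH ⟨e, he⟩)) hG

lemma DeterminedBy.indepSet [Finite V] (h𝒜 : DeterminedBy E 𝒜) (hℬ : DeterminedBy F ℬ)
    (hEF : Disjoint E F) : IndepSet 𝒜 ℬ G(V, p) := by
  lift E to Finset (Sym2 V) using E.toFinite
  lift F to Finset (Sym2 V) using F.toFinite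
  have hindep := (iIndepFun_mem_edgeSet V p).indepFun_finset E F (by exact_mod_cast hEF)
    fun e => by fun_prop
  rw [indepFun_iff_indepSet_preimage (measurable_of_finite _) (measurable_of_finite _)] at hindep
  rw [← h𝒜.preimage_image_eq, ← hℬ.preimage_image_eq]
  exact hindep _ _ .of_discrete .of_discrete

variable [Fintype V] {A A' S T U : Finset V} {m : ℕ}

lemma determinedBy_setOf_ballFinset_eq :
    DeterminedBy {e | ∃ a ∈ A', a ∈ e}
      {G : SimpleGraph V | (ballFinset G U m, ballFinset G U (m + 1)) = (A', A)} := by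
  intro G H hGH hG
  simp only [mem_ofPred_eq, Prod.mk.injEq] at hG ⊢
  have hadj : ∀ a ∈ ballFinset G U m, ∀ v, G.Adj a v ↔ H.Adj a v := by
    intro a ha v
    exact hGH s(a, v) ⟨a, hG.1 ▸ ha, Sym2.mem_mk_left a v⟩
  rwa [← ballFinset_congr hadj (by omega), ← ballFinset_congr hadj le_rfl]

lemma determinedBy_setOf_nonNeighbors (P : Finset V → Prop) :
    DeterminedBy {e | ∃ a ∈ S, ∃ t ∈ T, e = s(a, t)} {G | P (nonNeighbors G S T)} := by
  intro G H hGH hG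
  have heq : nonNeighbors G S T = nonNeighbors H S T := by
    ext t
    simp only [mem_nonNeighbors]
    exact and_congr_right fun ht => forall₂_congr fun a ha =>
      not_congr (hGH s(a, t) ⟨a, ha, t, ht, rfl⟩)
  rwa [mem_ofPred_eq, ← heq]

/-- Once the balls of radius `m` and `m + 1` are exposed, the pairs between the last layer and the
outside are still fresh, so they may be treated as independent. -/
lemma measureReal_ballFinset_le [DecidableEq V] (good : Set (Finset V × Finset V))
    (bad : Finset V → Prop) {β : ℝ} (hβ : 0 ≤ β)
    (hbad : ∀ A' A, A' ⊆ A → (A', A) ∈ good →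
      G(V, p).real {G | bad (nonNeighbors G (A \ A') Aᶜ)} ≤ β) :
    G(V, p).real {G | (ballFinset G U m, ballFinset G U (m + 1)) ∈ good ∧
      bad (ballFinset G U (m + 2))ᶜ} ≤ β := by
  let : MeasurableSpace (Finset V × Finset V) := ⊤
  have hfresh : ∀ x ∈ {x : Finset V × Finset V | x.1 ⊆ x.2 ∧ x ∈ good},
      Disjoint {e : Sym2 V | ∃ a ∈ x.1, a ∈ e} {e | ∃ a ∈ x.2 \ x.1, ∃ t ∈ x.2ᶜ, e = s(a, t)} := by
    rintro ⟨A', A⟩ ⟨hsub, -⟩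
    refine Set.disjoint_left.2 ?_
    rintro _ ⟨b, hb, hbe⟩ ⟨a, ha, t, ht, rfl⟩
    rw [Finset.mem_sdiff] at ha
    rw [Finset.mem_compl] at ht
    rcases Sym2.mem_iff.1 hbe with rfl | rfl
    · exact ha.2 hb
    · exact ht (hsub hb)
  have hexposed := measureReal_mem_preimage_le (μ := G(V, p)) (s := {x | x.1 ⊆ x.2 ∧ x ∈ good})
    (X := fun G => (ballFinset G U m, ballFinset G U (m + 1))) (measurable_of_finite _)
    (B := fun x => {G | bad (nonNeighbors G (x.2 \ x.1) x.2ᶜ)}) hβ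
    (fun x hx => determinedBy_setOf_ballFinset_eq.indepSet (determinedBy_setOf_nonNeighbors bad)
      (hfresh x hx))
    (fun x hx => hbad _ _ hx.1 hx.2)
  simpa [compl_ballFinset_add_two, ballFinset_mono m.le_succ] using hexposed

end Exposure

section Regime

lemma exp_neg_add_sq_le_one_sub {x : ℝ} (h0 : 0 ≤ x) (h1 : x ≤ 1 / 2) :
    Real.exp (-(x + 2 * x ^ 2)) ≤ 1 - x := by
  have hpos : 0 < 1 - x := by linarith
  rw [← Real.le_log_iff_exp_le hpos]
  refine le_trans ?_ (Real.one_sub_inv_le_log_of_pos hpos)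
  have hinv : (1 - x)⁻¹ ≤ 1 + x + 2 * x ^ 2 := by
    rw [inv_le_iff_one_le_mul₀ hpos]
    nlinarith [mul_nonneg (mul_nonneg h0 h0) (sub_nonneg.2 h1)]
  linarith

lemma mul_one_sub_le_one_sub_pow {x : ℝ} (a : ℕ) (h0 : 0 ≤ x) (h1 : x ≤ 1)
    (hxa : x * a ≤ 1) : x * a * (1 - x * a) ≤ 1 - (1 - x) ^ a := by
  have hxa0 : 0 ≤ x * a := by positivity
  have hexp := exp_sub_one_le_add_sq (x := -(x * a)) (by rwa [abs_neg, abs_of_nonneg hxa0])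
  have hpow : (1 - x) ^ a ≤ Real.exp (-(x * a)) := by
    calc (1 - x) ^ a ≤ Real.exp (-x) ^ a := by
          have : 0 ≤ 1 - x := by linarith
          gcongr
          exact Real.one_sub_le_exp_neg x
      _ = Real.exp (-(x * a)) := by rw [← Real.exp_nat_mul]; ring_nf
  nlinarith

/-- Admissible parameters for a single random graph `G(n, p)`: `d` is the average degree,
`c = d ^ (m + 2) / n`, so that `m + 2` is the exponent `i` of the theorem, and `κ` is the
relative precision to which sizes of neighbourhoods are controlled. -/
structure Regime where
  n : ℕ
  m : ℕ
  p : I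
  d : ℝ
  c : ℝ
  κ : ℝ
  d_eq : d = p * n
  pow_eq : d ^ (m + 2) = c * n
  κ_pos : 0 < κ
  κ_le : κ ≤ 1 / 4800
  two_le_log : 2 ≤ Real.log n
  log_pow_three_le : Real.log n ^ 3 ≤ κ ^ 2 / 64 * d
  one_le_κ_mul_c : 1 ≤ κ * c
  c_le_log_d : c ≤ Real.log d

namespace Regime

variable (R : Regime)

/-- The relative error of all degree estimates, chosen such that `ε² d = 64 log n`: Chernoff bounds
at relative error `ε` then survive a union bound over vertices. -/
noncomputable def ε : ℝ := 8 * √(Real.log R.n / R.d)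

/-- The expected number of vertices at distance more than `m + 2` from a given vertex, to leading
order. -/
noncomputable def N : ℝ := R.n * Real.exp (-R.c)

/-- The relative error in estimates on the number of vertices at distance more than `m + 2`. -/
noncomputable def δ : ℝ := 400 * R.κ

/-- The upper bound on the size of closed neighbourhoods in a typical graph. -/
noncomputable def D : ℝ := (1 + 2 * R.ε) * R.d

lemma n_pos : 0 < (R.n : ℝ) := by
  rcases (Nat.cast_nonneg (α := ℝ) R.n).lt_or_eq with h | h
  · exact h
  · have := R.two_le_log
    norm_num [← h] at this

lemma d_pos : 0 < R.d := by
  have hL : 0 < Real.log R.n ^ 3 := pow_pos (by linarith [R.two_le_log]) 3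
  exact pos_of_mul_pos_right (hL.trans_le R.log_pow_three_le) (by positivity)

lemma d_le_n : R.d ≤ R.n := by
  rw [R.d_eq]
  exact mul_le_of_le_one_left R.n_pos.le R.p.2.2

lemma κ_sq_le : R.κ ^ 2 ≤ R.κ / 4800 := by
  nlinarith [R.κ_pos, R.κ_le]

lemma le_c : 4800 ≤ R.c := by
  nlinarith [R.κ_pos, R.κ_le, R.one_le_κ_mul_c]

lemma c_le_log_n : R.c ≤ Real.log R.n :=
  R.c_le_log_d.trans (Real.log_le_log R.d_pos R.d_le_n)

lemma log_n_le_n : Real.log R.n ≤ R.n := Real.log_le_self R.n_pos.le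

lemma log_sq_le : Real.log R.n ^ 2 ≤ R.κ ^ 2 / 128 * R.d := by
  nlinarith [R.log_pow_three_le, mul_nonneg (sq_nonneg (Real.log R.n)) (sub_nonneg.2 R.two_le_log)]

lemma log_n_le_d : Real.log R.n ≤ R.κ ^ 2 / 256 * R.d := by
  nlinarith [R.log_sq_le, R.two_le_log]

lemma one_le_d : 1 ≤ R.d := by
  have hκ : R.κ ^ 2 ≤ 1 := by linarith [R.κ_sq_le, R.κ_le]
  nlinarith [R.log_n_le_d, R.two_le_log, R.d_pos]

lemma exp_c_le_d : Real.exp R.c ≤ R.d := by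
  simpa only [Real.exp_log R.d_pos] using Real.exp_le_exp.2 R.c_le_log_d

lemma c_eq : R.c = R.p * R.d ^ (R.m + 1) := by
  refine mul_right_cancel₀ R.n_pos.ne' ?_
  rw [← R.pow_eq, pow_succ, mul_right_comm, ← R.d_eq, mul_comm]

lemma d_sq_le : R.d ^ 2 ≤ Real.log R.n * R.n :=
  calc R.d ^ 2 ≤ R.d ^ (R.m + 2) := pow_le_pow_right₀ R.one_le_d (by omega)
    _ = R.c * R.n := R.pow_eq
    _ ≤ Real.log R.n * R.n := by gcongr; exact R.c_le_log_n

lemma d_mul_log_le : R.d * Real.log R.n ≤ R.κ ^ 2 / 128 * R.n := by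
  have : 0 ≤ Real.log R.n := by linarith [R.two_le_log]
  refine le_of_mul_le_mul_right ?_ R.d_pos
  calc R.d * Real.log R.n * R.d = R.d ^ 2 * Real.log R.n := by ring
    _ ≤ Real.log R.n * R.n * Real.log R.n := by gcongr; exact R.d_sq_le
    _ = Real.log R.n ^ 2 * R.n := by ring
    _ ≤ R.κ ^ 2 / 128 * R.d * R.n := by gcongr; exact R.log_sq_le
    _ = R.κ ^ 2 / 128 * R.n * R.d := by ring

lemma p_mul_log_le : R.p * Real.log R.n ≤ R.κ ^ 2 / 128 := by
  refine le_of_mul_le_mul_right ?_ R.n_pos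
  calc R.p * Real.log R.n * R.n = R.d * Real.log R.n := by rw [R.d_eq]; ring
    _ ≤ _ := R.d_mul_log_le

lemma p_le : (R.p : ℝ) ≤ R.κ ^ 2 / 256 := by
  nlinarith [R.p_mul_log_le, R.two_le_log, R.p.2.1]

lemma add_two_mul_log_d_le : (R.m + 2) * Real.log R.d ≤ 2 * Real.log R.n := by
  have hpow : R.d ^ (R.m + 2) ≤ R.n ^ 2 := by
    rw [R.pow_eq, sq]
    gcongr
    exact R.c_le_log_n.trans R.log_n_le_n
  have hlog := Real.log_le_log (pow_pos R.d_pos _) hpow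
  rw [Real.log_pow, Real.log_pow] at hlog
  exact_mod_cast hlog

lemma add_two_mul_c_le : (R.m + 2) * R.c ≤ 2 * Real.log R.n :=
  (mul_le_mul_of_nonneg_left R.c_le_log_d (by positivity)).trans R.add_two_mul_log_d_le

lemma ε_nonneg : 0 ≤ R.ε := by
  unfold ε
  positivity

lemma ε_sq_mul_d : R.ε ^ 2 * R.d = 64 * Real.log R.n := by
  have hd := R.d_pos
  have hL : 0 ≤ Real.log R.n / R.d := div_nonneg (by linarith [R.two_le_log]) hd.le
  rw [ε, mul_pow, Real.sq_sqrt hL]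
  field_simp
  norm_num [mul_comm]

lemma ε_mul_log_le : R.ε * Real.log R.n ≤ R.κ := by
  refine (abs_le_of_sq_le_sq' ?_ R.κ_pos.le).2
  refine le_of_mul_le_mul_right ?_ R.d_pos
  calc (R.ε * Real.log R.n) ^ 2 * R.d = R.ε ^ 2 * R.d * Real.log R.n ^ 2 := by ring
    _ = 64 * Real.log R.n ^ 3 := by rw [R.ε_sq_mul_d]; ring
    _ ≤ R.κ ^ 2 * R.d := by linarith [R.log_pow_three_le]

lemma ε_le : R.ε ≤ R.κ := by
  nlinarith [R.ε_mul_log_le, R.two_le_log, R.ε_nonneg]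

lemma one_le_ε_mul_d : 1 ≤ R.ε * R.d := by
  have hε : R.ε ≤ 1 := by linarith [R.ε_le, R.κ_le]
  nlinarith [R.ε_sq_mul_d, R.two_le_log, mul_nonneg R.ε_nonneg R.d_pos.le]

lemma ε_mul_add_two_mul_c_le : R.ε * ((R.m + 2) * R.c) ≤ 2 * R.κ := by
  nlinarith [mul_le_mul_of_nonneg_left R.add_two_mul_c_le R.ε_nonneg, R.ε_mul_log_le]

lemma ε_mul_add_two_le : R.ε * (R.m + 2) ≤ 2 * R.κ := by
  have h : 0 ≤ R.ε * (R.m + 2) := mul_nonneg R.ε_nonneg (by positivity)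
  nlinarith [R.ε_mul_add_two_mul_c_le, R.le_c]

lemma N_nonneg : 0 ≤ R.N := by
  unfold N
  positivity

lemma δ_pos : 0 < R.δ := mul_pos (by norm_num) R.κ_pos

lemma δ_le : R.δ ≤ 1 / 12 := by
  unfold δ
  linarith [R.κ_le]

lemma D_nonneg : 0 ≤ R.D := mul_nonneg (by linarith [R.ε_nonneg]) R.d_pos.le

lemma one_le_D : 1 ≤ R.D :=
  one_le_mul_of_one_le_of_one_le (by linarith [R.ε_nonneg]) R.one_le_d

lemma D_le : R.D ≤ 2 * R.d := by
  unfold D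
  gcongr
  · exact R.d_pos.le
  · linarith [R.ε_le, R.κ_le]

lemma log_le_N : 100 * Real.log R.n ≤ R.δ ^ 2 * R.N := by
  refine le_of_mul_le_mul_right ?_ (Real.exp_pos R.c)
  have hexp : Real.exp (-R.c) * Real.exp R.c = 1 := by rw [← Real.exp_add]; simp
  calc 100 * Real.log R.n * Real.exp R.c ≤ 100 * Real.log R.n * R.d := by
        have : 0 ≤ Real.log R.n := by linarith [R.two_le_log]
        gcongr
        exact R.exp_c_le_d
    _ = 100 * (R.d * Real.log R.n) := by ring
    _ ≤ 100 * (R.κ ^ 2 / 128 * R.n) := mul_le_mul_of_nonneg_left R.d_mul_log_le (by norm_num)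
    _ ≤ R.δ ^ 2 * R.n := by
        unfold δ
        nlinarith [mul_nonneg (sq_nonneg R.κ) R.n_pos.le]
    _ = R.δ ^ 2 * R.N * Real.exp R.c := by
        rw [N, mul_assoc, mul_assoc, hexp, mul_one]

lemma δ_sq_mul_N_le : R.δ ^ 2 * R.N ≤ R.δ * R.N := by
  refine mul_le_mul_of_nonneg_right ?_ R.N_nonneg
  nlinarith [R.δ_pos, R.δ_le]

lemma one_le_δ_mul_N : 1 ≤ R.δ * R.N := by
  linarith [R.log_le_N, R.δ_sq_mul_N_le, R.two_le_log]

lemma exp_neg_half_c_le : Real.exp (-(R.c / 2)) ≤ R.δ / 4 := by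
  have hc : 0 < R.c := by linarith [R.le_c]
  calc Real.exp (-(R.c / 2)) ≤ (R.c / 2)⁻¹ := by
        rw [Real.exp_neg]
        gcongr
        linarith [Real.add_one_le_exp (R.c / 2)]
    _ = 2 / R.c := by rw [inv_div]
    _ ≤ 2 * R.κ := by
        rw [div_le_iff₀ hc]
        linarith [R.one_le_κ_mul_c]
    _ ≤ R.δ / 4 := by
        unfold δ
        linarith [R.κ_pos]

lemma one_add_pow_le {j : ℕ} (hj : j ≤ R.m + 1) :
    (1 + 2 * R.ε) ^ j ≤ 1 + 4 * (R.ε * (R.m + 1)) := by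
  have hε := R.ε_nonneg
  have hjm : (j : ℝ) ≤ R.m + 1 := by exact_mod_cast hj
  set x : ℝ := 2 * (R.ε * (R.m + 1))
  have hx0 : 0 ≤ x := by positivity
  have hx1 : x ≤ 1 := by nlinarith [R.ε_mul_add_two_le, R.κ_le]
  calc (1 + 2 * R.ε) ^ j ≤ Real.exp (2 * R.ε) ^ j := by
        gcongr
        linarith [Real.add_one_le_exp (2 * R.ε)]
    _ = Real.exp (j * (2 * R.ε)) := (Real.exp_nat_mul _ _).symm
    _ ≤ Real.exp x := by
        gcongr
        nlinarith
    _ ≤ 1 + (x + x ^ 2) := by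
        linarith [exp_sub_one_le_add_sq (abs_le.2 ⟨by linarith, hx1⟩)]
    _ ≤ 1 + 4 * (R.ε * (R.m + 1)) := by nlinarith

lemma two_mul_D_pow_mul_d_le : 2 * R.D ^ R.m * R.d ≤ R.ε * R.n / 4 := by
  have hpow : (1 + 2 * R.ε) ^ R.m ≤ 2 := by
    nlinarith [R.one_add_pow_le (Nat.le_succ R.m), R.ε_mul_add_two_le, R.κ_le, R.ε_nonneg]
  have hd := R.d_pos
  refine le_of_mul_le_mul_right ?_ hd
  calc 2 * R.D ^ R.m * R.d * R.d = 2 * (1 + 2 * R.ε) ^ R.m * R.d ^ (R.m + 2) := by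
        rw [D, mul_pow]
        ring
    _ ≤ 2 * 2 * R.d ^ (R.m + 2) := by gcongr
    _ = 4 * (R.c * R.n) := by rw [R.pow_eq]; ring
    _ ≤ 4 * (Real.log R.n * R.n) := by gcongr; exact R.c_le_log_n
    _ = R.ε ^ 2 * R.d / 16 * R.n := by rw [R.ε_sq_mul_d]; ring
    _ ≤ R.ε * R.n / 4 * R.d := by
        have hε : R.ε ≤ 1 := by linarith [R.ε_le, R.κ_le]
        nlinarith [mul_nonneg (mul_nonneg R.ε_nonneg hd.le) R.n_pos.le]

lemma le_one_sub_pow : 3 / 4 ≤ (1 - 3 * R.ε) ^ (R.m + 1) := by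
  have hε := R.ε_le
  have hbernoulli := one_add_mul_le_pow (a := -(3 * R.ε)) (by linarith [R.κ_le]) (R.m + 1)
  rw [← sub_eq_add_neg] at hbernoulli
  push_cast at hbernoulli
  nlinarith [R.ε_mul_add_two_le, R.κ_le, R.ε_nonneg]

section

variable {R} {a : ℕ}

lemma p_mul_le_of_le_D_pow (ha : a ≤ R.D ^ (R.m + 1)) : (R.p * a : ℝ) ≤ R.c + 8 * R.κ := by
  have hc : 0 ≤ R.c := by linarith [R.le_c]
  have hp := R.p.2.1
  have hε : R.ε * (R.m + 1) * R.c ≤ 2 * R.κ := by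
    nlinarith [R.ε_mul_add_two_mul_c_le, mul_nonneg R.ε_nonneg hc]
  calc (R.p * a : ℝ) ≤ R.p * R.D ^ (R.m + 1) := by gcongr
    _ = R.c * (1 + 2 * R.ε) ^ (R.m + 1) := by rw [R.c_eq, D, mul_pow]; ring
    _ ≤ R.c * (1 + 4 * (R.ε * (R.m + 1))) := by gcongr; exact R.one_add_pow_le le_rfl
    _ ≤ R.c + 8 * R.κ := by linarith

lemma le_κ_mul_n_of_le_D_pow (ha : a ≤ R.D ^ (R.m + 1)) : a ≤ R.κ * R.n := by
  have hn := R.n_pos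
  refine le_of_mul_le_mul_right ?_ R.d_pos
  calc a * R.d = (R.p * a : ℝ) * R.n := by rw [R.d_eq]; ring
    _ ≤ (R.c + 8 * R.κ) * R.n := by gcongr; exact p_mul_le_of_le_D_pow ha
    _ ≤ R.κ * R.d * R.n := by
        gcongr
        nlinarith [R.c_le_log_n, R.log_n_le_d, R.κ_sq_le, R.two_le_log, R.κ_le, R.κ_pos, R.d_pos]
    _ = R.κ * R.n * R.d := by ring

lemma exp_neg_c_mul_le_one_sub_pow (ha : a ≤ R.D ^ (R.m + 1)) :
    Real.exp (-R.c) * (1 - 9 * R.κ) ≤ (1 - R.p : ℝ) ^ a := by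
  have hp := R.p.2.1
  have hpκ : (R.p : ℝ) ≤ 1 / 2 := by linarith [R.p_le, R.κ_sq_le, R.κ_le]
  have hpa := p_mul_le_of_le_D_pow ha
  have herror : 2 * R.p * (R.p * a : ℝ) ≤ R.κ := by
    nlinarith [R.p_mul_log_le, R.c_le_log_n, R.κ_sq_le, R.two_le_log, R.κ_le, R.κ_pos]
  calc Real.exp (-R.c) * (1 - 9 * R.κ) ≤ Real.exp (-R.c) * Real.exp (-(9 * R.κ)) := by
        gcongr
        exact Real.one_sub_le_exp_neg _
    _ = Real.exp (-R.c + -(9 * R.κ)) := (Real.exp_add _ _).symm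
    _ ≤ Real.exp (a * -(R.p + 2 * R.p ^ 2)) := by
        gcongr
        linarith
    _ = Real.exp (-(R.p + 2 * R.p ^ 2)) ^ a := Real.exp_nat_mul _ _
    _ ≤ _ := by
        gcongr
        exact exp_neg_add_sq_le_one_sub hp hpκ

lemma mul_N_le_of_le_D_pow (ha : a ≤ R.D ^ (R.m + 1)) :
    (1 - R.δ / 4) * R.N ≤ (R.n - a) * (1 - R.p : ℝ) ^ a := by
  have hκ := R.κ_le
  have hκ0 := R.κ_pos
  have han := le_κ_mul_n_of_le_D_pow ha
  calc (1 - R.δ / 4) * R.N ≤ (1 - R.κ) * (1 - 9 * R.κ) * R.N := by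
        refine mul_le_mul_of_nonneg_right ?_ R.N_nonneg
        unfold δ
        nlinarith
    _ = (1 - R.κ) * R.n * (Real.exp (-R.c) * (1 - 9 * R.κ)) := by rw [N]; ring
    _ ≤ (R.n - a) * (1 - R.p : ℝ) ^ a := by
        refine mul_le_mul (by linarith) (exp_neg_c_mul_le_one_sub_pow ha) ?_ ?_
        · exact mul_nonneg (Real.exp_pos _).le (by linarith)
        · nlinarith [R.n_pos]

end

end Regime

end Regime

section TypicalGraph

lemma measureReal_exists_le_card_mul {Ω ι : Type*} [MeasurableSpace Ω] [Fintype ι] {μ : Measure Ω}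
    {P : ι → Ω → Prop} {β : ℝ} (hP : ∀ i, μ.real {ω | P i ω} ≤ β) :
    μ.real {ω | ∃ i, P i ω} ≤ Fintype.card ι * β := by
  rw [ofPred_exists]
  calc μ.real (⋃ i, {ω | P i ω}) ≤ ∑ i, μ.real {ω | P i ω} := measureReal_iUnion_fintype_le _
    _ ≤ ∑ _i : ι, β := Finset.sum_le_sum fun i _ => hP i
    _ = Fintype.card ι * β := by rw [Finset.sum_const, nsmul_eq_mul, Finset.card_univ]

namespace Regime

/-- The graphs on which the cops win with few sensors: degrees are bounded, the complements of
balls of radius `m + 2` around single vertices have almost the expected size, and those around two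
vertices are of smaller order. -/
structure IsTypical (R : Regime) (G : SimpleGraph (Fin R.n)) : Prop where
  card_closedNbhd_le : ∀ v, (#(closedNbhd G {v}) : ℝ) ≤ R.D
  le_card_compl_ball : ∀ v, (1 - R.δ) * R.N ≤ #(ballFinset G {v} (R.m + 2))ᶜ
  card_compl_ball_pair_le : ∀ u v, u ≠ v → (#(ballFinset G {u, v} (R.m + 2))ᶜ : ℝ) ≤ R.δ * R.N

variable {R : Regime}

lemma IsTypical.copsWin {G : SimpleGraph (Fin R.n)} (hG : R.IsTypical G) {k : ℕ} (hk : k ≤ R.n)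
    (hDk : 2 * R.D ^ 2 * Real.exp (-(2 * (1 - 3 * R.δ) * Real.exp (-R.c) * k)) < 1) :
    CopsWin G k := by
  refine copsWin_of_card_resolving hG.card_closedNbhd_le (fun u v huv => ?_) (by simpa using hk) hDk
  have hu := hG.le_card_compl_ball u
  have hv := hG.le_card_compl_ball v
  have huv := hG.card_compl_ball_pair_le u v huv
  have hresolving : (#(ballFinset G {u} (R.m + 2))ᶜ : ℝ) + #(ballFinset G {v} (R.m + 2))ᶜ ≤
      #{s | G.dist s u ≠ G.dist s v} + 2 * #(ballFinset G {u, v} (R.m + 2))ᶜ + 2 := by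
    exact_mod_cast card_compl_ballFinset_add_le G u v (R.m + 2)
  have hN : Real.exp (-R.c) * R.n = R.N := mul_comm _ _
  rw [Fintype.card_fin, mul_assoc, hN]
  linarith [R.one_le_δ_mul_N]

variable (R)

lemma exp_neg_log : Real.exp (-Real.log R.n) = 1 / R.n := by
  rw [Real.exp_neg, Real.exp_log R.n_pos, one_div]

lemma exp_neg_three_mul_log : Real.exp (-(3 * Real.log R.n)) = 1 / (R.n : ℝ) ^ 3 := by
  rw [← mul_neg, ← one_div_pow, ← R.exp_neg_log, ← Real.exp_nat_mul, Nat.cast_ofNat]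

lemma measureReal_card_closedNbhd_gt_D_le :
    G(Fin R.n, R.p).real {G | ∃ v, R.D < #(closedNbhd G {v})} ≤ 1 / R.n := by
  have hε := R.ε_nonneg
  have hn := R.n_pos
  have hvertex (v : Fin R.n) :
      G(Fin R.n, R.p).real {G | R.D < #(closedNbhd G {v})} ≤ Real.exp (-(2 * Real.log R.n)) := by
    have hM : (Fintype.card (Fin R.n) - #{v}) * (1 - (1 - R.p : ℝ) ^ #{v}) ≤ R.d := by
      rw [R.d_eq, Finset.card_singleton, Fintype.card_fin, pow_one, sub_sub_cancel, mul_comm]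
      gcongr
      · exact R.p.2.1
      · simp
    calc G(Fin R.n, R.p).real {G | R.D < #(closedNbhd G {v})}
        ≤ G(Fin R.n, R.p).real {G | #{v} + (1 + R.ε) * R.d ≤ #(closedNbhd G {v})} := by
          refine measureReal_mono fun G (hG : (_ : ℝ) < _) => ?_
          rw [mem_ofPred_eq, Finset.card_singleton, Nat.cast_one]
          unfold D at hG
          linarith [R.one_le_ε_mul_d]
      _ ≤ Real.exp (-(R.ε ^ 2 * R.d / 4)) :=
          measureReal_card_closedNbhd_ge_le_exp hM hε (by linarith [R.ε_le, R.κ_le])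
      _ ≤ Real.exp (-(2 * Real.log R.n)) := by
          rw [R.ε_sq_mul_d]
          gcongr
          linarith [R.two_le_log]
  calc _ ≤ Fintype.card (Fin R.n) * Real.exp (-(2 * Real.log R.n)) :=
        measureReal_exists_le_card_mul hvertex
    _ = R.n * (1 / R.n * (1 / R.n)) := by
        rw [Fintype.card_fin, two_mul, neg_add, Real.exp_add, R.exp_neg_log]
    _ = 1 / R.n := by field_simp

lemma mul_card_le_expected_neighbors {a : ℕ} (ha : a * R.d ≤ R.ε * R.n / 4) :
    (1 - R.ε / 2) * R.d * a ≤ (R.n - a) * (1 - (1 - R.p : ℝ) ^ a) := by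
  have hp := R.p.2.1
  have hn := R.n_pos
  have hε := R.ε_nonneg
  have hε1 : R.ε ≤ 1 := by linarith [R.ε_le, R.κ_le]
  have hpa : (R.p * a : ℝ) ≤ R.ε / 4 := by
    refine le_of_mul_le_mul_right ?_ hn
    rw [R.d_eq] at ha
    linarith
  have han : a ≤ R.ε / 4 * R.n := by nlinarith [R.one_le_d, (Nat.cast_nonneg a : (0 : ℝ) ≤ a)]
  have hprob : (R.p * a : ℝ) * (1 - R.ε / 4) ≤ 1 - (1 - R.p : ℝ) ^ a :=
    (mul_one_sub_le_one_sub_pow a hp R.p.2.2 (by linarith)).trans' (by gcongr)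
  calc (1 - R.ε / 2) * R.d * a ≤ (1 - R.ε / 4) ^ 2 * (R.d * a) := by
        rw [mul_assoc]
        have := R.d_pos
        gcongr
        nlinarith
    _ = R.n * (1 - R.ε / 4) * ((R.p * a : ℝ) * (1 - R.ε / 4)) := by rw [R.d_eq]; ring
    _ ≤ (R.n - a) * (1 - (1 - R.p : ℝ) ^ a) := by
        refine mul_le_mul (by linarith) hprob ?_ (by nlinarith)
        exact mul_nonneg (by positivity) (by linarith)

lemma measureReal_card_closedNbhd_lt_le {A : Finset (Fin R.n)} (hA : A.Nonempty)
    (hAd : #A * R.d ≤ R.ε * R.n / 4) :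
    G(Fin R.n, R.p).real {G | #(closedNbhd G A) < (1 + (1 - 3 * R.ε) * R.d) * #A} ≤
      1 / R.n * (1 / R.n) ^ #A := by
  have hε := R.ε_nonneg
  have hεκ : R.ε ≤ 1 / 4 := by linarith [R.ε_le, R.κ_le]
  have ha : (1 : ℝ) ≤ #A := by exact_mod_cast hA.card_pos
  have hda : 0 ≤ R.d * #A := mul_nonneg R.d_pos.le (by positivity)
  have hM := R.mul_card_le_expected_neighbors hAd
  calc _ ≤ G(Fin R.n, R.p).real
        {G | #(closedNbhd G A) < #A + (1 - 2 * R.ε) * ((1 - R.ε / 2) * R.d * #A)} := by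
        refine measureReal_mono fun G (hG : (_ : ℝ) < _) => hG.trans_le ?_
        nlinarith [mul_nonneg hda hε, mul_nonneg (mul_nonneg hda hε) hε]
    _ ≤ Real.exp (-((2 * R.ε) ^ 2 * ((1 - R.ε / 2) * R.d * #A) / 4)) := by
        refine measureReal_card_closedNbhd_lt_le_exp (by simpa using hM) ?_ (by linarith)
          (by linarith)
        rw [mul_assoc]
        exact mul_nonneg (by linarith) hda
    _ = Real.exp (-((1 - R.ε / 2) * (64 * Real.log R.n) * #A)) := by
        rw [← R.ε_sq_mul_d]
        ring_nf
    _ ≤ Real.exp (-Real.log R.n + #A * -Real.log R.n) := by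
        gcongr
        nlinarith [R.two_le_log, mul_nonneg (sub_nonneg.2 ha) (by linarith [R.two_le_log] :
          0 ≤ Real.log R.n)]
    _ = 1 / R.n * (1 / R.n) ^ #A := by
        rw [Real.exp_add, Real.exp_nat_mul, R.exp_neg_log]

lemma measureReal_exists_not_expanding_le :
    G(Fin R.n, R.p).real {G | ∃ A : Finset (Fin R.n), #A * R.d ≤ R.ε * R.n / 4 ∧
      #(closedNbhd G A) < (1 + (1 - 3 * R.ε) * R.d) * #A} ≤ 3 / R.n := by
  have hn := R.n_pos
  have hset (A : Finset (Fin R.n)) : G(Fin R.n, R.p).real {G | #A * R.d ≤ R.ε * R.n / 4 ∧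
      #(closedNbhd G A) < (1 + (1 - 3 * R.ε) * R.d) * #A} ≤ 1 / R.n * (1 / R.n) ^ #A := by
    rcases A.eq_empty_or_nonempty with rfl | hA
    · simp [closedNbhd]
    by_cases hAd : #A * R.d ≤ R.ε * R.n / 4
    · simpa only [hAd, true_and] using R.measureReal_card_closedNbhd_lt_le hA hAd
    · simp only [hAd, false_and, ofPred_false, measureReal_empty]
      positivity
  rw [ofPred_exists]
  calc _ ≤ ∑ A : Finset (Fin R.n), (1 / R.n * (1 / R.n) ^ #A : ℝ) :=
        (measureReal_iUnion_fintype_le _).trans (Finset.sum_le_sum fun A _ => hset A)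
    _ = 1 / R.n * (1 / R.n + 1) ^ R.n := by
        rw [← Finset.mul_sum]
        congr 1
        simpa using Fintype.sum_pow_mul_eq_add_pow (Fin R.n) (1 / R.n : ℝ) 1
    _ ≤ 1 / R.n * Real.exp (1 / R.n) ^ R.n := by
        gcongr
        exact Real.add_one_le_exp _
    _ = 1 / R.n * Real.exp 1 := by
        rw [← Real.exp_nat_mul, mul_one_div_cancel hn.ne']
    _ ≤ 1 / R.n * 3 := by
        gcongr
        linarith [Real.exp_one_lt_d9]
    _ = 3 / R.n := by ring

lemma measureReal_card_nonNeighbors_pair_gt_le {S T : Finset (Fin R.n)} (hST : Disjoint S T)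
    (hS : 3 / 2 * R.d ^ (R.m + 1) ≤ #S) :
    G(Fin R.n, R.p).real {G | R.δ * R.N < #(nonNeighbors G S T)} ≤ 1 / (R.n : ℝ) ^ 3 := by
  have hp := R.p.2.1
  have hp1 := R.p.2.2
  have hpS : 3 / 2 * R.c ≤ R.p * #S := by
    rw [R.c_eq]
    nlinarith
  have hpow : (1 - R.p : ℝ) ^ #S ≤ Real.exp (-R.c) * Real.exp (-(R.c / 2)) :=
    calc (1 - R.p : ℝ) ^ #S ≤ Real.exp (-R.p) ^ #S :=
          pow_le_pow_left₀ (by linarith) (Real.one_sub_le_exp_neg _) _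
      _ ≤ Real.exp (-R.c) * Real.exp (-(R.c / 2)) := by
          rw [← Real.exp_nat_mul, ← Real.exp_add]
          gcongr
          linarith
  have hM : #T * (1 - R.p : ℝ) ^ #S ≤ R.δ * R.N / 4 :=
    calc #T * (1 - R.p : ℝ) ^ #S ≤ R.n * (Real.exp (-R.c) * Real.exp (-(R.c / 2))) := by
          have hT : (#T : ℝ) ≤ R.n := by simpa using Finset.card_le_univ T
          have : 0 ≤ 1 - (R.p : ℝ) := by linarith
          gcongr
      _ = R.N * Real.exp (-(R.c / 2)) := by rw [N, mul_assoc]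
      _ ≤ R.N * (R.δ / 4) := mul_le_mul_of_nonneg_left R.exp_neg_half_c_le R.N_nonneg
      _ = R.δ * R.N / 4 := by ring
  calc _ ≤ G(Fin R.n, R.p).real {G | R.δ * R.N ≤ #(nonNeighbors G S T)} :=
        measureReal_mono fun G (hG : (_ : ℝ) < _) => hG.le
    _ ≤ Real.exp (2 * (R.δ * R.N / 4) - R.δ * R.N) :=
        measureReal_card_nonNeighbors_ge_le_exp hST hM _
    _ ≤ Real.exp (-(3 * Real.log R.n)) := by
        gcongr
        linarith [R.log_le_N, R.δ_sq_mul_N_le, R.two_le_log]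
    _ = 1 / (R.n : ℝ) ^ 3 := R.exp_neg_three_mul_log

lemma measureReal_card_nonNeighbors_lt_le {A' A : Finset (Fin R.n)}
    (hA : #A ≤ R.D ^ (R.m + 1)) :
    G(Fin R.n, R.p).real {G | #(nonNeighbors G (A \ A') Aᶜ) < (1 - R.δ) * R.N} ≤
      1 / (R.n : ℝ) ^ 3 := by
  have hδ := R.δ_pos
  have hδ1 := R.δ_le
  have hN := R.N_nonneg
  have hp1 := R.p.2.2
  have hcard : (#A : ℝ) ≤ R.n := by simpa using Finset.card_le_univ A
  have hM : (1 - R.δ / 4) * R.N ≤ #Aᶜ * (1 - R.p : ℝ) ^ #(A \ A') :=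
    calc (1 - R.δ / 4) * R.N ≤ (R.n - #A) * (1 - R.p : ℝ) ^ #A := mul_N_le_of_le_D_pow hA
      _ ≤ (R.n - #A) * (1 - R.p : ℝ) ^ #(A \ A') :=
          mul_le_mul_of_nonneg_left (pow_le_pow_of_le_one (by linarith) (by linarith [R.p.2.1])
            (Finset.card_le_card Finset.sdiff_subset)) (by linarith)
      _ = #Aᶜ * (1 - R.p : ℝ) ^ #(A \ A') := by
          rw [Finset.card_compl, Nat.cast_sub (Finset.card_le_univ A), Fintype.card_fin]
  calc _ ≤ G(Fin R.n, R.p).real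
        {G | #(nonNeighbors G (A \ A') Aᶜ) < (1 - R.δ / 2) * ((1 - R.δ / 4) * R.N)} := by
        refine measureReal_mono fun G (hG : (_ : ℝ) < _) => hG.trans_le ?_
        nlinarith [mul_nonneg hN hδ.le, mul_nonneg (mul_nonneg hN hδ.le) hδ.le]
    _ ≤ Real.exp (-((R.δ / 2) ^ 2 * ((1 - R.δ / 4) * R.N) / 4)) :=
        measureReal_card_nonNeighbors_lt_le_exp (disjoint_compl_right.mono_left Finset.sdiff_subset)
          hM (mul_nonneg (by linarith) hN) (by linarith) (by linarith)
    _ ≤ Real.exp (-(3 * Real.log R.n)) := by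
        gcongr
        nlinarith [R.log_le_N, R.two_le_log, mul_nonneg (sq_nonneg R.δ) hN]
    _ = 1 / (R.n : ℝ) ^ 3 := R.exp_neg_three_mul_log

lemma measureReal_exists_card_compl_ball_pair_gt_le :
    G(Fin R.n, R.p).real {G | ∃ x : Fin R.n × Fin R.n, 3 / 2 * R.d ^ (R.m + 1) ≤
        #(ballFinset G {x.1, x.2} (R.m + 1) \ ballFinset G {x.1, x.2} R.m) ∧
      R.δ * R.N < #(ballFinset G {x.1, x.2} (R.m + 2))ᶜ} ≤ 1 / R.n := by
  have hn := R.n_pos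
  calc _ ≤ Fintype.card (Fin R.n × Fin R.n) * (1 / (R.n : ℝ) ^ 3) :=
        measureReal_exists_le_card_mul fun x => measureReal_ballFinset_le
          {y | 3 / 2 * R.d ^ (R.m + 1) ≤ #(y.2 \ y.1)} (fun Z => R.δ * R.N < #Z) (by positivity)
          fun A' A _ hA => R.measureReal_card_nonNeighbors_pair_gt_le
            (disjoint_compl_right.mono_left Finset.sdiff_subset) hA
    _ = 1 / R.n := by
        rw [Fintype.card_prod, Fintype.card_fin, Nat.cast_mul]
        field_simp

lemma measureReal_exists_card_compl_ball_lt_le :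
    G(Fin R.n, R.p).real {G | ∃ v : Fin R.n, #(ballFinset G {v} (R.m + 1)) ≤ R.D ^ (R.m + 1) ∧
      #(ballFinset G {v} (R.m + 2))ᶜ < (1 - R.δ) * R.N} ≤ 1 / R.n := by
  have hn := R.n_pos
  have hn1 : (1 : ℝ) ≤ R.n := R.one_le_d.trans R.d_le_n
  calc _ ≤ Fintype.card (Fin R.n) * (1 / (R.n : ℝ) ^ 3) :=
        measureReal_exists_le_card_mul fun v => measureReal_ballFinset_le
          {y | #y.2 ≤ R.D ^ (R.m + 1)} (fun Z => #Z < (1 - R.δ) * R.N) (by positivity)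
          fun A' A _ hA => R.measureReal_card_nonNeighbors_lt_le hA
    _ = 1 / (R.n : ℝ) ^ 2 := by
        rw [Fintype.card_fin]
        field_simp
    _ ≤ 1 / R.n := by
        gcongr
        exact le_self_pow₀ hn1 two_ne_zero

variable {R} in
lemma le_card_layer_pair {G : SimpleGraph (Fin R.n)} (hD : ∀ v, #(closedNbhd G {v}) ≤ R.D)
    (hexp : ∀ A : Finset (Fin R.n), #A * R.d ≤ R.ε * R.n / 4 →
      (1 + (1 - 3 * R.ε) * R.d) * #A ≤ #(closedNbhd G A)) {u v : Fin R.n} (huv : u ≠ v) :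
    3 / 2 * R.d ^ (R.m + 1) ≤ #(ballFinset G {u, v} (R.m + 1) \ ballFinset G {u, v} R.m) := by
  have hd := R.d_pos
  have hK : 0 ≤ (1 - 3 * R.ε) * R.d := mul_nonneg (by linarith [R.ε_le, R.κ_le]) hd.le
  have hlayer := pow_succ_mul_card_le_card_sdiff_ballFinset (A := {u, v})
    (s := R.ε * R.n / 4 / R.d) (m := R.m) R.one_le_D hD hK
    (fun A hA => hexp A ((le_div_iff₀ hd).1 hA))
    (by
      rw [le_div_iff₀ hd, Finset.card_pair huv]
      push_cast
      linarith [R.two_mul_D_pow_mul_d_le])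
  calc 3 / 2 * R.d ^ (R.m + 1) = 3 / 4 * R.d ^ (R.m + 1) * 2 := by ring
    _ ≤ (1 - 3 * R.ε) ^ (R.m + 1) * R.d ^ (R.m + 1) * 2 := by
        gcongr
        exact R.le_one_sub_pow
    _ ≤ _ := by rwa [Finset.card_pair huv, mul_pow, Nat.cast_ofNat] at hlayer

lemma measureReal_not_isTypical_le :
    G(Fin R.n, R.p).real {G | ¬ R.IsTypical G} ≤ 6 / R.n := by
  refine (measureReal_mono (s₂ := ({G | ∃ v, R.D < #(closedNbhd G {v})} ∪
    {G | ∃ A : Finset (Fin R.n), #A * R.d ≤ R.ε * R.n / 4 ∧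
      #(closedNbhd G A) < (1 + (1 - 3 * R.ε) * R.d) * #A}) ∪
    ({G | ∃ x : Fin R.n × Fin R.n, 3 / 2 * R.d ^ (R.m + 1) ≤
        #(ballFinset G {x.1, x.2} (R.m + 1) \ ballFinset G {x.1, x.2} R.m) ∧
      R.δ * R.N < #(ballFinset G {x.1, x.2} (R.m + 2))ᶜ} ∪
    {G | ∃ v : Fin R.n, #(ballFinset G {v} (R.m + 1)) ≤ R.D ^ (R.m + 1) ∧
      #(ballFinset G {v} (R.m + 2))ᶜ < (1 - R.δ) * R.N})) fun G hG => ?_).trans ?_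
  · by_contra hGood
    simp only [mem_union, mem_ofPred_eq, not_or, not_exists, not_and, not_lt] at hGood
    obtain ⟨⟨hD, hexp⟩, hpair, hsingle⟩ := hGood
    refine hG ⟨hD, fun v => hsingle v ?_, fun u v huv =>
      hpair (u, v) (le_card_layer_pair hD hexp huv)⟩
    simpa using card_ballFinset_le R.D_nonneg hD {v} (R.m + 1)
  · refine (measureReal_union_le _ _).trans ((add_le_add (measureReal_union_le _ _)
      (measureReal_union_le _ _)).trans ?_)
    have hsum : (6 / R.n : ℝ) = 1 / R.n + 3 / R.n + (1 / R.n + 1 / R.n) := by ring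
    rw [hsum]
    gcongr
    · exact R.measureReal_card_closedNbhd_gt_D_le
    · exact R.measureReal_exists_not_expanding_le
    · exact R.measureReal_exists_card_compl_ball_pair_gt_le
    · exact R.measureReal_exists_card_compl_ball_lt_le

end Regime

end TypicalGraph

section NumberOfSensors

namespace Regime

variable (R : Regime)

/-- The factor `log d + 2 log log n` in the bound on the number of sensors: one round with
`Λ * exp c` sensors resolves all but a proportion `exp (-2 * Λ)` of the pairs of vertices. -/
noncomputable def Λ : ℝ := Real.log R.d + 2 * Real.log (Real.log R.n)

/-- The bound `(1 + 12 δ) Λ exp c` on the localization number of a typical graph. -/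
noncomputable def sensorBound : ℝ := (1 + 12 * R.δ) * R.Λ * Real.exp R.c

lemma log_log_nonneg : 0 ≤ Real.log (Real.log R.n) :=
  Real.log_nonneg (by linarith [R.two_le_log])

lemma one_le_six_mul_δ_mul_Λ : 1 ≤ 6 * R.δ * R.Λ := by
  have hκ := mul_le_mul_of_nonneg_left R.c_le_log_d R.κ_pos.le
  unfold δ Λ
  nlinarith [R.one_le_κ_mul_c, mul_nonneg R.κ_pos.le R.log_log_nonneg]

lemma Λ_nonneg : 0 ≤ R.Λ :=
  add_nonneg (Real.log_nonneg R.one_le_d) (mul_nonneg zero_le_two R.log_log_nonneg)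

lemma Λ_le : R.Λ ≤ 3 * Real.log R.n := by
  have hlogd := Real.log_le_log R.d_pos R.d_le_n
  have hloglog := Real.log_le_self (show 0 ≤ Real.log R.n by linarith [R.two_le_log])
  unfold Λ
  linarith

lemma sensorBound_nonneg : 0 ≤ R.sensorBound :=
  mul_nonneg (mul_nonneg (by linarith [R.δ_pos]) R.Λ_nonneg) (Real.exp_pos _).le

lemma sensorBound_le_n : R.sensorBound ≤ R.n :=
  calc R.sensorBound ≤ 2 * (3 * Real.log R.n) * R.d := by
        unfold sensorBound
        gcongr
        · exact R.Λ_nonneg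
        · linarith [R.δ_le]
        · exact R.Λ_le
        · exact R.exp_c_le_d
    _ = 6 * (R.d * Real.log R.n) := by ring
    _ ≤ 6 * (R.κ ^ 2 / 128 * R.n) := mul_le_mul_of_nonneg_left R.d_mul_log_le (by norm_num)
    _ ≤ R.n := by nlinarith [R.κ_sq_le, R.κ_le, R.n_pos]

lemma two_mul_Λ_le :
    2 * R.Λ ≤ 2 * (1 - 3 * R.δ) * Real.exp (-R.c) * ⌊R.sensorBound⌋₊ := by
  have hΛ := R.one_le_six_mul_δ_mul_Λ
  have hδ := R.δ_pos
  have hδ1 := R.δ_le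
  have hexp : Real.exp (-R.c) ≤ 1 := Real.exp_le_one_iff.2 (by linarith [R.le_c])
  have hexpB : Real.exp (-R.c) * R.sensorBound = (1 + 12 * R.δ) * R.Λ := by
    rw [sensorBound, mul_comm, mul_assoc, ← Real.exp_add, add_neg_cancel, Real.exp_zero, mul_one]
  have hfloor : (1 + 6 * R.δ) * R.Λ ≤ Real.exp (-R.c) * ⌊R.sensorBound⌋₊ := by
    have := mul_le_mul_of_nonneg_left (Nat.sub_one_lt_floor R.sensorBound).le
      (Real.exp_pos (-R.c)).le
    linarith
  calc 2 * R.Λ ≤ 2 * (1 - 3 * R.δ) * ((1 + 6 * R.δ) * R.Λ) := by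
        nlinarith [mul_nonneg (mul_nonneg hδ.le R.Λ_nonneg) (by linarith : 0 ≤ 1 - 6 * R.δ)]
    _ ≤ 2 * (1 - 3 * R.δ) * (Real.exp (-R.c) * ⌊R.sensorBound⌋₊) :=
        mul_le_mul_of_nonneg_left hfloor (by linarith)
    _ = _ := (mul_assoc _ _ _).symm

lemma exp_neg_two_mul_Λ : Real.exp (-(2 * R.Λ)) = (R.d ^ 2 * Real.log R.n ^ 4)⁻¹ := by
  have hΛ : 2 * R.Λ = (2 : ℕ) * Real.log R.d + (4 : ℕ) * Real.log (Real.log R.n) := by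
    unfold Λ
    push_cast
    ring
  rw [Real.exp_neg, hΛ, Real.exp_add, Real.exp_nat_mul, Real.exp_nat_mul, Real.exp_log R.d_pos,
    Real.exp_log (by linarith [R.two_le_log])]

lemma two_mul_D_sq_mul_exp_lt_one :
    2 * R.D ^ 2 * Real.exp (-(2 * (1 - 3 * R.δ) * Real.exp (-R.c) * ⌊R.sensorBound⌋₊)) < 1 := by
  have hd := R.d_pos
  have hL := R.two_le_log
  calc _ ≤ 2 * (2 * R.d) ^ 2 * Real.exp (-(2 * R.Λ)) := by
        have hD := R.D_nonneg
        have hexp := Real.exp_le_exp.2 (neg_le_neg R.two_mul_Λ_le)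
        gcongr
        exact R.D_le
    _ = 8 / Real.log R.n ^ 4 := by
        rw [exp_neg_two_mul_Λ]
        field_simp
        norm_num
    _ ≤ 8 / 2 ^ 4 := by gcongr
    _ < 1 := by norm_num

lemma one_sub_le_measureReal_localizationNumber_le :
    1 - 6 / R.n ≤
      G(Fin R.n, R.p).real {G | (localizationNumber G : ℝ) ≤ R.sensorBound} := by
  have hcompl := probReal_compl_eq_one_sub (μ := G(Fin R.n, R.p))
    (MeasurableSet.of_discrete (s := {G | ¬ R.IsTypical G}))
  have hsub : {G | ¬ R.IsTypical G}ᶜ ⊆ {G | (localizationNumber G : ℝ) ≤ R.sensorBound} := by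
    intro G hG
    have hcops := (not_not.1 hG).copsWin (Nat.floor_le_of_le R.sensorBound_le_n)
      R.two_mul_D_sq_mul_exp_lt_one
    exact (Nat.cast_le.2 (Nat.sInf_le hcops)).trans (Nat.floor_le R.sensorBound_nonneg)
  linarith [measureReal_mono (μ := G(Fin R.n, R.p)) hsub, R.measureReal_not_isTypical_le]

end Regime

end NumberOfSensors

section Asymptotics

lemma exists_tendsto_atTop_of_forall_eventually {P : ℕ → ℕ → Prop}
    (hP : ∀ k, ∀ᶠ n in atTop, P k n) :
    ∃ f : ℕ → ℕ, Tendsto f atTop atTop ∧ ∀ᶠ n in atTop, P (f n) n := by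
  classical
  refine ⟨fun n => Nat.findGreatest (P · n) n, tendsto_atTop.2 fun k => ?_, ?_⟩
  · filter_upwards [hP k, eventually_ge_atTop k] with n hkn hn
    exact Nat.le_findGreatest hn hkn
  · filter_upwards [hP 0] with n h0
    exact Nat.findGreatest_spec (P := (P · n)) (Nat.zero_le n) h0

variable {p d c : ℕ → ℝ} {i : ℕ → ℕ}

lemma eventually_exists_regime (hd : ∀ n, d n = p n * n) (hc : ∀ n, c n = d n ^ i n / n)
    (hp : ∀ᶠ n in atTop, p n ∈ Icc 0 1)
    (hlog3 : Tendsto (fun n : ℕ => Real.log n ^ 3 / d n) atTop (𝓝 0))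
    (hcinf : Tendsto c atTop atTop) (hcd : ∀ᶠ n in atTop, c n ≤ Real.log (d n)) {κ : ℝ}
    (hκ0 : 0 < κ) (hκ : κ ≤ 1 / 4800) :
    ∀ᶠ n in atTop, ∃ R : Regime, R.n = n ∧ R.p = p n ∧ R.d = d n ∧ R.c = c n ∧ R.κ = κ := by
  have hlog : Tendsto (fun n : ℕ => Real.log n) atTop atTop :=
    Real.tendsto_log_atTop.comp tendsto_natCast_atTop_atTop
  filter_upwards [hp, hcd, hlog3.eventually_le_const (show 0 < κ ^ 2 / 64 by positivity),
    hcinf.eventually_ge_atTop (1 / κ), hcinf.eventually_gt_atTop 1, hlog.eventually_ge_atTop 2,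
    eventually_gt_atTop 0] with n hpn hcdn hlog3n hκc hc1 hL hn
  have hn0 : (0 : ℝ) < n := Nat.cast_pos.2 hn
  have hd0 : 0 < d n := by
    refine lt_of_le_of_ne (by rw [hd]; exact mul_nonneg hpn.1 hn0.le) fun h0 => ?_
    rw [← h0, Real.log_zero] at hcdn
    linarith
  have hcn : d n ^ i n = c n * n := by rw [hc, div_mul_cancel₀ _ hn0.ne']
  have hi : 2 ≤ i n := by
    by_contra! hi
    have hn1 : (1 : ℝ) ≤ n := Nat.one_le_cast.2 hn
    interval_cases i n
    · nlinarith
    · nlinarith [hpn.2, hd n]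
  obtain ⟨m, hm⟩ := Nat.exists_eq_add_of_le' hi
  exact ⟨{ n, m, p := ⟨p n, hpn⟩, d := d n, c := c n, κ
           d_eq := hd n
           pow_eq := hm ▸ hcn
           κ_pos := hκ0
           κ_le := hκ
           two_le_log := hL
           log_pow_three_le := (div_le_iff₀ hd0).1 hlog3n
           one_le_κ_mul_c := (div_le_iff₀' hκ0).1 hκc
           c_le_log_d := hcdn }, rfl, rfl, rfl, rfl, rfl⟩

lemma eventually_pos_of_pow_div_tendsto_atTop (hc : ∀ n, c n = d n ^ i n / n)
    (hd : ∀ᶠ n in atTop, 0 < d n ^ (i n + 1) / n) (hcinf : Tendsto c atTop atTop) :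
    ∀ᶠ n in atTop, 0 < d n := by
  filter_upwards [hd, hcinf.eventually_gt_atTop 0] with n hdn hcn
  rw [pow_succ', mul_div_assoc, ← hc] at hdn
  exact pos_of_mul_pos_left hdn hcn.le

lemma eventually_mem_Icc (hd : ∀ n, d n = p n * n) (hd0 : ∀ᶠ n in atTop, 0 < d n)
    (hdn : Tendsto (fun n : ℕ => d n / n) atTop (𝓝 0)) : ∀ᶠ n in atTop, p n ∈ Icc 0 1 := by
  filter_upwards [hd0, hdn.eventually_le_const one_pos, eventually_gt_atTop 0] with n hd0n hdn1 hn
  have hn0 : (0 : ℝ) < n := Nat.cast_pos.2 hn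
  rw [hd, mul_div_cancel_right₀ _ hn0.ne'] at hdn1
  rw [hd] at hd0n
  exact ⟨(pos_of_mul_pos_left hd0n hn0.le).le, hdn1⟩

lemma eventually_le_log_of_sub_tendsto_atBot (hd0 : ∀ᶠ n in atTop, 0 < d n)
    (hlog3 : Tendsto (fun n : ℕ => Real.log n ^ 3 / d n) atTop (𝓝 0))
    (hcB : Tendsto (fun n => c n - (Real.log (d n) - Real.log (Real.log (d n)))) atTop atBot) :
    ∀ᶠ n in atTop, c n ≤ Real.log (d n) := by
  have hlog : Tendsto (fun n : ℕ => Real.log n) atTop atTop :=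
    Real.tendsto_log_atTop.comp tendsto_natCast_atTop_atTop
  filter_upwards [hd0, hlog3.eventually_le_const one_pos, hcB.eventually_le_atBot 0,
    hlog.eventually_ge_atTop 2] with n hd0n hlog3n hcn hL
  have hd3 : 3 ≤ d n := by
    have hL3 : (2 : ℝ) ^ 3 ≤ Real.log n ^ 3 := by gcongr
    linarith [(div_le_one hd0n).1 hlog3n]
  have hlogd : 1 ≤ Real.log (d n) := by
    rw [Real.le_log_iff_exp_le hd0n]
    linarith [Real.exp_one_lt_d9]
  linarith [Real.log_nonneg hlogd]

theorem stmt14_localization_upper_bound_c_to_infty_general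
    (hd : ∀ n, d n = p n * n) (hc : ∀ n, c n = d n ^ i n / n)
    (hp : ∀ᶠ n in atTop, p n ∈ Icc 0 1)
    (hlog3 : Tendsto (fun n : ℕ => Real.log n ^ 3 / d n) atTop (𝓝 0))
    (hcinf : Tendsto c atTop atTop) (hcd : ∀ᶠ n in atTop, c n ≤ Real.log (d n)) :
    ∃ ε : ℕ → ℝ, Tendsto ε atTop (𝓝 0) ∧ AAS p fun n =>
      {G : SimpleGraph (Fin n) | (localizationNumber G : ℝ) ≤
        (1 + ε n) * (Real.log (d n) + 2 * Real.log (Real.log n)) * Real.exp (c n)} := by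
  let good (ε : ℝ) (n : ℕ) : Set (SimpleGraph (Fin n)) := {G | (localizationNumber G : ℝ) ≤
    (1 + ε) * (Real.log (d n) + 2 * Real.log (Real.log n)) * Real.exp (c n)}
  have hgood (k : ℕ) : ∀ᶠ n : ℕ in atTop,
      1 - 6 / (n : ℝ) ≤ gnpProb n (p n) (good (1 / (k + 1)) n) := by
    have hk : (1 : ℝ) / (k + 1) ≤ 1 := (div_le_one (by positivity)).2 (by simp)
    filter_upwards [eventually_exists_regime hd hc hp hlog3 hcinf hcd
      (κ := 1 / (k + 1) / 4800) (by positivity) (by gcongr)] with n hn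
    obtain ⟨R, rfl, hRp, hRd, hRc, hRκ⟩ := hn
    have hgood_eq : good (1 / (k + 1)) R.n = {G | (localizationNumber G : ℝ) ≤ R.sensorBound} := by
      have hη : 12 * R.δ = 1 / (k + 1) := by
        rw [Regime.δ, hRκ]
        ring
      simp only [good, Regime.sensorBound, Regime.Λ, hη, hRd, hRc]
    rw [← hRp, gnpProb_eq_binomialRandom_real, hgood_eq]
    exact R.one_sub_le_measureReal_localizationNumber_le
  obtain ⟨f, hf, hgoodf⟩ := exists_tendsto_atTop_of_forall_eventually hgood
  refine ⟨fun n => 1 / (f n + 1), tendsto_one_div_add_atTop_nhds_zero_nat.comp hf,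
    tendsto_of_tendsto_of_tendsto_of_le_of_le' ?_ tendsto_const_nhds hgoodf ?_⟩
  · simpa using (tendsto_const_nhds (x := (1 : ℝ))).sub (tendsto_const_div_atTop_nhds_zero_nat 6)
  · filter_upwards [hp] with n hpn
    exact (gnpProb_eq_binomialRandom_real n ⟨p n, hpn⟩ _).trans_le measureReal_le_one

end Asymptotics

theorem stmt14_localization_upper_bound_c_to_infty
    (p d : ℕ → ℝ) (i : ℕ → ℕ) (c : ℕ → ℝ)
    (hd : ∀ n, d n = p n * n)
    (hc : ∀ n, c n = d n ^ i n / n)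
    (hlog3 : Filter.Tendsto (fun n : ℕ => (Real.log n) ^ 3 / d n) Filter.atTop (nhds 0))
    (hdn : Filter.Tendsto (fun n : ℕ => d n / n) Filter.atTop (nhds 0))
    (himax : ∀ᶠ n : ℕ in Filter.atTop,
      c n ≤ 3 * Real.log n ∧ 3 * Real.log n < d n ^ (i n + 1) / n)
    (hcinf : Filter.Tendsto c Filter.atTop Filter.atTop)
    (hcB : Filter.Tendsto
      (fun n : ℕ => c n - (Real.log (d n) - Real.log (Real.log (d n))))
      Filter.atTop Filter.atBot) :
    ∃ ε : ℕ → ℝ, Filter.Tendsto ε Filter.atTop (nhds 0) ∧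
      AAS p (fun n : ℕ =>
        {G : SimpleGraph (Fin n) |
          (localizationNumber G : ℝ)
            ≤ (1 + ε n) * (Real.log (d n) + 2 * Real.log (Real.log n))
                * Real.exp (c n)}) := by
  have hd0 := eventually_pos_of_pow_div_tendsto_atTop hc
    (himax.mono fun n h => by
      linarith [h.2, Real.log_natCast_nonneg n]) hcinf
  exact stmt14_localization_upper_bound_c_to_infty_general hd hc (eventually_mem_Icc hd hd0 hdn)
    hlog3 hcinf (eventually_le_log_of_sub_tendsto_atBot hd0 hlog3 hcB)
end
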